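/- arXiv:2404.15476 — 4 statements merged into one kernel-verified Lean document; each statement's English description precedes it below -/
import Mathlib

section
/- There exists a nonempty closed shift-invariant subset X of {0,1}^ℤ such that the restriction of the shift σ to X is chaotic almost minimal, and moreover there exist two distinct σ-invariant ergodic Borel probability measures on X, each of which is nonatomic. -/
/-!
Words `block true m` and `block false m` of equal length are built so that `block b (m + 1)`
consists mostly of copies of `block b m`, contains `block (!b) m`, and contains a long repetition of
`block b n ++ block (!b) n` for some `n ≤ m`, each `n` being used infinitely often. The system `X`
consists of the sequences whose factors are factors of the blocks; it contains the periodic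
sequences `(block true n ++ block false n) ^ ∞`.

A point of `X` containing blocks of every level has a dense orbit. If `x ∈ X` contains no block of
level `m`, then each of its factors is, up to two short ends, a piece of one of the periodic
sequences of level `< m`, and a compactness argument places `x` on the orbit of one of them. Since
moreover every word of the language occurs in all periodic sequences of large level, `X` is chaotic
almost minimal.

The number of repetitions grows fast enough that the letter `b` keeps a definite majority in
`block b m`. Limits of empirical measures along these blocks, followed by a maximization of the
integral of the sign of the zeroth letter, yield an ergodic measure for each `b` with
a majority of letters `b`. On the periodic orbits the two letters are balanced, so neither measure
lives on a periodic orbit; as points with dense orbit are not periodic, both are nonatomic.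
-/

open Set MeasureTheory

instance homeomorphGroup {X : Type*} [TopologicalSpace X] : Group (X ≃ₜ X) where
  mul f g := g.trans f
  one := Homeomorph.refl X
  inv f := f.symm
  mul_assoc f g h := Homeomorph.ext fun _ => rfl
  one_mul f := Homeomorph.ext fun _ => rfl
  mul_one f := Homeomorph.ext fun _ => rfl
  inv_mul_cancel f := Homeomorph.ext fun x => f.symm_apply_apply x

def shiftHomeo (A : Type*) [TopologicalSpace A] : (ℤ → A) ≃ₜ (ℤ → A) where
  toFun x := fun n => x (n + 1)
  invFun x := fun n => x (n - 1)
  left_inv x := funext fun n => by simp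
  right_inv x := funext fun n => by simp
  continuous_toFun := continuous_pi fun n => continuous_apply (n + 1)
  continuous_invFun := continuous_pi fun n => continuous_apply (n - 1)

def restrictHomeo {X : Type*} [TopologicalSpace X] (e : X ≃ₜ X) (s : Set X)
    (h : ∀ x, x ∈ s ↔ e x ∈ s) : s ≃ₜ s where
  toEquiv := e.toEquiv.subtypeEquiv h
  continuous_toFun := by
    exact Continuous.subtype_mk (e.continuous.comp continuous_subtype_val) _
  continuous_invFun := by
    exact Continuous.subtype_mk (e.symm.continuous.comp continuous_subtype_val) _

def IsCAMZ {X : Type*} [TopologicalSpace X] (T : X ≃ₜ X) : Prop :=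
  (∀ n : ℤ, n ≠ 0 → T ^ n ≠ 1) ∧
  (∀ U V : Set X, IsOpen U → IsOpen V → U.Nonempty → V.Nonempty →
      ∃ n : ℤ, ((T ^ n) '' U ∩ V).Nonempty) ∧
  Dense {x : X | ∃ k : ℕ, 0 < k ∧ (T ^ k) x = x} ∧
  ∀ A : Set X, IsClosed A → T '' A = A → A ≠ Set.univ → A.Finite

def IsCAM {G X : Type*} [Group G] [TopologicalSpace X] (T : G →* (X ≃ₜ X)) : Prop :=
  Function.Injective T ∧
  (∀ U V : Set X, IsOpen U → IsOpen V → U.Nonempty → V.Nonempty →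
      ∃ g : G, ((T g) '' U ∩ V).Nonempty) ∧
  Dense {x : X | (Set.range fun g : G => T g x).Finite} ∧
  ∀ A : Set X, IsClosed A → (∀ g : G, T g '' A = A) → A ≠ Set.univ → A.Finite

namespace ChaoticAlmostMinimal

/-! ### Orbits of a homeomorphism -/

section Orbit

variable {X : Type*} [TopologicalSpace X] {T : X ≃ₜ X} {x y : X}

/-- The two-sided orbit `{T ^ n x | n ∈ ℤ}`. -/
def orbit (T : X ≃ₜ X) (x : X) : Set X := range fun n : ℤ => (T ^ n) x

lemma zpow_add_apply (T : X ≃ₜ X) (m n : ℤ) (x : X) : (T ^ (m + n)) x = (T ^ m) ((T ^ n) x) := by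
  rw [zpow_add]; rfl

lemma iterate_eq_zpow (T : X ≃ₜ X) (n : ℕ) : T^[n] = ⇑(T ^ (n : ℤ)) := by
  induction n with
  | zero => rfl
  | succ n ih => rw [Function.iterate_succ, ih, Nat.cast_succ, zpow_add_one]; rfl

lemma zpow_mem_orbit (T : X ≃ₜ X) (n : ℤ) (x : X) : (T ^ n) x ∈ orbit T x := mem_range_self n

lemma mem_orbit_self (T : X ≃ₜ X) (x : X) : x ∈ orbit T x := zpow_mem_orbit T 0 x

lemma orbit_eq_of_mem (h : y ∈ orbit T x) : orbit T y = orbit T x := by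
  obtain ⟨n, rfl⟩ := h
  refine Subset.antisymm ?_ ?_ <;> rintro _ ⟨m, rfl⟩
  · exact ⟨m + n, zpow_add_apply T m n x⟩
  · exact ⟨m - n, by simp only [← zpow_add_apply, sub_add_cancel]⟩

lemma preimage_orbit (T : X ≃ₜ X) (x : X) : T ⁻¹' orbit T x = orbit T x := by
  ext y
  have hy : orbit T (T y) = orbit T y := orbit_eq_of_mem ⟨1, by simp⟩
  exact ⟨fun h => orbit_eq_of_mem h ▸ hy ▸ mem_orbit_self T y,
    fun h => orbit_eq_of_mem h ▸ hy ▸ mem_orbit_self T (T y)⟩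

lemma countable_orbit (T : X ≃ₜ X) (x : X) : (orbit T x).Countable := countable_range _

lemma zpow_mul_apply_of_zpow_apply_eq {k : ℤ} (h : (T ^ k) x = x) (n : ℤ) :
    (T ^ (k * n)) x = x := by
  induction n using Int.induction_on with
  | zero => rw [mul_zero]; rfl
  | succ n ih => rw [mul_add, mul_one, zpow_add_apply, h, ih]
  | pred n ih => rw [← h, ← zpow_add_apply]; convert ih using 3; ring

lemma finite_orbit_of_zpow_apply_eq {k : ℤ} (hk : k ≠ 0) (h : (T ^ k) x = x) :
    (orbit T x).Finite := by
  refine ((finite_Ico 0 |k|).image fun n => (T ^ n) x).subset ?_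
  rintro _ ⟨n, rfl⟩
  refine ⟨n % k, ⟨Int.emod_nonneg n hk, Int.emod_lt_abs n hk⟩, ?_⟩
  dsimp only
  conv_rhs => rw [← Int.emod_add_mul_ediv n k, zpow_add_apply, zpow_mul_apply_of_zpow_apply_eq h]

lemma zpow_mem_of_image_eq {A : Set X} (hA : T '' A = A) (hx : x ∈ A) (n : ℤ) : (T ^ n) x ∈ A := by
  have hT : ∀ y, T y ∈ A ↔ y ∈ A := fun y => by
    conv_lhs => rw [← hA, T.injective.mem_set_image]
  induction n using Int.induction_on generalizing x with
  | zero => exact hx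
  | succ n ih => rw [zpow_add_one]; exact ih ((hT x).2 hx)
  | pred n ih =>
    rw [zpow_sub_one]
    exact ih ((hT _).1 ((T.apply_symm_apply x).symm ▸ hx))

end Orbit

/-! ### Systems whose points are periodic or have dense orbit -/

section Criterion

variable {X : Type*} [TopologicalSpace X] {T : X ≃ₜ X} {p : ℕ → X}

/-- The points of `X` are those of a sequence of periodic orbits that eventually visit every
nonempty open set, and points with dense orbit. -/
structure IsPeriodicallyApproximated (T : X ≃ₜ X) (p : ℕ → X) : Prop where
  periodic (n : ℕ) : ∃ k : ℕ, 0 < k ∧ (T ^ k) (p n) = p n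
  eventually_visits (U : Set X) : IsOpen U → U.Nonempty →
    ∀ᶠ n in Filter.atTop, ∃ s : ℤ, (T ^ s) (p n) ∈ U
  mem_orbit_or_dense (x : X) : (∃ n, x ∈ orbit T (p n)) ∨ Dense (orbit T x)

namespace IsPeriodicallyApproximated

lemma finite_orbit (h : IsPeriodicallyApproximated T p) (n : ℕ) : (orbit T (p n)).Finite := by
  obtain ⟨k, hk, hkn⟩ := h.periodic n
  exact finite_orbit_of_zpow_apply_eq (k := k) (by exact_mod_cast hk.ne') (by simpa using hkn)

lemma zpow_ne_one [T1Space X] [Uncountable X] (h : IsPeriodicallyApproximated T p) {n : ℤ}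
    (hn : n ≠ 0) : T ^ n ≠ 1 := by
  intro h1
  have hcount : (⋃ n, orbit T (p n)).Countable :=
    countable_iUnion fun n => countable_orbit T (p n)
  obtain ⟨x, hx⟩ : ∃ x, x ∉ ⋃ n, orbit T (p n) := by
    by_contra! hall
    exact not_countable_univ (hcount.mono fun x _ => hall x)
  have hdense : Dense (orbit T x) :=
    (h.mem_orbit_or_dense x).resolve_left fun hn => hx (mem_iUnion.2 hn)
  have hfin : (orbit T x).Finite := finite_orbit_of_zpow_apply_eq hn (by rw [h1]; rfl)
  have huniv : orbit T x = univ := hfin.isClosed.closure_eq ▸ hdense.closure_eq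
  exact not_countable_univ (huniv ▸ hfin.countable)

lemma exists_image_inter_nonempty (h : IsPeriodicallyApproximated T p) {U V : Set X}
    (hU : IsOpen U) (hV : IsOpen V) (hUne : U.Nonempty) (hVne : V.Nonempty) :
    ∃ n : ℤ, ((T ^ n) '' U ∩ V).Nonempty := by
  obtain ⟨n, ⟨s, hs⟩, r, hr⟩ :=
    ((h.eventually_visits U hU hUne).and (h.eventually_visits V hV hVne)).exists
  refine ⟨r - s, (T ^ r) (p n), ⟨_, hs, ?_⟩, hr⟩
  rw [← zpow_add_apply, sub_add_cancel]

lemma dense_periodic (h : IsPeriodicallyApproximated T p) :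
    Dense {x : X | ∃ k : ℕ, 0 < k ∧ (T ^ k) x = x} := by
  refine dense_iff_inter_open.2 fun U hU hne => ?_
  obtain ⟨n, s, hs⟩ := (h.eventually_visits U hU hne).exists
  obtain ⟨k, hk, hkn⟩ := h.periodic n
  refine ⟨_, hs, k, hk, ?_⟩
  rw [← zpow_natCast, ← zpow_add_apply, add_comm, zpow_add_apply, zpow_natCast, hkn]

lemma finite_of_image_eq [T1Space X] (h : IsPeriodicallyApproximated T p) {A : Set X}
    (hA : IsClosed A) (hinv : T '' A = A) (hne : A ≠ univ) : A.Finite := by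
  obtain ⟨N, hN⟩ := Filter.eventually_atTop.1
    (h.eventually_visits Aᶜ hA.isOpen_compl (nonempty_compl.2 hne))
  refine ((finite_lt_nat N).biUnion fun n _ => h.finite_orbit n).subset fun x hx => ?_
  have horbit : orbit T x ⊆ A := range_subset_iff.2 fun n => zpow_mem_of_image_eq hinv hx n
  rcases h.mem_orbit_or_dense x with ⟨n, hn⟩ | hdense
  · refine mem_biUnion (show n < N from ?_) hn
    by_contra! hNn
    obtain ⟨s, hs⟩ := hN n hNn
    exact hs (horbit (orbit_eq_of_mem hn ▸ zpow_mem_orbit T s (p n)))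
  · exact absurd (hA.closure_subset_iff.2 horbit) (hdense.closure_eq ▸ mt univ_subset_iff.1 hne)

theorem isCAMZ [T1Space X] [Uncountable X] (h : IsPeriodicallyApproximated T p) : IsCAMZ T :=
  ⟨fun _ => h.zpow_ne_one, fun _ _ => h.exists_image_inter_nonempty, h.dense_periodic,
    fun _ => h.finite_of_image_eq⟩

end IsPeriodicallyApproximated

end Criterion

/-! ### Atoms of measures -/

lemma uncountable_of_forall_measure_singleton_eq_zero {X : Type*} [MeasurableSpace X]
    {μ : Measure X} [NeZero μ] (h : ∀ x, μ {x} = 0) : Uncountable X := by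
  have : NullSingletonClass μ := ⟨h⟩
  exact not_countable_iff.1 fun _ =>
    NeZero.ne μ (Measure.measure_univ_eq_zero.1 (countable_univ.measure_zero μ))

section Atoms

variable {X : Type*} [TopologicalSpace X] [T1Space X] [MeasurableSpace X] [BorelSpace X]
  {T : X ≃ₜ X} {μ : Measure X} {x : X}

lemma exists_zpow_apply_eq_of_measure_singleton_ne_zero [IsFiniteMeasure μ]
    (hT : MeasurePreserving T μ μ) (hx : μ {x} ≠ 0) : ∃ k : ℤ, k ≠ 0 ∧ (T ^ k) x = x := by
  obtain ⟨y, rfl, k, hk, hky⟩ := hT.conservative.exists_mem_iterate_mem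
    (measurableSet_singleton x).nullMeasurableSet hx
  exact ⟨k, by exact_mod_cast hk, by rwa [iterate_eq_zpow] at hky⟩

lemma ae_mem_orbit_of_measure_singleton_ne_zero (hT : Ergodic T μ) (hx : μ {x} ≠ 0) :
    ∀ᵐ y ∂μ, y ∈ orbit T x := by
  refine (hT.toPreErgodic.measure_self_or_compl_eq_zero
    (countable_orbit T x).measurableSet (preimage_orbit T x)).resolve_left fun h => hx ?_
  exact measure_mono_null (singleton_subset_iff.2 (mem_orbit_self T x)) h

lemma IsPeriodicallyApproximated.exists_ae_mem_orbit {p : ℕ → X} [IsFiniteMeasure μ]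
    (h : IsPeriodicallyApproximated T p) (hT : Ergodic T μ) (hx : μ {x} ≠ 0) :
    ∃ n, ∀ᵐ y ∂μ, y ∈ orbit T (p n) := by
  suffices ∃ n, p n ∈ orbit T x by
    obtain ⟨n, hn⟩ := this
    exact ⟨n, orbit_eq_of_mem hn ▸ ae_mem_orbit_of_measure_singleton_ne_zero hT hx⟩
  rcases h.mem_orbit_or_dense x with ⟨n, hn⟩ | hdense
  · exact ⟨n, orbit_eq_of_mem hn ▸ mem_orbit_self T (p n)⟩
  · obtain ⟨k, hk, hkx⟩ := exists_zpow_apply_eq_of_measure_singleton_ne_zero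
      hT.toMeasurePreserving hx
    have hclosed : IsClosed (orbit T x) := (finite_orbit_of_zpow_apply_eq hk hkx).isClosed
    exact ⟨0, (hclosed.closure_eq ▸ hdense.closure_eq) ▸ mem_univ _⟩

end Atoms

/-! ### Lexicographic maximization -/

section LexMax

variable {α : Type*} {f : ℕ → α → ℝ} {s : Set α}

/-- `a` maximizes `(f 0, f 1, …)` lexicographically over `s`; the sequence version of `IsMaxOn`. -/
def IsLexMaxOn (f : ℕ → α → ℝ) (s : Set α) (a : α) : Prop :=
  ∀ b ∈ s, ∀ k, (∀ i < k, f i b = f i a) → f k b ≤ f k a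

/-- The points of `s` that maximize `(f 0, …, f (k - 1))` lexicographically. -/
def lexArgmax (f : ℕ → α → ℝ) (s : Set α) : ℕ → Set α
  | 0 => s
  | k + 1 => {a ∈ lexArgmax f s k | IsMaxOn (f k) (lexArgmax f s k) a}

lemma lexArgmax_succ_subset (f : ℕ → α → ℝ) (s : Set α) (k : ℕ) :
    lexArgmax f s (k + 1) ⊆ lexArgmax f s k := sep_subset _ _

lemma isLexMaxOn_of_forall_mem_lexArgmax {a : α} (ha : ∀ k, a ∈ lexArgmax f s k) :
    IsLexMaxOn f s a := by
  intro b hb k hk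
  have hmem : ∀ j ≤ k, b ∈ lexArgmax f s j := by
    intro j
    induction j with
    | zero => exact fun _ => hb
    | succ j ih =>
      intro hj
      refine ⟨ih (by omega), fun c hc => ?_⟩
      rw [mem_ofPred_eq, hk j (by omega)]
      exact (ha (j + 1)).2 hc
  exact (ha (k + 1)).2 (hmem k le_rfl)

variable [TopologicalSpace α]

lemma isClosed_lexArgmax (hf : ∀ k, Continuous (f k)) (hs : IsClosed s) (k : ℕ) :
    IsClosed (lexArgmax f s k) := by
  induction k with
  | zero => exact hs
  | succ k ih =>
    have : lexArgmax f s (k + 1) =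
        lexArgmax f s k ∩ ⋂ b ∈ lexArgmax f s k, {a | f k b ≤ f k a} := by
      ext a
      simp [lexArgmax, isMaxOn_iff]
    rw [this]
    exact ih.inter (isClosed_biInter fun b _ => isClosed_le continuous_const (hf k))

lemma lexArgmax_nonempty [CompactSpace α] (hf : ∀ k, Continuous (f k)) (hs : IsClosed s)
    (hne : s.Nonempty) (k : ℕ) : (lexArgmax f s k).Nonempty := by
  induction k with
  | zero => exact hne
  | succ k ih =>
    obtain ⟨a, ha, hmax⟩ := (isClosed_lexArgmax hf hs k).isCompact.exists_isMaxOn ih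
      (hf k).continuousOn
    exact ⟨a, ha, hmax⟩

lemma exists_isLexMaxOn [CompactSpace α] (hf : ∀ k, Continuous (f k)) (hs : IsClosed s)
    (hne : s.Nonempty) : ∃ a ∈ s, IsLexMaxOn f s a := by
  obtain ⟨a, ha⟩ := IsCompact.nonempty_iInter_of_sequence_nonempty_isCompact_isClosed
    (lexArgmax f s) (lexArgmax_succ_subset f s) (lexArgmax_nonempty hf hs hne) hs.isCompact
    (isClosed_lexArgmax hf hs)
  rw [mem_iInter] at ha
  exact ⟨a, ha 0, isLexMaxOn_of_forall_mem_lexArgmax ha⟩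

end LexMax

/-! ### Ergodic measures maximizing an integral -/

section Optimization

open scoped ENNReal

variable {X : Type*} [MeasurableSpace X]

lemma integral_mem_openSegment {μ ν₁ ν₂ : Measure X} {f : X → ℝ}
    (h : μ ∈ openSegment ℝ≥0∞ ν₁ ν₂) (h₁ : Integrable f ν₁) (h₂ : Integrable f ν₂) :
    ∫ x, f x ∂μ ∈ openSegment ℝ (∫ x, f x ∂ν₁) (∫ x, f x ∂ν₂) := by
  obtain ⟨p, q, hp, hq, hpq, rfl⟩ := h
  have hp' : p ≠ ∞ := fun h => by simp [h] at hpq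
  have hq' : q ≠ ∞ := fun h => by simp [h] at hpq
  refine ⟨p.toReal, q.toReal, ENNReal.toReal_pos hp.ne' hp', ENNReal.toReal_pos hq.ne' hq', ?_, ?_⟩
  · rw [← ENNReal.toReal_add hp' hq', hpq, ENNReal.toReal_one]
  · rw [integral_add_measure (h₁.smul_measure hp') (h₂.smul_measure hq'), integral_smul_measure,
      integral_smul_measure]

lemma eq_and_eq_of_mem_openSegment {a b m : ℝ} (h : m ∈ openSegment ℝ a b) (ha : a ≤ m)
    (hb : b ≤ m) : a = m ∧ b = m := by
  obtain ⟨p, q, hp, hq, hpq, rfl⟩ := h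
  obtain rfl := eq_sub_of_add_eq hpq
  simp only [smul_eq_mul] at ha hb ⊢
  constructor <;> nlinarith

lemma continuous_integral_continuousMap [TopologicalSpace X] [CompactSpace X] [BorelSpace X]
    (μ : Measure X) [IsFiniteMeasure μ] : Continuous fun f : C(X, ℝ) => ∫ x, f x ∂μ := by
  exact (continuous_integral.comp (ContinuousMap.toLp (E := ℝ) 1 μ ℝ).continuous).congr fun f =>
    integral_congr_ae (ContinuousMap.coeFn_toLp μ f)

variable [TopologicalSpace X] [TopologicalSpace.MetrizableSpace X] [BorelSpace X] {T : X → X}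

lemma ext_of_forall_integral_continuousMap_eq {μ ν : Measure X} [IsFiniteMeasure μ]
    [IsFiniteMeasure ν] (h : ∀ f : C(X, ℝ), ∫ x, f x ∂μ = ∫ x, f x ∂ν) : μ = ν :=
  ext_of_forall_integral_eq_of_IsFiniteMeasure fun f => h f.toContinuousMap

lemma measurePreserving_of_forall_integral_comp_eq (hT : Continuous T) {μ : Measure X}
    [IsFiniteMeasure μ] (h : ∀ f : C(X, ℝ), ∫ x, f (T x) ∂μ = ∫ x, f x ∂μ) :
    MeasurePreserving T μ μ := by
  refine ⟨hT.measurable, ext_of_forall_integral_continuousMap_eq fun f => ?_⟩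
  rw [integral_map hT.measurable.aemeasurable f.continuous.aestronglyMeasurable, h]

lemma isClosed_setOf_measurePreserving (hT : Continuous T) :
    IsClosed {μ : ProbabilityMeasure X | MeasurePreserving T (μ : Measure X) μ} := by
  have : {μ : ProbabilityMeasure X | MeasurePreserving T (μ : Measure X) μ} =
      {μ | μ.map hT.measurable.aemeasurable = μ} := by
    ext μ
    exact ⟨fun h => Subtype.ext h.map_eq, fun h => ⟨hT.measurable, congrArg Subtype.val h⟩⟩
  rw [this]
  exact isClosed_eq (ProbabilityMeasure.continuous_map hT) continuous_id

variable [CompactSpace X]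

lemma integrable_continuousMap (f : C(X, ℝ)) (μ : Measure X) [IsFiniteMeasure μ] :
    Integrable f μ :=
  f.continuous.integrable_of_hasCompactSupport (.of_compactSpace f)

lemma ext_of_denseRange_integral_eq {ι : Type*} {g : ι → C(X, ℝ)} (hg : DenseRange g)
    {μ ν : Measure X} [IsFiniteMeasure μ] [IsFiniteMeasure ν]
    (h : ∀ i, ∫ x, g i x ∂μ = ∫ x, g i x ∂ν) : μ = ν :=
  ext_of_forall_integral_continuousMap_eq <| congrFun <|
    hg.equalizer (continuous_integral_continuousMap μ) (continuous_integral_continuousMap ν)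
      (funext h)

/-- Extremality: the components of a convex decomposition of `μ` are again lexicographically
maximal, so they integrate each `g k` like `μ`. -/
lemma ergodic_of_isLexMaxOn {g : ℕ → C(X, ℝ)} (hg : DenseRange g) {μ : ProbabilityMeasure X}
    (hμ : MeasurePreserving T (μ : Measure X) μ)
    (hmax : IsLexMaxOn (fun k (ν : ProbabilityMeasure X) => ∫ x, g k x ∂(ν : Measure X))
      {ν | MeasurePreserving T (ν : Measure X) ν} μ) : Ergodic T (μ : Measure X) := by
  refine Ergodic.of_mem_extremePoints (mem_extremePoints_iff_left.2 ⟨⟨hμ, inferInstance⟩, ?_⟩)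
  rintro ν₁ ⟨h₁, hp₁⟩ ν₂ ⟨h₂, hp₂⟩ hseg
  have hint : ∀ k, ∫ x, g k x ∂ν₁ = ∫ x, g k x ∂μ ∧ ∫ x, g k x ∂ν₂ = ∫ x, g k x ∂μ := by
    intro k
    induction k using Nat.strong_induction_on with
    | _ k ih =>
      exact eq_and_eq_of_mem_openSegment
        (integral_mem_openSegment hseg (integrable_continuousMap _ _)
          (integrable_continuousMap _ _))
        (hmax ⟨ν₁, hp₁⟩ h₁ k fun i hi => (ih i hi).1) (hmax ⟨ν₂, hp₂⟩ h₂ k fun i hi => (ih i hi).2)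
  exact ext_of_denseRange_integral_eq hg fun k => (hint k).1

theorem exists_ergodic_isMaxOn_integral (hT : Continuous T) (f : C(X, ℝ))
    (hne : {μ : ProbabilityMeasure X | MeasurePreserving T (μ : Measure X) μ}.Nonempty) :
    ∃ μ : ProbabilityMeasure X, Ergodic T (μ : Measure X) ∧
      IsMaxOn (fun ν : ProbabilityMeasure X => ∫ x, f x ∂(ν : Measure X))
        {ν | MeasurePreserving T (ν : Measure X) ν} μ := by
  let g : ℕ → C(X, ℝ)
    | 0 => f
    | k + 1 => TopologicalSpace.denseSeq C(X, ℝ) k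
  have hg : DenseRange g := (TopologicalSpace.denseRange_denseSeq C(X, ℝ)).mono
    (range_subset_iff.2 fun k => ⟨k + 1, rfl⟩)
  obtain ⟨μ, hμ, hmax⟩ := exists_isLexMaxOn
    (fun k => ProbabilityMeasure.continuous_integral_continuousMap (g k))
    (isClosed_setOf_measurePreserving hT) hne
  exact ⟨μ, ergodic_of_isLexMaxOn hg hμ hmax, fun ν hν => hmax ν hν 0 (by simp)⟩

end Optimization

/-! ### Invariant measures from Birkhoff averages -/

section BirkhoffAverage

open Filter Topology
open scoped ENNReal

lemma birkhoffAverage_comp_self {Y : Type*} (S : Y → Y) (f : Y → ℝ) (n : ℕ) (y : Y) :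
    birkhoffAverage ℝ S (f ∘ S) n y = birkhoffAverage ℝ S f n (S y) := by
  simp only [birkhoffAverage, birkhoffSum, Function.comp_apply, ← Function.iterate_succ_apply,
    Function.iterate_succ_apply']

lemma tendsto_birkhoffAverage_apply_sub {X : Type*} [TopologicalSpace X] [CompactSpace X]
    {ι : Type*} {l : Filter ι} {n : ι → ℕ} (hn : Tendsto n l atTop) (T : X → X) (x : ι → X)
    (f : C(X, ℝ)) :
    Tendsto (fun k => birkhoffAverage ℝ T f (n k) (T (x k)) - birkhoffAverage ℝ T f (n k) (x k)) l
      (𝓝 0) := by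
  have hlim : Tendsto (fun k => (‖f‖ + ‖f‖) / (n k : ℝ)) l (𝓝 0) :=
    tendsto_const_nhds.div_atTop (tendsto_natCast_atTop_atTop.comp hn)
  refine squeeze_zero_norm (fun k => ?_) hlim
  rw [← dist_eq_norm, dist_birkhoffAverage_apply_birkhoffAverage]
  gcongr
  exact (dist_le_norm_add_norm _ _).trans
    (add_le_add (f.norm_coe_le_norm _) (f.norm_coe_le_norm _))

variable {X : Type*} [MeasurableSpace X] [TopologicalSpace X]
  [TopologicalSpace.MetrizableSpace X] [BorelSpace X] [CompactSpace X] {T : X → X}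

lemma exists_integral_eq_birkhoffAverage (T : X → X) (x : X) {n : ℕ} (hn : n ≠ 0) :
    ∃ μ : ProbabilityMeasure X,
      ∀ f : C(X, ℝ), ∫ y, f y ∂(μ : Measure X) = birkhoffAverage ℝ T f n x := by
  refine ⟨⟨(n : ℝ≥0∞)⁻¹ • ∑ j ∈ Finset.range n, Measure.dirac (T^[j] x), ⟨?_⟩⟩, fun f => ?_⟩
  · simp [ENNReal.inv_mul_cancel, hn]
  · simp only [ProbabilityMeasure.coe_mk]
    rw [integral_smul_measure, integral_finsetSum_measure fun _ _ => integrable_continuousMap f _]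
    simp [birkhoffAverage, birkhoffSum]

theorem exists_measurePreserving_le_integral (hT : Continuous T) (f : C(X, ℝ)) {c : ℝ}
    {n : ℕ → ℕ} {x : ℕ → X} (hn : Tendsto n atTop atTop) (hn0 : ∀ k, n k ≠ 0)
    (hc : ∀ k, c ≤ birkhoffAverage ℝ T f (n k) (x k)) :
    ∃ μ : ProbabilityMeasure X, MeasurePreserving T (μ : Measure X) μ ∧
      c ≤ ∫ y, f y ∂(μ : Measure X) := by
  choose ν hν using fun k => exists_integral_eq_birkhoffAverage T (x k) (hn0 k)
  obtain ⟨μ, -, hμ⟩ := isCompact_univ.ultrafilter_le_nhds ((hyperfilter ℕ).map ν) (by simp)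
  have hlim : ∀ g : C(X, ℝ), Tendsto (fun k => birkhoffAverage ℝ T g (n k) (x k)) (hyperfilter ℕ)
      (𝓝 (∫ y, g y ∂(μ : Measure X))) := by
    intro g
    simp only [← hν]
    exact ((ProbabilityMeasure.continuous_integral_continuousMap g).tendsto μ).comp hμ
  refine ⟨μ, measurePreserving_of_forall_integral_comp_eq hT fun g => ?_,
    ge_of_tendsto' (hlim f) hc⟩
  have hcomp := hlim (g.comp ⟨T, hT⟩)
  simp only [ContinuousMap.coe_comp, ContinuousMap.coe_mk, birkhoffAverage_comp_self] at hcomp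
  exact sub_eq_zero.1 (tendsto_nhds_unique (hcomp.sub (hlim g))
    (tendsto_birkhoffAverage_apply_sub (hn.mono_left Nat.hyperfilter_le_atTop) T x g))

theorem exists_ergodic_le_integral (hT : Continuous T) (f : C(X, ℝ)) {c : ℝ}
    {n : ℕ → ℕ} {x : ℕ → X} (hn : Tendsto n atTop atTop) (hn0 : ∀ k, n k ≠ 0)
    (hc : ∀ k, c ≤ birkhoffAverage ℝ T f (n k) (x k)) :
    ∃ μ : ProbabilityMeasure X, Ergodic T (μ : Measure X) ∧ c ≤ ∫ y, f y ∂(μ : Measure X) := by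
  obtain ⟨ν, hν, hcν⟩ := exists_measurePreserving_le_integral hT f hn hn0 hc
  obtain ⟨μ, hμ, hmax⟩ := exists_ergodic_isMaxOn_integral hT f ⟨ν, hν⟩
  exact ⟨μ, hμ, hcν.trans (hmax hν)⟩

end BirkhoffAverage

/-! ### Words and bi-infinite sequences -/

section Words

variable {α β : Type*}

/-- The power `w ^ k` of a word. -/
def rep (w : List α) (k : ℕ) : List α := (List.replicate k w).flatten

lemma rep_zero (w : List α) : rep w 0 = [] := rfl

lemma rep_succ (w : List α) (k : ℕ) : rep w (k + 1) = w ++ rep w k := by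
  rw [rep, List.replicate_succ, List.flatten_cons, rep]

lemma length_rep (w : List α) (k : ℕ) : (rep w k).length = k * w.length := by
  simp [rep]

lemma map_rep (f : α → β) (w : List α) (k : ℕ) : (rep w k).map f = rep (w.map f) k := by
  simp [rep]

/-- The word read off `x` on the interval `[s, s + N)`. -/
def window (x : ℤ → α) (s : ℤ) (N : ℕ) : List α := List.ofFn fun j : Fin N => x (s + j)

lemma length_window (x : ℤ → α) (s : ℤ) (N : ℕ) : (window x s N).length = N :=
  List.length_ofFn

lemma window_add (x : ℤ → α) (s : ℤ) (M N : ℕ) :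
    window x s (M + N) = window x s M ++ window x (s + M) N := by
  simp [window, List.ofFn_add, add_assoc]

lemma window_comp_add (x : ℤ → α) (r s : ℤ) (N : ℕ) :
    window (fun i => x (i + r)) s N = window x (s + r) N := by
  simp only [window, add_right_comm s r]

lemma map_window (f : α → β) (x : ℤ → α) (s : ℤ) (N : ℕ) :
    (window x s N).map f = window (f ∘ x) s N :=
  List.map_ofFn ..

lemma window_eq_window_iff {x y : ℤ → α} {r s : ℤ} {N : ℕ} :
    window x r N = window y s N ↔ ∀ j < N, x (r + j) = y (s + j) := by
  simp [window, List.ofFn_inj, funext_iff, Fin.forall_iff]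

lemma window_infix_window (x : ℤ → α) {r s : ℤ} {M N : ℕ} (hrs : r ≤ s) (hsr : s + M ≤ r + N) :
    window x s M <:+: window x r N := by
  obtain ⟨k, rfl⟩ := Int.le.dest hrs
  obtain ⟨l, rfl⟩ : ∃ l, N = k + M + l := ⟨N - (k + M), by omega⟩
  rw [window_add, window_add]
  exact List.infix_append ..

lemma eq_window_of_append_append_eq_window {x : ℤ → α} {s : ℤ} {N : ℕ} {a t c : List α}
    (h : a ++ t ++ c = window x s N) : t = window x (s + a.length) t.length := by
  obtain rfl : a.length + t.length + c.length = N := by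
    rw [← length_window x s N, ← h, List.length_append, List.length_append]
  rw [window_add, window_add] at h
  obtain ⟨h, -⟩ := List.append_inj h (by simp [length_window])
  exact (List.append_inj h (length_window ..).symm).2

/-- The word `t` is a factor of `x`: it can be read off `x` on some interval. -/
def Factor (t : List α) (x : ℤ → α) : Prop := ∃ s N, window x s N = t

lemma Factor.mono {t u : List α} {x : ℤ → α} (h : Factor t x) (hu : u <:+: t) : Factor u x := by
  obtain ⟨s, N, rfl⟩ := h
  obtain ⟨a, c, h⟩ := hu
  exact ⟨_, _, (eq_window_of_append_append_eq_window h).symm⟩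

end Words

/-! ### Periodic sequences -/

section Periodic

variable {α β : Type*} {w : List α} {x : ℤ → α}

lemma apply_emod_of_periodic {k : ℤ} (h : Function.Periodic x k) (i : ℤ) : x (i % k) = x i := by
  conv_rhs => rw [← Int.emod_add_mul_ediv i k, mul_comm]
  exact (h.int_mul _ _).symm

lemma window_add_mul_of_periodic {k : ℤ} (h : Function.Periodic x k) (n s : ℤ) (N : ℕ) :
    window x (s + n * k) N = window x s N :=
  window_eq_window_iff.2 fun j _ => by rw [add_right_comm]; exact h.int_mul n (s + j)

variable [Inhabited α] [Inhabited β]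

/-- The bi-infinite periodic sequence `w ^ ∞`, with a copy of `w` starting at coordinate `0`. The
default letter is only used for the empty word. -/
def per (w : List α) (i : ℤ) : α := w.getD (i % w.length).toNat default

lemma periodic_per (w : List α) : Function.Periodic (per w) w.length := fun i => by
  simp [per]

lemma window_per (w : List α) : window (per w) 0 w.length = w := by
  refine List.ext_getElem (length_window ..) fun j _ hj => ?_
  have hmod : ((j : ℤ) % w.length).toNat = j := by
    rw [Int.emod_eq_of_lt (by positivity) (by exact_mod_cast hj), Int.toNat_natCast]
  simp [window, per, hmod, hj]

lemma eq_per (hw : w ≠ []) (hx : Function.Periodic x w.length) (h : window x 0 w.length = w) :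
    x = per w := by
  have hpos : (0 : ℤ) < w.length := by exact_mod_cast List.length_pos_iff.2 hw
  funext i
  rw [← apply_emod_of_periodic hx, ← apply_emod_of_periodic (periodic_per w)]
  obtain ⟨j, hj⟩ := Int.eq_ofNat_of_zero_le (Int.emod_nonneg i hpos.ne')
  have hlt := Int.emod_lt_of_pos i hpos
  have := window_eq_window_iff.1 (h.trans (window_per w).symm) j (by omega)
  simpa only [hj, zero_add] using this

lemma comp_per (f : α → β) (hw : w ≠ []) : f ∘ per w = per (w.map f) := by
  refine eq_per (by simpa using hw) ?_ ?_
  · rw [List.length_map]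
    exact (periodic_per w).comp f
  · rw [List.length_map, ← map_window, window_per]

lemma window_per_append_left (u v : List α) : window (per (u ++ v)) 0 u.length = u := by
  have h := window_per (u ++ v)
  rw [List.length_append, window_add] at h
  exact (List.append_inj h (length_window ..)).1

lemma window_per_append_right (u v : List α) : window (per (u ++ v)) u.length v.length = v := by
  have h := window_per (u ++ v)
  rw [List.length_append, window_add, zero_add] at h
  exact (List.append_inj h (length_window ..)).2

lemma per_append_comp_add (u v : List α) (h : u ++ v ≠ []) :
    (fun i => per (u ++ v) (i + u.length)) = per (v ++ u) := by
  have hper := periodic_per (u ++ v)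
  refine eq_per (by simpa [and_comm] using h) (fun i => ?_) ?_
  · rw [add_right_comm, List.length_append, add_comm v.length, ← List.length_append]
    exact hper _
  · rw [window_comp_add, List.length_append, window_add, zero_add, window_per_append_right]
    have := window_add_mul_of_periodic hper 1 0 u.length
    rw [window_per_append_left, zero_add, one_mul, List.length_append, Nat.cast_add] at this
    rw [this]

lemma window_per_mul_length (w : List α) (k : ℕ) :
    window (per w) 0 (k * w.length) = rep w k := by
  induction k with
  | zero => rw [Nat.zero_mul, rep_zero]; rfl
  | succ k ih =>
    have := window_add_mul_of_periodic (periodic_per w) 1 0 (k * w.length)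
    rw [rep_succ, ← ih, Nat.succ_mul, add_comm, window_add, window_per, ← this, one_mul]

lemma factor_rep_per (w : List α) (k : ℕ) : Factor (rep w k) (per w) :=
  ⟨0, _, window_per_mul_length w k⟩

lemma Factor.infix_rep {t : List α} (h : Factor t (per w)) (hw : w ≠ []) {k : ℕ}
    (hk : t.length + w.length ≤ k * w.length) : t <:+: rep w k := by
  obtain ⟨s, N, rfl⟩ := h
  rw [length_window] at hk
  have hpos : (0 : ℤ) < w.length := by exact_mod_cast List.length_pos_iff.2 hw
  have hlt := Int.emod_lt_of_pos s hpos
  rw [← Int.emod_add_mul_ediv s w.length, mul_comm, window_add_mul_of_periodic (periodic_per w),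
    ← window_per_mul_length]
  exact window_infix_window _ (Int.emod_nonneg s hpos.ne') (by push_cast at hk ⊢; omega)

end Periodic

/-! ### Subshifts defined by a set of allowed words -/

section Subshift

variable {α : Type*} {L : Set (List α)}

/-- The sequences all of whose factors belong to `L`. -/
def subshift (L : Set (List α)) : Set (ℤ → α) := {x | ∀ s N, window x s N ∈ L}

variable [TopologicalSpace α]

lemma mem_subshift_iff_shiftHomeo_mem (x : ℤ → α) :
    x ∈ subshift L ↔ shiftHomeo α x ∈ subshift L := by
  have hwin : ∀ s N, window (shiftHomeo α x) s N = window x (s + 1) N := window_comp_add x 1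
  simp only [subshift, mem_ofPred_eq, hwin]
  exact ⟨fun h s => h (s + 1), fun h s => by simpa using h (s - 1)⟩

lemma isClosed_subshift [DiscreteTopology α] (L : Set (List α)) : IsClosed (subshift L) := by
  have : subshift L = ⋂ (s : ℤ) (N : ℕ),
      (fun (x : ℤ → α) (j : Fin N) => x (s + j)) ⁻¹' {v | List.ofFn v ∈ L} := by
    ext x
    simp [subshift, window]
  rw [this]
  exact isClosed_iInter fun s => isClosed_iInter fun N =>
    (isClosed_discrete _).preimage (by fun_prop)

lemma exists_forall_window_eq_imp_mem {U : Set (ℤ → α)} (hU : IsOpen U) {x : ℤ → α} (hx : x ∈ U) :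
    ∃ s N, ∀ y, window y s N = window x s N → y ∈ U := by
  obtain ⟨I, u, hu, hsub⟩ := isOpen_pi_iff.1 hU x hx
  obtain ⟨n, hn⟩ : ∃ n : ℕ, ∀ i ∈ I, i.natAbs ≤ n :=
    ⟨I.sup Int.natAbs, fun _ hi => Finset.le_sup (f := Int.natAbs) hi⟩
  refine ⟨-n, 2 * n + 1, fun y hy => hsub fun i hi => ?_⟩
  have hi' := hn i hi
  have hyi := window_eq_window_iff.1 hy (i + n).toNat (by omega)
  rw [Int.toNat_of_nonneg (by omega), neg_add_cancel_comm_assoc] at hyi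
  exact hyi ▸ (hu i hi).2

/-- The shift on `subshift L`. -/
abbrev subshiftHomeo (L : Set (List α)) : subshift L ≃ₜ subshift L :=
  restrictHomeo (shiftHomeo α) (subshift L) mem_subshift_iff_shiftHomeo_mem

lemma subshiftHomeo_zpow_apply (n : ℤ) (x : subshift L) :
    ((subshiftHomeo L ^ n) x : ℤ → α) = fun i => x.1 (i + n) := by
  induction n using Int.induction_on generalizing x with
  | zero => funext i; rw [add_zero]; rfl
  | succ n ih =>
    rw [zpow_add_one]
    refine (ih (subshiftHomeo L x)).trans (funext fun i => ?_)
    exact congrArg x.1 (by ring)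
  | pred n ih =>
    rw [zpow_sub_one]
    refine (ih ((subshiftHomeo L).symm x)).trans (funext fun i => ?_)
    exact congrArg x.1 (by ring)

lemma subshiftHomeo_iterate_apply (n : ℕ) (x : subshift L) (i : ℤ) :
    ((subshiftHomeo L)^[n] x).1 i = x.1 (i + n) := by
  rw [iterate_eq_zpow, subshiftHomeo_zpow_apply]

lemma exists_window_forall_factor_imp_zpow_mem {U : Set (subshift L)} (hU : IsOpen U)
    {x : subshift L} (hx : x ∈ U) :
    ∃ s N, ∀ y : subshift L, Factor (window x.1 s N) y → ∃ n : ℤ, (subshiftHomeo L ^ n) y ∈ U := by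
  obtain ⟨V, hV, rfl⟩ := isOpen_induced_iff.1 hU
  obtain ⟨s, N, h⟩ := exists_forall_window_eq_imp_mem hV hx
  refine ⟨s, N, fun y ⟨r, M, hy⟩ => ⟨r - s, h _ ?_⟩⟩
  obtain rfl : M = N := by simpa [length_window] using congrArg List.length hy
  rw [subshiftHomeo_zpow_apply, window_comp_add, add_sub_cancel, hy]

lemma dense_orbit_of_forall_factor {x : subshift L} (h : ∀ t ∈ L, Factor t x.1) :
    Dense (orbit (subshiftHomeo L) x) := by
  refine dense_iff_inter_open.2 fun U hU ⟨y, hy⟩ => ?_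
  obtain ⟨s, N, hyU⟩ := exists_window_forall_factor_imp_zpow_mem hU hy
  obtain ⟨n, hn⟩ := hyU x (h _ (y.2 s N))
  exact ⟨_, hn, n, rfl⟩

lemma exists_mem_orbit_of_forall_window_factor [T1Space α] {m : ℕ} {p : ℕ → subshift L}
    (hp : ∀ n, (orbit (subshiftHomeo L) (p n)).Finite) {x : subshift L}
    (h : ∀ s N, ∃ n < m, Factor (window x.1 s N) (p n).1) :
    ∃ n, x ∈ orbit (subshiftHomeo L) (p n) := by
  have hfin : (⋃ n ∈ {n | n < m}, orbit (subshiftHomeo L) (p n)).Finite :=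
    (finite_lt_nat m).biUnion fun n _ => hp n
  suffices x ∈ ⋃ n ∈ {n | n < m}, orbit (subshiftHomeo L) (p n) by
    obtain ⟨n, -, hn⟩ := mem_iUnion₂.1 this
    exact ⟨n, hn⟩
  by_contra hx
  obtain ⟨s, N, hU⟩ := exists_window_forall_factor_imp_zpow_mem hfin.isClosed.isOpen_compl hx
  obtain ⟨n, hn, hf⟩ := h s N
  obtain ⟨k, hk⟩ := hU (p n) hf
  exact hk (mem_iUnion₂.2 ⟨n, hn, zpow_mem_orbit _ k _⟩)

end Subshift

/-! ### Words interleaved from blocks and separators -/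

section Interleaved

variable {α : Type*} {B R : Set (List α)} {t w : List α} {l : ℕ}

/-- Concatenations of blocks from `B` in which consecutive blocks are separated by a word
from `R`. -/
inductive Interleaved (B R : Set (List α)) : List α → Prop
  | block {b : List α} : b ∈ B → Interleaved B R b
  | join {w r w' : List α} :
      Interleaved B R w → r ∈ R → Interleaved B R w' → Interleaved B R (w ++ r ++ w')

namespace Interleaved

lemma append (hR : [] ∈ R) {w' : List α} (h : Interleaved B R w) (h' : Interleaved B R w') :
    Interleaved B R (w ++ w') := by
  simpa using h.join hR h'

lemma rep (hR : [] ∈ R) (h : Interleaved B R w) {k : ℕ} (hk : k ≠ 0) :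
    Interleaved B R (rep w k) := by
  induction k, Nat.one_le_iff_ne_zero.2 hk using Nat.le_induction with
  | base => simpa [rep_succ, rep_zero] using h
  | succ k _ ih => exact rep_succ w k ▸ h.append hR (ih (by omega))

lemma exists_mem_prefix (h : Interleaved B R w) : ∃ b ∈ B, b <+: w := by
  induction h with
  | block hb => exact ⟨_, hb, List.prefix_rfl⟩
  | join _ _ _ ih _ =>
    obtain ⟨b, hb, hpre⟩ := ih
    exact ⟨b, hb, List.append_assoc .. ▸ hpre.trans (List.prefix_append ..)⟩

lemma exists_mem_suffix (h : Interleaved B R w) : ∃ b ∈ B, b <:+ w := by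
  induction h with
  | block hb => exact ⟨_, hb, List.suffix_rfl⟩
  | join _ _ _ _ ih =>
    obtain ⟨b, hb, hsuf⟩ := ih
    exact ⟨b, hb, hsuf.trans (List.suffix_append ..)⟩

lemma infix_or_length_le_of_prefix (hB : ∀ b ∈ B, b.length ≤ l) (h : Interleaved B R w)
    (ht : t <+: w) : (∃ b ∈ B, b <:+: t) ∨ t.length ≤ l := by
  obtain ⟨b, hb, hpre⟩ := h.exists_mem_prefix
  rcases List.prefix_or_prefix_of_prefix ht hpre with h | h
  · exact .inr (h.length_le.trans (hB b hb))
  · exact .inl ⟨b, hb, h.isInfix⟩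

lemma infix_or_length_le_of_suffix (hB : ∀ b ∈ B, b.length ≤ l) (h : Interleaved B R w)
    (ht : t <:+ w) : (∃ b ∈ B, b <:+: t) ∨ t.length ≤ l := by
  obtain ⟨b, hb, hsuf⟩ := h.exists_mem_suffix
  rcases List.suffix_or_suffix_of_suffix ht hsuf with h | h
  · exact .inr (h.length_le.trans (hB b hb))
  · exact .inl ⟨b, hb, h.isInfix⟩

lemma infix_cases (hB : ∀ b ∈ B, b.length ≤ l) (hR : [] ∈ R)
    (hRinfix : ∀ r ∈ R, ∀ u, u <:+: r → u ∈ R) (h : Interleaved B R w) (ht : t <:+: w) :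
    (∃ b ∈ B, b <:+: t) ∨
      ∃ a r c, t = a ++ r ++ c ∧ r ∈ R ∧ a.length ≤ l ∧ c.length ≤ l := by
  induction h generalizing t with
  | block hb => exact .inr ⟨t, [], [], by simp, hR, ht.length_le.trans (hB _ hb), by simp⟩
  | @join w r w' hw hr hw' ih ih' =>
    rcases List.infix_append_iff.1 ht with h | h | ⟨u, c, rfl, hu, hc⟩
    · rcases List.infix_append_iff.1 h with h | h | ⟨a, v, rfl, ha, hv⟩
      · exact ih h
      · exact .inr ⟨[], t, [], by simp, hRinfix r hr t h, by simp⟩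
      · exact (hw.infix_or_length_le_of_suffix hB ha).imp
          (fun ⟨b, hb, h⟩ => ⟨b, hb, List.infix_append_of_infix_left h⟩)
          fun ha => ⟨a, v, [], by simp, hRinfix r hr v hv.isInfix, ha, by simp⟩
    · exact ih' h
    · rcases hw'.infix_or_length_le_of_prefix hB hc with ⟨b, hb, h⟩ | hc
      · exact .inl ⟨b, hb, List.infix_append_of_infix_right h⟩
      rcases List.suffix_or_suffix_of_suffix hu (List.suffix_append w r) with h | ⟨a, rfl⟩
      · exact .inr ⟨[], u, c, by simp, hRinfix r hr u h.isInfix, by simp, hc⟩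
      · exact (hw.infix_or_length_le_of_suffix hB 
            ((List.suffix_append_inj_of_length_eq rfl).1 hu).1).imp
          (fun ⟨b, hb, h⟩ => ⟨b, hb, List.append_assoc .. ▸ List.infix_append_of_infix_left h⟩)
          fun ha => ⟨a, r, c, rfl, hr, ha, hc⟩

end Interleaved

end Interleaved

/-! ### The blocks and the subshift they generate -/

/-- The number of repetitions at the start of `block b (m + 1)`. The growth makes the frequency
bias of the blocks decrease only to a positive limit, see `blockLength_le_imbalance_block`. -/
def repCount (m : ℕ) : ℕ := 2 * (m + 1) ^ 2 * (m + 3)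

/-- The hierarchy of words generating the subshift. For `n = (Nat.unpair m).1`, the word
`block b (m + 1)` contains an `m`-fold repetition of `block b n ++ block (!b) n`; every `n` is
revisited for arbitrarily large `m`. -/
def block (b : Bool) : ℕ → List Bool
  | 0 => [b]
  | m + 1 => rep (block b m) (repCount m) ++ block (!b) m ++
      rep (block b (Nat.unpair m).1 ++ block (!b) (Nat.unpair m).1) m ++ block b m
termination_by m => m
decreasing_by all_goals have := Nat.unpair_left_le m; omega

/-- The common length of `block true m` and `block false m`. -/
def blockLength (m : ℕ) : ℕ := (block true m).length

lemma block_zero (b : Bool) : block b 0 = [b] := by rw [block]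

lemma block_succ (b : Bool) (m : ℕ) :
    block b (m + 1) = rep (block b m) (repCount m) ++ block (!b) m ++
      rep (block b (Nat.unpair m).1 ++ block (!b) (Nat.unpair m).1) m ++ block b m := by
  rw [block]

lemma block_not (b : Bool) (m : ℕ) : block (!b) m = (block b m).map not := by
  induction m using Nat.strong_induction_on generalizing b with
  | _ m ih =>
    match m with
    | 0 => simp [block_zero]
    | m + 1 =>
      have hm := ih m (by omega)
      have hn := ih (Nat.unpair m).1 (Nat.lt_succ_of_le (Nat.unpair_left_le m))
      simp only [block_succ, List.map_append, map_rep, ← hm, ← hn]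

lemma length_block (b : Bool) (m : ℕ) : (block b m).length = blockLength m := by
  cases b
  · rw [← Bool.not_true, block_not, List.length_map, blockLength]
  · rfl

lemma blockLength_zero : blockLength 0 = 1 := by simp [blockLength, block_zero]

lemma blockLength_succ (m : ℕ) : blockLength (m + 1) =
    (repCount m + 2) * blockLength m + 2 * m * blockLength (Nat.unpair m).1 := by
  rw [blockLength, block_succ]
  simp only [List.length_append, length_rep, length_block]
  ring

lemma lt_blockLength (m : ℕ) : m < blockLength m := by
  induction m with
  | zero => simp [blockLength_zero]
  | succ m ih => rw [blockLength_succ]; nlinarith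

lemma blockLength_pos (m : ℕ) : 0 < blockLength m := (Nat.zero_le m).trans_lt (lt_blockLength m)

lemma tendsto_blockLength : Filter.Tendsto blockLength Filter.atTop Filter.atTop :=
  Filter.tendsto_atTop_mono (fun m => (lt_blockLength m).le) Filter.tendsto_id

lemma monotone_blockLength : Monotone blockLength :=
  monotone_nat_of_le_succ fun m => by rw [blockLength_succ]; nlinarith

lemma block_ne_nil (b : Bool) (m : ℕ) : block b m ≠ [] :=
  List.ne_nil_of_length_pos (length_block b m ▸ blockLength_pos m)

lemma block_infix_block_of_lt (b c : Bool) {m k : ℕ} (h : m < k) : block b m <:+: block c k := by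
  induction k, h using Nat.le_induction generalizing c with
  | base =>
    rw [block_succ]
    rcases eq_or_ne b c with rfl | hbc
    · exact (List.suffix_append ..).isInfix
    · rw [Bool.eq_not_of_ne hbc, List.append_assoc]
      exact List.infix_append ..
  | succ k _ ih =>
    rw [block_succ]
    exact (ih c).trans (List.suffix_append ..).isInfix

/-- The language generated by the blocks: their factors. -/
def blockLanguage : Set (List Bool) := {t | ∃ b m, t <:+: block b m}

lemma exists_forall_infix_block {t : List Bool} (ht : t ∈ blockLanguage) :
    ∃ m, ∀ k, m ≤ k → ∀ b, t <:+: block b k := by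
  obtain ⟨c, m, h⟩ := ht
  exact ⟨m + 1, fun k hk b => h.trans (block_infix_block_of_lt c b hk)⟩

/-! ### The periodic sequences of the subshift -/

/-- The periodic sequence `(block true n ++ block false n) ^ ∞`. -/
def blockPeriodic (n : ℕ) : ℤ → Bool := per (block true n ++ block false n)

lemma blockPeriodic_add_blockLength (n : ℕ) (i : ℤ) :
    blockPeriodic n (i + blockLength n) = !blockPeriodic n i := by
  have hne : block true n ++ block false n ≠ [] := by simp [block_ne_nil]
  have hmap : (block true n ++ block false n).map not = block false n ++ block true n := by
    rw [List.map_append, ← block_not, ← block_not, Bool.not_true, Bool.not_false]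
  calc blockPeriodic n (i + blockLength n)
      = per (block false n ++ block true n) i := congrFun (per_append_comp_add _ _ hne) i
    _ = !blockPeriodic n i := by rw [← hmap, ← comp_per not hne]; rfl

lemma factor_rep_blockPeriodic (b : Bool) (n k : ℕ) :
    Factor (rep (block b n ++ block (!b) n) k) (blockPeriodic n) := by
  cases b
  · obtain ⟨s, N, h⟩ := factor_rep_per (block false n ++ block true n) k
    refine ⟨s + (block true n).length, N, ?_⟩
    rw [blockPeriodic, ← window_comp_add, per_append_comp_add _ _ (by simp [block_ne_nil])]
    exact h
  · exact factor_rep_per _ k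

lemma factor_block_blockPeriodic (b : Bool) (n : ℕ) : Factor (block b n) (blockPeriodic n) := by
  refine (factor_rep_blockPeriodic b n 1).mono ?_
  rw [rep_succ, rep_zero, List.append_nil]
  exact (List.prefix_append ..).isInfix

lemma mem_blockLanguage_of_factor {t : List Bool} {n : ℕ} (h : Factor t (blockPeriodic n)) :
    t ∈ blockLanguage := by
  have hne : block true n ++ block false n ≠ [] := by simp [block_ne_nil]
  have hpos := List.length_pos_iff.2 hne
  let k := Nat.pair n (t.length + 1)
  have hle : t.length + 1 ≤ k := Nat.right_le_pair ..
  refine ⟨true, k + 1, (h.infix_rep hne (k := k) (by nlinarith)).trans ?_⟩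
  rw [block_succ, Nat.unpair_pair]
  exact List.infix_append ..

/-- `blockPeriodic n` as a point of the subshift. -/
def periodicPoint (n : ℕ) : subshift blockLanguage :=
  ⟨blockPeriodic n, fun s N => mem_blockLanguage_of_factor ⟨s, N, rfl⟩⟩

lemma subshiftHomeo_pow_periodicPoint (n : ℕ) :
    (subshiftHomeo blockLanguage ^ (2 * blockLength n)) (periodicPoint n) = periodicPoint n := by
  refine Subtype.ext (funext fun i => ?_)
  rw [← zpow_natCast, subshiftHomeo_zpow_apply]
  simp only [periodicPoint, two_mul, Nat.cast_add, ← add_assoc, blockPeriodic_add_blockLength,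
    Bool.not_not]

/-! ### Points avoiding the blocks of some level -/

/-- The words that can separate two blocks of level `m` in a block of higher level: factors of the
periodic sequences of level below `m`. -/
def separators (m : ℕ) : Set (List Bool) := {r | r = [] ∨ ∃ n < m, Factor r (blockPeriodic n)}

lemma nil_mem_separators (m : ℕ) : [] ∈ separators m := .inl rfl

lemma mem_separators_of_infix {m : ℕ} {r u : List Bool} (hr : r ∈ separators m) (hu : u <:+: r) :
    u ∈ separators m := by
  rcases hr with rfl | ⟨n, hn, h⟩
  · exact .inl (List.infix_nil.1 hu)
  · exact .inr ⟨n, hn, h.mono hu⟩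

lemma interleaved_block {m k : ℕ} (hk : m ≤ k) (b : Bool) :
    Interleaved (range (block · m)) (separators m) (block b k) := by
  have hnil := nil_mem_separators m
  induction k using Nat.strong_induction_on generalizing b with
  | _ k ih =>
    rcases hk.eq_or_lt with rfl | hlt
    · exact .block ⟨b, rfl⟩
    obtain ⟨k, rfl⟩ := Nat.exists_eq_succ_of_ne_zero hlt.ne_bot
    have hk := ih k k.lt_succ_self (Nat.le_of_lt_succ hlt)
    have hn := ih _ (Nat.lt_succ_of_le (Nat.unpair_left_le k))
    have hfirst := ((hk b).rep hnil (k := repCount k) (by simp [repCount])).append hnil (hk !b)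
    rw [block_succ]
    rcases lt_or_ge (Nat.unpair k).1 m with hnm | hmn
    · exact hfirst.join (.inr ⟨_, hnm, factor_rep_blockPeriodic b _ k⟩) (hk b)
    rcases eq_or_ne k 0 with rfl | hk0
    · exact hfirst.join (.inl rfl) (hk b)
    · have hmid := ((hn hmn b).append hnil (hn hmn !b)).rep hnil hk0
      exact (hfirst.append hnil hmid).append hnil (hk b)

lemma exists_factor_window_of_forall_not_factor_block {x : subshift blockLanguage} {m : ℕ}
    (h : ∀ b, ¬Factor (block b m) x.1) (s : ℤ) (N : ℕ) :
    ∃ n < m, Factor (window x.1 s N) (blockPeriodic n) := by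
  set l := blockLength m
  -- `N + 1` instead of `N` excludes the empty separator.
  obtain ⟨k, hk⟩ := exists_forall_infix_block (x.2 (s - l) (l + (N + 1) + l))
  rcases (interleaved_block (le_max_left m k) true).infix_cases (l := l)
    (by rintro _ ⟨b, rfl⟩; exact (length_block b m).le) (nil_mem_separators m)
    (fun r hr u => mem_separators_of_infix hr) (hk _ (le_max_right m k) true)
    with ⟨_, ⟨b, rfl⟩, hb⟩ | ⟨a, r, c, htr, hr, ha, hc⟩
  · exact absurd (Factor.mono ⟨_, _, rfl⟩ hb) (h b)
  have hlen := congrArg List.length htr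
  simp only [length_window, List.length_append] at hlen
  rcases hr with rfl | ⟨n, hn, hr⟩
  · rw [List.length_nil] at hlen
    omega
  refine ⟨n, hn, hr.mono ?_⟩
  rw [eq_window_of_append_append_eq_window htr.symm]
  exact window_infix_window _ (by omega) (by omega)

theorem isPeriodicallyApproximated_subshiftHomeo :
    IsPeriodicallyApproximated (subshiftHomeo blockLanguage) periodicPoint where
  periodic n := ⟨_, Nat.mul_pos two_pos (blockLength_pos n), subshiftHomeo_pow_periodicPoint n⟩
  eventually_visits U hU := by
    rintro ⟨x, hx⟩
    obtain ⟨s, N, hU⟩ := exists_window_forall_factor_imp_zpow_mem hU hx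
    obtain ⟨m, hm⟩ := exists_forall_infix_block (x.2 s N)
    filter_upwards [Filter.eventually_ge_atTop m] with n hn
    exact hU _ ((factor_block_blockPeriodic true n).mono (hm n hn true))
  mem_orbit_or_dense x := by
    by_cases hx : ∀ m, ∃ b, Factor (block b m) x.1
    · refine .inr (dense_orbit_of_forall_factor fun t ht => ?_)
      obtain ⟨m, hm⟩ := exists_forall_infix_block ht
      obtain ⟨b, hb⟩ := hx m
      exact hb.mono (hm m le_rfl b)
    · push Not at hx
      obtain ⟨m, hm⟩ := hx
      refine .inl (exists_mem_orbit_of_forall_window_factor (m := m) (fun n => ?_)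
        (exists_factor_window_of_forall_not_factor_block hm))
      exact finite_orbit_of_zpow_apply_eq (k := (2 * blockLength n : ℕ))
        (by have := blockLength_pos n; omega)
        (by rw [zpow_natCast, subshiftHomeo_pow_periodicPoint])

/-! ### The imbalance of the blocks -/

/-- The sign of `c`, with `b` counted as positive. -/
def letterSign (b c : Bool) : ℝ := if c = b then 1 else -1

lemma letterSign_not_right (b c : Bool) : letterSign b (!c) = -letterSign b c := by
  cases b <;> cases c <;> simp [letterSign]

lemma letterSign_not_left (b c : Bool) : letterSign (!b) c = -letterSign b c := by
  cases b <;> cases c <;> simp [letterSign]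

/-- The number of letters `b` in `w` minus the number of other letters. -/
def imbalance (b : Bool) (w : List Bool) : ℝ := (w.map (letterSign b)).sum

lemma imbalance_append (b : Bool) (u v : List Bool) :
    imbalance b (u ++ v) = imbalance b u + imbalance b v := by
  simp [imbalance]

lemma imbalance_rep (b : Bool) (w : List Bool) (k : ℕ) :
    imbalance b (rep w k) = k * imbalance b w := by
  induction k with
  | zero => simp [rep_zero, imbalance]
  | succ k ih => rw [rep_succ, imbalance_append, ih]; push_cast; ring

lemma imbalance_block_not (b c : Bool) (m : ℕ) :
    imbalance b (block (!c) m) = -imbalance b (block c m) := by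
  rw [block_not, imbalance, imbalance, List.map_map, List.sum_neg, List.map_map]
  exact congrArg List.sum (List.map_congr_left fun c _ => letterSign_not_right b c)

lemma imbalance_block_succ (b : Bool) (m : ℕ) :
    imbalance b (block b (m + 1)) = repCount m * imbalance b (block b m) := by
  simp only [block_succ, imbalance_append, imbalance_rep, imbalance_block_not]
  ring

lemma blockLength_succ_le (m : ℕ) :
    blockLength (m + 1) ≤ 2 * (m + 1) * (m + 2) ^ 2 * blockLength m := by
  have hn := monotone_blockLength (Nat.unpair_left_le m)
  calc blockLength (m + 1)
      = (repCount m + 2) * blockLength m + 2 * m * blockLength (Nat.unpair m).1 :=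
        blockLength_succ m
    _ ≤ (repCount m + 2) * blockLength m + 2 * m * blockLength m := by gcongr
    _ = 2 * (m + 1) * (m + 2) ^ 2 * blockLength m := by rw [repCount]; ring

lemma mul_blockLength_le_mul_imbalance_block (b : Bool) (m : ℕ) :
    (m + 2) * blockLength m ≤ 2 * (m + 1) * imbalance b (block b m) := by
  induction m with
  | zero => simp [blockLength_zero, block_zero, imbalance, letterSign]
  | succ m ih =>
    have hsucc : (blockLength (m + 1) : ℝ) ≤ 2 * (m + 1) * (m + 2) ^ 2 * blockLength m :=
      mod_cast blockLength_succ_le m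
    calc ((m + 1 : ℕ) + 2 : ℝ) * blockLength (m + 1)
        ≤ ((m + 1 : ℕ) + 2) * (2 * (m + 1) * (m + 2) ^ 2 * blockLength m) := by gcongr
      _ = 2 * (m + 1) * (m + 2) * (m + 3) * ((m + 2) * blockLength m) := by push_cast; ring
      _ ≤ 2 * (m + 1) * (m + 2) * (m + 3) * (2 * (m + 1) * imbalance b (block b m)) := by gcongr
      _ = 2 * ((m + 1 : ℕ) + 1) * imbalance b (block b (m + 1)) := by
        rw [imbalance_block_succ, repCount]; push_cast; ring

lemma blockLength_le_imbalance_block (b : Bool) (m : ℕ) :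
    blockLength m ≤ 2 * imbalance b (block b m) := by
  have h := mul_blockLength_le_mul_imbalance_block b m
  have hpos : (0 : ℝ) < blockLength m := mod_cast blockLength_pos m
  nlinarith

/-! ### The ergodic measures -/

/-- The observable `x ↦ letterSign b (x 0)` on the subshift. -/
def signObservable (b : Bool) : C(subshift blockLanguage, ℝ) where
  toFun x := letterSign b (x.1 0)
  continuous_toFun := by
    exact (continuous_of_discreteTopology (f := letterSign b)).comp
      ((continuous_apply (0 : ℤ)).comp continuous_subtype_val)

lemma birkhoffSum_signObservable (b : Bool) (n : ℕ) (x : subshift blockLanguage) :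
    birkhoffSum (subshiftHomeo blockLanguage) (signObservable b) n x =
      imbalance b (window x.1 0 n) := by
  simp only [birkhoffSum, signObservable, ContinuousMap.coe_mk, subshiftHomeo_iterate_apply,
    imbalance, window, List.map_ofFn, List.sum_ofFn, Finset.sum_range]
  rfl

lemma exists_half_le_birkhoffAverage_signObservable (b : Bool) (m : ℕ) :
    ∃ x, 1 / 2 ≤ birkhoffAverage ℝ (subshiftHomeo blockLanguage) (signObservable b)
      (blockLength m) x := by
  obtain ⟨s, N, h⟩ := factor_block_blockPeriodic b m
  obtain rfl : N = blockLength m := by rw [← length_block b m, ← h, length_window]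
  have hpos : (0 : ℝ) < blockLength m := mod_cast blockLength_pos m
  refine ⟨(subshiftHomeo blockLanguage ^ s) (periodicPoint m), ?_⟩
  rw [birkhoffAverage, birkhoffSum_signObservable, subshiftHomeo_zpow_apply, window_comp_add,
    zero_add, periodicPoint, h, smul_eq_mul, ← div_eq_inv_mul, le_div_iff₀ hpos]
  linarith [blockLength_le_imbalance_block b m]

lemma exists_ergodic_half_le_integral_signObservable (b : Bool) :
    ∃ μ : ProbabilityMeasure (subshift blockLanguage),
      Ergodic (subshiftHomeo blockLanguage) (μ : Measure (subshift blockLanguage)) ∧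
      1 / 2 ≤ ∫ x, signObservable b x ∂(μ : Measure (subshift blockLanguage)) := by
  have : CompactSpace (subshift blockLanguage) :=
    isCompact_iff_compactSpace.1 (isClosed_subshift blockLanguage).isCompact
  choose x hx using exists_half_le_birkhoffAverage_signObservable b
  exact exists_ergodic_le_integral (subshiftHomeo blockLanguage).continuous (signObservable b)
    tendsto_blockLength (fun m => (blockLength_pos m).ne') hx

/-- On the orbit of `periodicPoint n`, the shift by `blockLength n` negates the observable. -/
lemma integral_signObservable_eq_zero_of_ae_mem_orbit {μ : Measure (subshift blockLanguage)}
    (hμ : MeasurePreserving (subshiftHomeo blockLanguage) μ μ) {n : ℕ}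
    (h : ∀ᵐ x ∂μ, x ∈ orbit (subshiftHomeo blockLanguage) (periodicPoint n)) (b : Bool) :
    ∫ x, signObservable b x ∂μ = 0 := by
  have hneg : ∀ᵐ x ∂μ, signObservable b ((subshiftHomeo blockLanguage)^[blockLength n] x) =
      -signObservable b x := by
    filter_upwards [h]
    rintro _ ⟨k, rfl⟩
    simp only [signObservable, ContinuousMap.coe_mk, subshiftHomeo_iterate_apply,
      subshiftHomeo_zpow_apply, periodicPoint, ← letterSign_not_right]
    rw [add_right_comm, blockPeriodic_add_blockLength]
  have hinv := (hμ.iterate (blockLength n)).integral_comp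
    (by rw [iterate_eq_zpow]; exact (Homeomorph.measurableEmbedding _)) (signObservable b)
  rw [integral_congr_ae hneg, integral_neg] at hinv
  linarith

lemma measure_singleton_eq_zero_of_integral_signObservable_ne_zero
    {μ : Measure (subshift blockLanguage)} [IsFiniteMeasure μ]
    (hμ : Ergodic (subshiftHomeo blockLanguage) μ) {b : Bool}
    (hb : ∫ x, signObservable b x ∂μ ≠ 0) (x : subshift blockLanguage) : μ {x} = 0 := by
  by_contra hx
  obtain ⟨n, hn⟩ := isPeriodicallyApproximated_subshiftHomeo.exists_ae_mem_orbit hμ hx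
  exact hb (integral_signObservable_eq_zero_of_ae_mem_orbit hμ.toMeasurePreserving hn b)

end ChaoticAlmostMinimal

open ChaoticAlmostMinimal

/-- There exists a nonempty closed shift-invariant subset `X` of `{0,1}^ℤ`
such that the restriction of the shift to `X` is chaotic almost minimal, and there exist
two distinct shift-invariant ergodic Borel probability measures on `X`, each nonatomic. -/
theorem statement0 :
    ∃ (X : Set (ℤ → Bool)) (hinv : ∀ x, x ∈ X ↔ shiftHomeo Bool x ∈ X),
      X.Nonempty ∧ IsClosed X ∧
      IsCAMZ (restrictHomeo (shiftHomeo Bool) X hinv) ∧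
      ∃ μ ν : Measure X,
        IsProbabilityMeasure μ ∧ IsProbabilityMeasure ν ∧
        Ergodic (⇑(restrictHomeo (shiftHomeo Bool) X hinv)) μ ∧
        Ergodic (⇑(restrictHomeo (shiftHomeo Bool) X hinv)) ν ∧
        (∀ x : X, μ {x} = 0) ∧ (∀ x : X, ν {x} = 0) ∧ μ ≠ ν := by
  obtain ⟨μ, hμ, hμint⟩ := exists_ergodic_half_le_integral_signObservable true
  obtain ⟨ν, hν, hνint⟩ := exists_ergodic_half_le_integral_signObservable false
  have hμatom := measure_singleton_eq_zero_of_integral_signObservable_ne_zero hμ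
    (one_half_pos.trans_le hμint).ne'
  have hνatom := measure_singleton_eq_zero_of_integral_signObservable_ne_zero hν
    (one_half_pos.trans_le hνint).ne'
  have := uncountable_of_forall_measure_singleton_eq_zero hμatom
  refine ⟨subshift blockLanguage, mem_subshift_iff_shiftHomeo_mem, ⟨_, (periodicPoint 0).2⟩,
    isClosed_subshift _, isPeriodicallyApproximated_subshiftHomeo.isCAMZ,
    μ, ν, inferInstance, inferInstance, hμ, hν, hμatom, hνatom, fun hμν => ?_⟩
  have hsign : ∀ x, signObservable false x = -signObservable true x :=
    fun x => letterSign_not_left true (x.1 0)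
  simp only [← hμν, hsign, integral_neg] at hνint
  linarith
end

section
/- For every d ≥ 1 there exists a nonempty closed shift-invariant subset X of {0,1}^(ℤ^d) such that the ℤ^d-shift action restricted to X is chaotic almost minimal, and moreover there exist two distinct shift-invariant ergodic Borel probability measures on X, each of which is nonatomic. -/
/-!
Cut `ℤ^d` into a nested sequence of grids of cubic cells and define periodic configurations `w_m`
by substitution: `w_0 = 0`, `w_1 = 1`, and `w_{l+2}` is obtained by labelling the cells of level
`l` periodically by symbols `j ≤ l + 1`, a cell with symbol `j` being filled with `w_j`. Of two
adjacent cells with different symbols, one always has symbol `l + 1`. Let `X` be the closure of the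
set of all translates of the `w_m`. By compactness every `x ∈ X` admits, for each `l`, such a
labelling of the cells of level `l`. Either the symbol `l + 1` occurs, so that `x` contains a cell
of `w_{l+1}`, or the symbol is constant and `x` is a translate of `w_j` with `j ≤ l`. As a cell of
`w_{l+1}` with `l` large contains any given pattern of `X`, a closed invariant set that misses a
pattern consists of translates of finitely many `w_j`, each of which has a finite orbit.

All but a summable proportion of the cells of level `l` in `w_{l+2}` carry the symbol `l`. Hence,
for almost every `g` in `ℤ_2^d`, the translates of `w_{b+2k}` by the position of `g` in its cell of
level `b + 2k` converge as `k → ∞`. The limit map intertwines the odometer with the shift, so the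
image of the Haar measure is ergodic, and it is nonatomic because the limit points are aperiodic.
Most coordinates of the limit equal `w_b`, which is constant for `b = 0` and `b = 1`, so these two
values of `b` give different measures.
-/

open Set MeasureTheory

/-- The shift by `v ∈ ℤ^d` on `{0,1}^(ℤ^d)`. -/
def shiftZdHomeo (d : ℕ) (v : Fin d → ℤ) :
    ((Fin d → ℤ) → Bool) ≃ₜ ((Fin d → ℤ) → Bool) where
  toFun x := fun u => x (u + v)
  invFun x := fun u => x (u - v)
  left_inv x := funext fun u => by simp
  right_inv x := funext fun u => by simp
  continuous_toFun := continuous_pi fun u => continuous_apply (u + v)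
  continuous_invFun := continuous_pi fun u => continuous_apply (u - v)

namespace HierarchicalShift

/-! ### Scales and cells -/

/-- Two points of `ℤ^ι` are adjacent when they are at distance at most `1` for the sup norm. -/
def Adjacent {ι : Type*} (c c' : ι → ℤ) : Prop := ∀ i, |c i - c' i| ≤ 1

theorem eq_of_forall_adjacent_eq {ι α : Type*} [Finite ι] {f : (ι → ℤ) → α}
    (hf : ∀ c c', Adjacent c c' → f c = f c') (c c' : ι → ℤ) : f c = f c' := by
  have main : ∀ (n : ℕ) (c : ι → ℤ), (∀ i, |c i - c' i| ≤ n) → f c = f c' := by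
    intro n
    induction n with
    | zero => exact fun c hc => congrArg f (funext fun i => by simpa [sub_eq_zero] using hc i)
    | succ n ih =>
      intro c hc
      rw [← ih fun i => max (c i - 1) (min (c i + 1) (c' i))]
      · exact hf _ _ fun i => by rw [abs_le]; omega
      · intro i
        have := hc i
        rw [abs_le] at this ⊢
        push_cast at this
        omega
  obtain ⟨n, hn⟩ := (Set.finite_range fun i => (c i - c' i).natAbs).bddAbove
  refine main n c fun i => ?_
  rw [Int.abs_eq_natAbs]
  exact_mod_cast hn (Set.mem_range_self i)

theorem abs_ediv_sub_ediv_le_one {K a b : ℤ} (hK : 0 < K) (h : |a - b| ≤ 1) :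
    |a / K - b / K| ≤ 1 := by
  rw [abs_le] at h ⊢
  have le_succ {a b : ℤ} (h : a ≤ b + 1) : a / K ≤ b / K + 1 := by
    calc a / K ≤ (b + K) / K := Int.ediv_le_ediv hK (by omega)
      _ = b / K + 1 := by rw [Int.add_ediv_of_dvd_right dvd_rfl, Int.ediv_self hK.ne']
  have hab := le_succ (a := a) (b := b) (by omega)
  have hba := le_succ (a := b) (b := a) (by omega)
  omega

theorem emod_eq_zero_or_eq_sub_one_of_ediv_ne {K a b : ℤ} (hK : 0 < K) (h : |a - b| ≤ 1)
    (hne : a / K ≠ b / K) : a % K = 0 ∨ a % K = K - 1 := by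
  by_contra! hcon
  rw [abs_le] at h
  have hlo := Int.emod_nonneg a hK.ne'
  have hhi := Int.emod_lt_of_pos a hK
  have hdiv := Int.emod_add_mul_ediv a K
  refine hne ((Int.ediv_eq_iff_of_pos hK).2 ⟨?_, ?_⟩).symm <;> rw [mul_comm] <;> omega

/-- Exponent of `ratio d l`. The three terms compensate, in `haar_bad_le`, the number of coordinates
and the number of digits `2 * l + 3` excluded at level `l`, and leave a geometric series. -/
def ratioExp (d l : ℕ) : ℕ := d + 3 * l + 5

/-- Exponent of `side d l`. -/
def sideExp (d l : ℕ) : ℕ := ∑ k ∈ Finset.range l, ratioExp d k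

/-- The number of cells of level `l` along each edge of a cell of level `l + 1`. -/
def ratio (d l : ℕ) : ℤ := 2 ^ ratioExp d l

/-- The side length of the cells of level `l`. -/
def side (d l : ℕ) : ℤ := 2 ^ sideExp d l

theorem ratio_pos (d l : ℕ) : 0 < ratio d l := by unfold ratio; positivity

theorem side_pos (d l : ℕ) : 0 < side d l := by unfold side; positivity

theorem side_succ (d l : ℕ) : side d (l + 1) = side d l * ratio d l := by
  rw [side, sideExp, Finset.sum_range_succ, pow_add]; rfl

theorem lt_ratio (d l : ℕ) : 3 * (l : ℤ) + 5 < ratio d l := by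
  have h : ratioExp d l < 2 ^ ratioExp d l := Nat.lt_two_pow_self
  zify at h
  unfold ratio
  have : (ratioExp d l : ℤ) = d + 3 * l + 5 := by simp [ratioExp]
  omega

theorem sideExp_strictMono (d : ℕ) : StrictMono (sideExp d) :=
  strictMono_nat_of_lt_succ fun l => by
    rw [sideExp, sideExp, Finset.sum_range_succ]; unfold ratioExp; omega

theorem side_dvd (d : ℕ) {l m : ℕ} (h : l ≤ m) : side d l ∣ side d m :=
  pow_dvd_pow _ ((sideExp_strictMono d).monotone h)

theorem two_mul_side_le (d : ℕ) {l m : ℕ} (h : l < m) : 2 * side d l ≤ side d m := by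
  rw [side, side, ← pow_succ']
  exact pow_le_pow_right₀ one_le_two (sideExp_strictMono d h)

theorem tendsto_side_atTop (d : ℕ) : Filter.Tendsto (side d) Filter.atTop Filter.atTop :=
  (tendsto_pow_atTop_atTop_of_one_lt one_lt_two).comp (sideExp_strictMono d).tendsto_atTop

variable {d : ℕ}

theorem eventually_abs_lt_side (v : Fin d → ℤ) :
    ∀ᶠ l in Filter.atTop, ∀ i, |v i| < side d l :=
  Filter.eventually_all.2 fun i => (tendsto_side_atTop d).eventually_gt_atTop |v i|

/-- The coordinates of the cell of level `l` containing `z`; the cells of level `l` are the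
translates by `side d l • ℤ^d` of the cube `[0, side d l)^d`. -/
def cell (l : ℕ) (z : Fin d → ℤ) : Fin d → ℤ := fun i => z i / side d l

/-- The coordinates of the cell of level `l + 1` containing the cell `c` of level `l`. -/
def parent (l : ℕ) (c : Fin d → ℤ) : Fin d → ℤ := fun i => c i / ratio d l

theorem cell_eq_iff {l : ℕ} {z c : Fin d → ℤ} :
    cell l z = c ↔ ∀ i, side d l * c i ≤ z i ∧ z i < side d l * c i + side d l := by
  simp only [funext_iff, cell, Int.ediv_eq_iff_of_pos (side_pos d l), mul_comm]

theorem cell_eq_zero_iff {l : ℕ} {z : Fin d → ℤ} :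
    cell l z = 0 ↔ ∀ i, 0 ≤ z i ∧ z i < side d l := by
  simp [cell_eq_iff]

theorem cell_add_smul (l : ℕ) (z q : Fin d → ℤ) : cell l (z + side d l • q) = cell l z + q :=
  funext fun _ => Int.add_mul_ediv_left _ _ (side_pos d l).ne'

theorem parent_cell (l : ℕ) (z : Fin d → ℤ) : parent l (cell l z) = cell (l + 1) z :=
  funext fun i => by
    rw [parent, cell, cell, side_succ, Int.ediv_ediv_of_nonneg (side_pos d l).le]

theorem cell_eq_of_le {l m : ℕ} (h : l ≤ m) {z z' : Fin d → ℤ} (hz : cell l z = cell l z') :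
    cell m z = cell m z' := by
  induction m, h using Nat.le_induction with
  | base => exact hz
  | succ m _ ih => rw [← parent_cell, ← parent_cell, ih]

theorem Adjacent.symm {ι : Type*} {c c' : ι → ℤ} (h : Adjacent c c') : Adjacent c' c :=
  fun i => abs_sub_comm (c i) (c' i) ▸ h i

theorem Adjacent.parent {c c' : Fin d → ℤ} (h : Adjacent c c') (l : ℕ) :
    Adjacent (parent l c) (parent l c') :=
  fun i => abs_ediv_sub_ediv_le_one (ratio_pos d l) (h i)

theorem exists_mem_Icc_add_smul (l : ℕ) (v : Fin d → ℤ) :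
    ∃ w ∈ Set.Icc 0 (fun _ => side d l), ∃ q : Fin d → ℤ, v = w + side d l • q :=
  ⟨fun i => v i % side d l,
    ⟨fun _ => Int.emod_nonneg _ (side_pos d l).ne',
      fun _ => (Int.emod_lt_of_pos _ (side_pos d l)).le⟩,
    cell l v, funext fun i => (Int.emod_add_mul_ediv (v i) (side d l)).symm⟩

/-! ### The words -/

section Symbol

/-- The symbol of the cells of level `l` in the slab of first digit `r`. The separating slabs, with
`r` even and less than `2 * (l + 1)`, get `l + 1`. Between them the slab `r = 2 * j + 1` gets `j`
for each `j ≤ l`, and all the slabs beyond them get `l`. -/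
def slabSymbol (l : ℕ) (r : ℤ) : ℕ :=
  if r % 2 = 0 ∧ r < 2 * (l + 1) then l + 1 else min (r / 2).toNat l

theorem slabSymbol_le (l : ℕ) (r : ℤ) : slabSymbol l r ≤ l + 1 := by
  unfold slabSymbol; split_ifs <;> omega

theorem slabSymbol_odd {l j : ℕ} (hj : j ≤ l) : slabSymbol l (2 * j + 1) = j := by
  rw [slabSymbol, if_neg (by omega)]; omega

theorem slabSymbol_of_le {l : ℕ} {r : ℤ} (hr : 2 * (l + 1) ≤ r) : slabSymbol l r = l := by
  rw [slabSymbol, if_neg (by omega)]; omega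

theorem slabSymbol_of_abs_sub_le_one (l : ℕ) {r r' : ℤ} (h : |r - r'| ≤ 1) :
    slabSymbol l r = slabSymbol l r' ∨ slabSymbol l r = l + 1 ∨ slabSymbol l r' = l + 1 := by
  rw [abs_le] at h
  unfold slabSymbol
  split_ifs <;> omega

variable [NeZero d]

/-- The symbol of the cell `c` of level `l` in the substitution rule defining `word (l + 2)`. It
only depends on the position of `c` inside its parent, and the cells on the boundary of the parent
get the separating symbol `l + 1`. -/
def symbol (l : ℕ) (c : Fin d → ℤ) : ℕ :=
  if ∃ i, c i % ratio d l = 0 ∨ c i % ratio d l = ratio d l - 1 then l + 1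
  else slabSymbol l (c 0 % ratio d l)

theorem symbol_le (l : ℕ) (c : Fin d → ℤ) : symbol l c ≤ l + 1 := by
  unfold symbol; split_ifs; exacts [le_rfl, slabSymbol_le _ _]

theorem symbol_add_smul (l : ℕ) (c q : Fin d → ℤ) : symbol l (c + ratio d l • q) = symbol l c := by
  simp [symbol]

theorem symbol_of_boundary {l : ℕ} {c : Fin d → ℤ} (i : Fin d)
    (h : c i % ratio d l = 0 ∨ c i % ratio d l = ratio d l - 1) : symbol l c = l + 1 :=
  if_pos ⟨i, h⟩

theorem symbol_of_interior {l : ℕ} {c : Fin d → ℤ}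
    (h : ∀ i, 0 < c i % ratio d l ∧ c i % ratio d l < ratio d l - 1) :
    symbol l c = slabSymbol l (c 0 % ratio d l) :=
  if_neg fun ⟨i, hi⟩ => by have := h i; omega

theorem symbol_odd {l j : ℕ} (hj : j ≤ l) {c : Fin d → ℤ} (hc : c 0 = 2 * j + 1)
    (h : ∀ i ≠ 0, c i = 1) : symbol l c = j := by
  have hr := lt_ratio d l
  have hci (i : Fin d) : 0 < c i ∧ c i < ratio d l - 1 := by
    rcases eq_or_ne i 0 with rfl | hi
    · omega
    · have := h i hi; omega
  have hmod (i : Fin d) : c i % ratio d l = c i := by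
    have := hci i
    exact Int.emod_eq_of_lt (by omega) (by omega)
  rw [symbol_of_interior fun i => by rw [hmod]; exact hci i, hmod, hc, slabSymbol_odd hj]

theorem symbol_of_adjacent_of_parent_ne {l : ℕ} {c c' : Fin d → ℤ} (h : Adjacent c c')
    (hne : parent l c ≠ parent l c') : symbol l c = l + 1 := by
  obtain ⟨i, hi⟩ := Function.ne_iff.1 hne
  exact symbol_of_boundary i (emod_eq_zero_or_eq_sub_one_of_ediv_ne (ratio_pos d l) (h i) hi)

theorem symbol_of_adjacent (l : ℕ) {c c' : Fin d → ℤ} (h : Adjacent c c') :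
    symbol l c = symbol l c' ∨ symbol l c = l + 1 ∨ symbol l c' = l + 1 := by
  by_cases hq : parent l c = parent l c'
  · have hmod : c 0 % ratio d l - c' 0 % ratio d l = c 0 - c' 0 := by
      have hq0 : c 0 / ratio d l = c' 0 / ratio d l := congrFun hq 0
      rw [Int.emod_def, Int.emod_def, hq0]
      ring
    have hslab := slabSymbol_of_abs_sub_le_one l (hmod ▸ h 0)
    unfold symbol
    split_ifs <;> simp [hslab]
  · exact Or.inr (Or.inl (symbol_of_adjacent_of_parent_ne h hq))

end Symbol

section Word

variable [NeZero d]

/-- The periodic configurations generating the subshift: two constant ones, and `word (l + 2)`, in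
which every cell of level `l` with symbol `j` is filled with the restriction of `word j`. -/
def word : ℕ → (Fin d → ℤ) → Bool
  | 0, _ => false
  | 1, _ => true
  | l + 2, z => word (symbol l (cell l z)) z
termination_by m => m
decreasing_by
  have := symbol_le l (cell l z)
  omega

theorem word_zero (z : Fin d → ℤ) : word 0 z = false := by rw [word]

theorem word_one (z : Fin d → ℤ) : word 1 z = true := by rw [word]

theorem word_add_two (l : ℕ) (z : Fin d → ℤ) :
    word (l + 2) z = word (symbol l (cell l z)) z := by rw [word]

theorem word_add_smul {j l : ℕ} (hj : j ≤ l + 1) (z q : Fin d → ℤ) :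
    word j (z + side d l • q) = word j z := by
  induction j using Nat.strong_induction_on with
  | _ j ih =>
    match j, hj, ih with
    | 0, _, _ => rw [word_zero, word_zero]
    | 1, _, _ => rw [word_one, word_one]
    | k + 2, hj, ih =>
      obtain ⟨n, hn⟩ := side_dvd d (show k + 1 ≤ l by omega)
      have hside : side d l • q = side d k • ratio d k • n • q := by
        rw [hn, side_succ, mul_smul, mul_smul]
      have hsymbol := symbol_le k (cell k z)
      rw [word_add_two, word_add_two, hside, cell_add_smul, symbol_add_smul, ← hside]
      exact ih _ (by omega) (by omega)

theorem word_of_dvd_add_one (l : ℕ) {z : Fin d → ℤ} (i : Fin d) (h : side d l ∣ z i + 1) :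
    word (l + 1) z = true := by
  induction l with
  | zero => exact word_one z
  | succ l ih =>
    rw [word_add_two, symbol_of_boundary i (Or.inr _)]
    · exact ih ((side_dvd d l.le_succ).trans h)
    · obtain ⟨k, hk⟩ := h
      have hs := side_pos d l
      have hr := ratio_pos d l
      have hcell : cell l z i = ratio d l - 1 + ratio d l * (k - 1) := by
        rw [side_succ] at hk
        rw [cell, Int.ediv_eq_iff_of_pos hs]
        constructor <;> linarith
      rw [hcell, Int.add_mul_emod_self_left, Int.emod_eq_of_lt (by omega) (by omega)]

theorem eventually_exists_word_eq_on (j : ℕ) {J : Set (Fin d → ℤ)} (hJ : J.Finite) :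
    ∀ᶠ l in Filter.atTop, ∃ t : Fin d → ℤ, ∀ z ∈ J,
      cell l (z + t) = 0 ∧ word (l + 1) (z + t) = word j z := by
  obtain ⟨k, hJk, hjk⟩ : ∃ k, (∀ z ∈ J, ∀ i, |z i| < side d k) ∧ j ≤ k :=
    ((hJ.eventually_all.2 fun z _ => eventually_abs_lt_side z).and
      (Filter.eventually_ge_atTop j)).exists
  filter_upwards [Filter.eventually_ge_atTop (k + 2)] with l hl
  obtain ⟨n, rfl⟩ : ∃ n, l = n + 1 := ⟨l - 1, by omega⟩
  set c : Fin d → ℤ := fun i => if i = 0 then 2 * j + 1 else 1 with hc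
  refine ⟨side d k • 1 + side d n • c, fun z hz => ?_⟩
  have hcell : cell n (z + (side d k • 1 + side d n • c)) = c := by
    rw [← add_assoc, cell_add_smul, add_eq_right, cell_eq_zero_iff]
    intro i
    have hzi := abs_lt.1 (hJk z hz i)
    have hkn := two_mul_side_le d (show k < n by omega)
    simp only [Pi.add_apply, Pi.smul_apply, Pi.one_apply, smul_eq_mul, mul_one]
    omega
  constructor
  · rw [← parent_cell, hcell]
    funext i
    have hr := lt_ratio d n
    refine Int.ediv_eq_zero_of_lt ?_ ?_ <;> simp only [hc] <;> split_ifs <;> omega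
  · rw [word_add_two, hcell, symbol_odd (show j ≤ n by omega) (by simp [hc])
      (fun i hi => by simp [hc, hi]), ← add_assoc, word_add_smul (by omega),
      word_add_smul (by omega)]

/-- The block of `word (l + 1)` on the cell of level `l` at the origin occurs in `x`. -/
def ContainsBlock (x : (Fin d → ℤ) → Bool) (l : ℕ) : Prop :=
  ∃ v, ∀ z, cell l z = 0 → x (z + v) = word (l + 1) z

/- The first point lies on the upper face, in direction `i`, of a boundary cell of level `l`, whose
content is `true` there; the second one is in the cell `(1, …, 1)`, which is filled with `false`. -/
theorem exists_word_true_word_false {l : ℕ} {v : Fin d → ℤ} (hv : ∀ i, |v i| < side d l)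
    {i : Fin d} (hi : 0 < v i) :
    ∃ u : Fin d → ℤ, cell (l + 1) u = 0 ∧ cell (l + 1) (u + v) = 0 ∧
      word (l + 2) u = true ∧ word (l + 2) (u + v) = false := by
  set u : Fin d → ℤ := fun j => if j = i then side d l - 1 else side d l + max 0 (-v j) with hu
  have hui : u i = side d l - 1 := by simp [hu]
  have hs := side_pos d l
  have hss := two_mul_side_le d (Nat.lt_add_one l)
  have hrange (j : Fin d) : 0 ≤ u j ∧ u j < 2 * side d l ∧
      side d l ≤ u j + v j ∧ u j + v j < 2 * side d l := by
    have := abs_lt.1 (hv j)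
    rcases eq_or_ne j i with rfl | hj
    · omega
    · simp only [hu, if_neg hj]; omega
  have hcell : cell l (u + v) = 1 := cell_eq_iff.2 fun j => by
    have := hrange j
    simp only [Pi.add_apply, Pi.one_apply]
    omega
  have hsymbol : symbol l (cell l u) = l + 1 := symbol_of_boundary i <| Or.inl <| by
    rw [cell, hui, Int.ediv_eq_zero_of_lt (by omega) (by omega), Int.zero_emod]
  refine ⟨u, cell_eq_zero_iff.2 fun j => ?_, cell_eq_zero_iff.2 fun j => ?_, ?_, ?_⟩
  · have := hrange j; omega
  · have := hrange j; simp only [Pi.add_apply]; omega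
  · rw [word_add_two, hsymbol, word_of_dvd_add_one l i (by simp [hui])]
  · rw [word_add_two, hcell, symbol_odd (c := 1) l.zero_le (by simp) fun _ _ => rfl, word_zero]

theorem ContainsBlock.shift_ne_self {x : (Fin d → ℤ) → Bool} {l : ℕ}
    (hx : ContainsBlock x (l + 1)) {v : Fin d → ℤ} (hv : v ≠ 0) (hl : ∀ i, |v i| < side d l) :
    shiftZdHomeo d v x ≠ x := by
  intro hper
  obtain ⟨p, hp⟩ := hx
  have hxv (u : Fin d → ℤ) : x (u + v) = x u := congrFun hper u
  obtain ⟨i, hi⟩ := Function.ne_iff.1 hv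
  rcases lt_or_gt_of_ne hi with hi | hi
  · obtain ⟨u, hu, huv, htrue, hfalse⟩ :=
      exists_word_true_word_false (v := -v) (by simpa using hl) (Int.neg_pos.2 hi)
    have := hxv (u + -v + p)
    rw [add_right_comm, neg_add_cancel_right, hp _ hu, hp _ huv, htrue, hfalse] at this
    exact Bool.false_ne_true this.symm
  · obtain ⟨u, hu, huv, htrue, hfalse⟩ := exists_word_true_word_false hl hi
    have := hxv (u + p)
    rw [add_right_comm, hp _ hu, hp _ huv, htrue, hfalse] at this
    exact Bool.false_ne_true this

end Word

section Tilings

/-- The admissible labellings of the cells of level `l` by words: all labels are at most `l + 1`,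
and two adjacent cells with labels different from `l + 1` have the same label. -/
def tilings (d l : ℕ) : Set ((Fin d → ℤ) → ℕ) :=
  {s | (∀ c, s c ≤ l + 1) ∧ ∀ c c', Adjacent c c' → s c = s c' ∨ s c = l + 1 ∨ s c' = l + 1}

theorem isCompact_tilings (l : ℕ) : IsCompact (tilings d l) := by
  have hbox : IsCompact (Set.univ.pi fun _ : Fin d → ℤ => Set.Iic (l + 1)) :=
    isCompact_univ_pi fun _ => (Set.finite_Iic _).isCompact
  have hclosed : IsClosed (tilings d l) := by
    have hpair (c c' : Fin d → ℤ) :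
        IsClosed {s : (Fin d → ℤ) → ℕ | s c = s c' ∨ s c = l + 1 ∨ s c' = l + 1} :=
      (isClosed_eq (continuous_apply c) (continuous_apply c')).union <|
        (isClosed_eq (continuous_apply c) continuous_const).union <|
          isClosed_eq (continuous_apply c') continuous_const
    simp only [tilings, Set.ofPred_and, Set.ofPred_forall]
    exact (isClosed_iInter fun c => isClosed_le (continuous_apply c) continuous_const).inter <|
      isClosed_iInter fun c => isClosed_iInter fun c' => isClosed_iInter fun _ => hpair c c'
  exact hbox.of_isClosed_subset hclosed fun s hs c _ => hs.1 c

theorem tilings_comp_add_right {l : ℕ} {s : (Fin d → ℤ) → ℕ} (hs : s ∈ tilings d l)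
    (q : Fin d → ℤ) : (fun c => s (c + q)) ∈ tilings d l :=
  ⟨fun c => hs.1 (c + q), fun c c' h => hs.2 _ _ fun i => by
    simpa only [Pi.add_apply, add_sub_add_right_eq_sub] using h i⟩

variable [NeZero d]

/-- The configuration in which each cell `c` of level `l` is filled with the restriction of
`word (s c)`. -/
def fill (l : ℕ) (s : (Fin d → ℤ) → ℕ) : (Fin d → ℤ) → Bool := fun z => word (s (cell l z)) z

/-- The labelling of the cells of level `l` obtained from a labelling of the cells of level `l + 1`
by applying the substitution rule inside the cells with label `l + 2`. -/
def subdivide (l : ℕ) (s : (Fin d → ℤ) → ℕ) : (Fin d → ℤ) → ℕ := fun c =>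
  if s (parent l c) = l + 2 then symbol l c else s (parent l c)

theorem continuous_fill (l : ℕ) : Continuous (fill l : ((Fin d → ℤ) → ℕ) → _) :=
  continuous_pi fun z => (continuous_of_discreteTopology (f := fun n => word n z)).comp
    (continuous_apply (cell l z))

theorem subdivide_mem_tilings {l : ℕ} {s : (Fin d → ℤ) → ℕ} (hs : s ∈ tilings d (l + 1)) :
    subdivide l s ∈ tilings d l := by
  refine ⟨fun c => ?_, fun c c' h => ?_⟩
  · have := hs.1 (parent l c)
    unfold subdivide
    split_ifs
    exacts [symbol_le l c, by omega]
  · by_cases hq : parent l c = parent l c'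
    · unfold subdivide
      rw [hq]
      split_ifs
      exacts [symbol_of_adjacent l h, Or.inl rfl]
    · have hc := symbol_of_adjacent_of_parent_ne h hq
      have hc' := symbol_of_adjacent_of_parent_ne h.symm (Ne.symm hq)
      have := hs.2 _ _ (h.parent l)
      unfold subdivide
      split_ifs <;> omega

theorem fill_subdivide (l : ℕ) (s : (Fin d → ℤ) → ℕ) :
    fill l (subdivide l s) = fill (l + 1) s := by
  funext z
  unfold fill subdivide
  rw [parent_cell]
  split_ifs with h
  · rw [h, word_add_two]
  · rfl

theorem exists_mem_tilings_fill_eq_word (m l : ℕ) : ∃ s ∈ tilings d l, fill l s = word m := by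
  rcases le_total m l with hm | hm
  · exact ⟨fun _ => m, ⟨fun _ => hm.trans l.le_succ, fun _ _ _ => Or.inl rfl⟩, rfl⟩
  · induction hm using Nat.decreasingInduction with
    | self => exact ⟨fun _ => m, ⟨fun _ => m.le_succ, fun _ _ _ => Or.inl rfl⟩, rfl⟩
    | of_succ l _ ih =>
      obtain ⟨s, hs, hfill⟩ := ih
      exact ⟨subdivide l s, subdivide_mem_tilings hs, (fill_subdivide l s).trans hfill⟩

theorem shift_smul_fill {l : ℕ} {s : (Fin d → ℤ) → ℕ} (hs : s ∈ tilings d l) (q : Fin d → ℤ) :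
    shiftZdHomeo d (side d l • q) (fill l s) = fill l fun c => s (c + q) :=
  funext fun z => by
    change word (s (cell l (z + side d l • q))) (z + side d l • q) = word (s (cell l z + q)) z
    rw [cell_add_smul, word_add_smul (hs.1 _)]

theorem containsBlock_shift_fill {l : ℕ} {s : (Fin d → ℤ) → ℕ} (v : Fin d → ℤ) {c : Fin d → ℤ}
    (hc : s c = l + 1) : ContainsBlock (shiftZdHomeo d v (fill l s)) l := by
  refine ⟨side d l • c - v, fun z hz => ?_⟩
  change word (s (cell l (z + (side d l • c - v) + v))) (z + (side d l • c - v) + v) = _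
  rw [← add_sub_assoc, sub_add_cancel, cell_add_smul, hz, zero_add, hc, word_add_smul le_rfl]

end Tilings

/-! ### The subshift -/

section Subshift

theorem shift_zero (x : (Fin d → ℤ) → Bool) : shiftZdHomeo d 0 x = x :=
  funext fun u => congrArg x (add_zero u)

theorem shift_shift (v w : Fin d → ℤ) (x : (Fin d → ℤ) → Bool) :
    shiftZdHomeo d v (shiftZdHomeo d w x) = shiftZdHomeo d (v + w) x :=
  funext fun u => congrArg x (add_assoc u v w)

variable [NeZero d]

/-- The orbit of `word m` under the shift. -/
def wordOrbit (d m : ℕ) [NeZero d] : Set ((Fin d → ℤ) → Bool) :=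
  Set.range fun v => shiftZdHomeo d v (word m)

/-- The chaotic almost minimal subshift: the closure of the set of all translates of all words. -/
def subshift (d : ℕ) [NeZero d] : Set ((Fin d → ℤ) → Bool) := closure (⋃ m, wordOrbit d m)

theorem finite_wordOrbit (m : ℕ) : (wordOrbit d m).Finite := by
  refine ((Set.finite_Icc 0 fun _ => side d m).image
    fun w => shiftZdHomeo d w (word m)).subset ?_
  rintro _ ⟨v, rfl⟩
  obtain ⟨w, hw, q, rfl⟩ := exists_mem_Icc_add_smul m v
  refine ⟨w, hw, funext fun z => ?_⟩
  change word m (z + w) = word m (z + (w + side d m • q))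
  rw [← add_assoc, word_add_smul m.le_succ]

theorem exists_tiling_of_mem_subshift (l : ℕ) {x : (Fin d → ℤ) → Bool} (hx : x ∈ subshift d) :
    ∃ v, ∃ s ∈ tilings d l, shiftZdHomeo d v (fill l s) = x := by
  let Y : Set ((Fin d → ℤ) → Bool) :=
    ⋃ w ∈ Set.Icc (0 : Fin d → ℤ) fun _ => side d l, shiftZdHomeo d w '' (fill l '' tilings d l)
  have hY : IsClosed Y := ((Set.finite_Icc _ _).isCompact_biUnion fun w _ =>
    ((isCompact_tilings l).image (continuous_fill l)).image (shiftZdHomeo d w).continuous).isClosed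
  have hwords : (⋃ m, wordOrbit d m) ⊆ Y := by
    refine Set.iUnion_subset fun m => ?_
    rintro _ ⟨v, rfl⟩
    obtain ⟨w, hw, q, rfl⟩ := exists_mem_Icc_add_smul l v
    obtain ⟨s, hs, hfill⟩ := exists_mem_tilings_fill_eq_word (d := d) m l
    refine Set.mem_biUnion hw ⟨_, ⟨_, tilings_comp_add_right hs q, rfl⟩, ?_⟩
    rw [← shift_smul_fill hs, hfill, shift_shift]
  obtain ⟨v, -, _, ⟨s, hs, rfl⟩, hxv⟩ := Set.mem_iUnion₂.1 (closure_minimal hwords hY hx)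
  exact ⟨v, s, hs, hxv⟩

theorem containsBlock_or_mem_wordOrbit (l : ℕ) {x : (Fin d → ℤ) → Bool} (hx : x ∈ subshift d) :
    ContainsBlock x l ∨ ∃ j ≤ l, x ∈ wordOrbit d j := by
  obtain ⟨v, s, hs, rfl⟩ := exists_tiling_of_mem_subshift l hx
  by_cases hc : ∃ c, s c = l + 1
  · exact Or.inl (containsBlock_shift_fill v hc.choose_spec)
  · push Not at hc
    have hconst (c : Fin d → ℤ) : s c = s 0 := eq_of_forall_adjacent_eq
      (fun c c' h => (hs.2 c c' h).resolve_right (not_or_intro (hc c) (hc c'))) c 0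
    refine Or.inr ⟨s 0, Nat.le_of_lt_succ ((hs.1 0).lt_of_ne (hc 0)), v, ?_⟩
    exact congrArg _ (funext fun z => by rw [fill, hconst (cell l z)])

theorem shift_word_mem_subshift (v : Fin d → ℤ) (m : ℕ) :
    shiftZdHomeo d v (word m) ∈ subshift d :=
  subset_closure (Set.mem_iUnion.2 ⟨m, v, rfl⟩)

theorem word_mem_subshift (m : ℕ) : word m ∈ subshift d :=
  shift_zero (d := d) (word m) ▸ shift_word_mem_subshift 0 m

theorem mem_subshift_iff_shift_mem (v : Fin d → ℤ) (x : (Fin d → ℤ) → Bool) :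
    x ∈ subshift d ↔ shiftZdHomeo d v x ∈ subshift d := by
  have hword (v : Fin d → ℤ) (m : ℕ) {x} (hx : x ∈ wordOrbit d m) :
      shiftZdHomeo d v x ∈ wordOrbit d m := by
    obtain ⟨w, rfl⟩ := hx
    exact ⟨v + w, (shift_shift v w _).symm⟩
  have hmaps (v : Fin d → ℤ) {x} (hx : x ∈ subshift d) : shiftZdHomeo d v x ∈ subshift d :=
    map_mem_closure (shiftZdHomeo d v).continuous hx fun x hx => by
      obtain ⟨m, hm⟩ := Set.mem_iUnion.1 hx
      exact Set.mem_iUnion.2 ⟨m, hword v m hm⟩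
  refine ⟨hmaps v, fun h => ?_⟩
  simpa only [shift_shift, neg_add_cancel, shift_zero] using hmaps (-v) h

/-- The action of `ℤ^d` on the subshift. -/
def shift (v : Fin d → ℤ) : subshift d ≃ₜ subshift d :=
  restrictHomeo (shiftZdHomeo d v) (subshift d) (mem_subshift_iff_shift_mem v)

theorem coe_shift (v : Fin d → ℤ) (x : subshift d) : (shift v x : _) = shiftZdHomeo d v x := rfl

theorem containsBlock_word (l : ℕ) : ContainsBlock (word (l + 1) : (Fin d → ℤ) → Bool) l :=
  ⟨0, fun z _ => by rw [add_zero]⟩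

theorem eventually_forall_exists_shift_mem {U : Set (subshift d)} (hU : IsOpen U)
    (hne : U.Nonempty) :
    ∀ᶠ l in Filter.atTop, ∀ x : subshift d, ContainsBlock x.1 l → ∃ v, shift v x ∈ U := by
  obtain ⟨O, hO, rfl⟩ := isOpen_induced_iff.1 hU
  obtain ⟨y, hyO⟩ := hne
  obtain ⟨_, hO', hy⟩ := mem_closure_iff.1 y.2 O hO hyO
  obtain ⟨j, v, rfl⟩ := Set.mem_iUnion.1 hy
  obtain ⟨J, u, hu, hJ⟩ := isOpen_pi_iff.1 hO _ hO'
  have hfinite : ((· + v) '' (J : Set (Fin d → ℤ))).Finite := J.finite_toSet.image _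
  filter_upwards [eventually_exists_word_eq_on j hfinite] with l ⟨t, ht⟩ x ⟨p, hp⟩
  refine ⟨v + t + p, hJ fun z hz => ?_⟩
  obtain ⟨hcell, hword⟩ := ht _ (Set.mem_image_of_mem _ hz)
  change x.1 (z + (v + t + p)) ∈ u z
  rw [show z + (v + t + p) = z + v + t + p by abel, hp _ hcell, hword]
  exact (hu z hz).2

theorem shift_faithful {v : Fin d → ℤ} (h : (shift v : subshift d ≃ₜ subshift d) = 1) :
    v = 0 := by
  by_contra hv
  obtain ⟨l, hl⟩ := (eventually_abs_lt_side v).exists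
  refine (containsBlock_word (l + 1)).shift_ne_self hv hl ?_
  exact congrArg Subtype.val (DFunLike.congr_fun h ⟨word (l + 2), word_mem_subshift _⟩)

theorem shift_transitive {U V : Set (subshift d)} (hU : IsOpen U) (hV : IsOpen V)
    (hUne : U.Nonempty) (hVne : V.Nonempty) : ∃ v, (shift v '' U ∩ V).Nonempty := by
  obtain ⟨l, hlU, hlV⟩ := ((eventually_forall_exists_shift_mem hU hUne).and
    (eventually_forall_exists_shift_mem hV hVne)).exists
  let x : subshift d := ⟨word (l + 1), word_mem_subshift _⟩
  obtain ⟨u, hu⟩ := hlU x (containsBlock_word l)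
  obtain ⟨v, hv⟩ := hlV x (containsBlock_word l)
  refine ⟨v - u, shift v x, ⟨_, hu, Subtype.ext ?_⟩, hv⟩
  simp only [coe_shift, shift_shift, sub_add_cancel]

theorem dense_setOf_finite_orbit :
    Dense {x : subshift d | (Set.range fun v => shift v x).Finite} := by
  refine Dense.mono (s₁ := Subtype.val ⁻¹' ⋃ m, wordOrbit d m) ?_ ?_
  · rintro x hx
    obtain ⟨m, w, hw⟩ := Set.mem_iUnion.1 hx
    refine Set.Finite.of_finite_image ((finite_wordOrbit m).subset ?_)
      Subtype.val_injective.injOn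
    rintro _ ⟨_, ⟨v, rfl⟩, rfl⟩
    exact ⟨v + w, by rw [coe_shift, ← hw]; exact (shift_shift v w _).symm⟩
  · rw [Subtype.dense_iff, Subtype.image_preimage_coe, Set.inter_eq_right.2]
    exacts [subset_rfl, subset_closure]

theorem finite_of_isClosed_of_invariant {A : Set (subshift d)} (hA : IsClosed A)
    (hinv : ∀ v, shift v '' A = A) (hne : A ≠ Set.univ) : A.Finite := by
  obtain ⟨l, hl⟩ := (eventually_forall_exists_shift_mem hA.isOpen_compl
    (Set.nonempty_compl.2 hne)).exists
  have hsub : Subtype.val '' A ⊆ ⋃ j ∈ Set.Iic l, wordOrbit d j := by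
    rintro _ ⟨x, hx, rfl⟩
    have hblock : ¬ContainsBlock x.1 l := fun hblock => by
      obtain ⟨v, hv⟩ := hl x hblock
      exact hv (hinv v ▸ Set.mem_image_of_mem _ hx)
    obtain ⟨j, hj, hxj⟩ := (containsBlock_or_mem_wordOrbit l x.2).resolve_left hblock
    exact Set.mem_biUnion hj hxj
  exact (((Set.finite_Iic l).biUnion fun j _ => finite_wordOrbit j).subset hsub).of_finite_image
    Subtype.val_injective.injOn

end Subshift

/-! ### Measure-preserving maps -/

section MeasurePreserving

variable {α β : Type*} [MeasurableSpace α] [MeasurableSpace β] {μ : Measure α}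

theorem card_mul_measure_le_measure_univ {ι : Type*} [Fintype ι] {T : ι → α → α}
    (hT : ∀ k, MeasurePreserving (T k) μ μ) {A : Set α} (hA : MeasurableSet A)
    (hdisj : Pairwise (Function.onFun Disjoint fun k => T k ⁻¹' A)) :
    Fintype.card ι * μ A ≤ μ Set.univ :=
  calc Fintype.card ι * μ A = ∑' k, μ (T k ⁻¹' A) := by
        simp [(hT _).measure_preimage hA.nullMeasurableSet, tsum_fintype]
    _ ≤ μ (⋃ k, T k ⁻¹' A) :=
        tsum_meas_le_meas_iUnion_of_disjoint μ (fun k => (hT k).measurable hA) hdisj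
    _ ≤ μ Set.univ := measure_mono (Set.subset_univ _)

theorem measurePreserving_map_of_ae_semiconj {S : α → α} {T : β → β} {f : α → β}
    (hS : MeasurePreserving S μ μ) (hT : Measurable T) (hf : Measurable f)
    (h : f ∘ S =ᵐ[μ] T ∘ f) : MeasurePreserving T (μ.map f) (μ.map f) :=
  ⟨hT, calc (μ.map f).map T = μ.map (T ∘ f) := Measure.map_map hT hf
    _ = μ.map (f ∘ S) := Measure.map_congr h.symm
    _ = (μ.map S).map f := (Measure.map_map hf hS.measurable).symm
    _ = μ.map f := by rw [hS.map_eq]⟩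

theorem measure_singleton_eq_zero_of_iterate_ne [MeasurableSingletonClass α] [IsFiniteMeasure μ]
    {T : α → α} (hT : MeasurePreserving T μ μ) {x : α} (hx : ∀ n ≠ 0, T^[n] x ≠ x) :
    μ {x} = 0 := by
  by_contra hne
  obtain ⟨_, rfl, n, hn, hper⟩ :=
    hT.exists_mem_iterate_mem (measurableSet_singleton x).nullMeasurableSet hne
  exact hx n hn hper

end MeasurePreserving

/-! ### The 2-adic odometer -/

section Residue

variable {p : ℕ} [Fact p.Prime]

noncomputable instance : MeasurableSpace ℤ_[p] := borel _

instance : BorelSpace ℤ_[p] := ⟨rfl⟩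

/-- The representative in `[0, p ^ n)` of a `p`-adic integer modulo `p ^ n`. -/
noncomputable def residue (n : ℕ) (x : ℤ_[p]) : ℤ := (PadicInt.toZModPow n x).val

theorem residue_nonneg (n : ℕ) (x : ℤ_[p]) : 0 ≤ residue n x := Int.natCast_nonneg _

theorem residue_lt (n : ℕ) (x : ℤ_[p]) : residue n x < p ^ n := by
  have : NeZero (p ^ n) := ⟨(pow_pos (Fact.out : p.Prime).pos n).ne'⟩
  have hlt := ZMod.val_lt (PadicInt.toZModPow n x)
  unfold residue
  exact_mod_cast hlt

theorem intCast_residue (n : ℕ) (x : ℤ_[p]) :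
    (residue n x : ZMod (p ^ n)) = PadicInt.toZModPow n x := by
  have : NeZero (p ^ n) := ⟨(pow_pos (Fact.out : p.Prime).pos n).ne'⟩
  rw [residue, Int.cast_natCast, ZMod.natCast_zmod_val]

theorem residue_modEq_residue {m n : ℕ} (h : m ≤ n) (x : ℤ_[p]) :
    residue m x ≡ residue n x [ZMOD p ^ m] := by
  have hcast : ((residue m x : ℤ) : ZMod (p ^ m)) = (residue n x : ℤ) := by
    rw [intCast_residue, ← PadicInt.cast_toZModPow m n h, ← intCast_residue,
      ZMod.cast_intCast (pow_dvd_pow p h)]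
  exact_mod_cast (ZMod.intCast_eq_intCast_iff _ _ _).1 hcast

theorem residue_add_intCast (n : ℕ) (x : ℤ_[p]) (a : ℤ) :
    residue n x + a ≡ residue n (x + (a : ℤ_[p])) [ZMOD p ^ n] := by
  have hcast : ((residue n x + a : ℤ) : ZMod (p ^ n)) = (residue n (x + (a : ℤ_[p])) : ℤ) := by
    rw [Int.cast_add, intCast_residue, intCast_residue, map_add, map_intCast]
  exact_mod_cast (ZMod.intCast_eq_intCast_iff _ _ _).1 hcast

theorem isLocallyConstant_residue (n : ℕ) : IsLocallyConstant (residue n : ℤ_[p] → ℤ) := by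
  refine (IsLocallyConstant.iff_eventually_eq _).2 fun x => ?_
  have hradius : (0 : ℝ) < p ^ (-n : ℤ) := zpow_pos (by exact_mod_cast (Fact.out : p.Prime).pos) _
  filter_upwards [Metric.closedBall_mem_nhds x hradius] with y hy
  have hker : y - x ∈ RingHom.ker (PadicInt.toZModPow n) := by
    rw [PadicInt.ker_toZModPow, ← PadicInt.norm_le_pow_iff_mem_span_pow, ← dist_eq_norm]
    exact hy
  rw [residue, residue, (RingHom.sub_mem_ker_iff _).1 hker]

end Residue

section Odometer

/-- The Haar probability measure on `ℤ_2^d`. -/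
noncomputable def haar (d : ℕ) : Measure (Fin d → ℤ_[2]) := Measure.addHaarMeasure ⊤

instance (d : ℕ) : (haar d).IsAddHaarMeasure := by unfold haar; infer_instance

instance (d : ℕ) : (haar d).InnerRegular := by unfold haar; infer_instance

instance (d : ℕ) : IsProbabilityMeasure (haar d) := ⟨Measure.addHaarMeasure_self⟩

/-- The dense inclusion of `ℤ^d` in `ℤ_2^d`. -/
noncomputable def embed (v : Fin d → ℤ) : Fin d → ℤ_[2] := fun i => (v i : ℤ_[2])

theorem denseRange_embed : DenseRange (embed : (Fin d → ℤ) → Fin d → ℤ_[2]) :=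
  DenseRange.piMap fun _ => PadicInt.denseRange_intCast

/-- The representative of `g` modulo `side d l` lying in the cell of level `l` at the origin. -/
noncomputable def position (l : ℕ) (g : Fin d → ℤ_[2]) : Fin d → ℤ :=
  fun i => residue (sideExp d l) (g i)

theorem measurable_position (l : ℕ) : Measurable (position l : (Fin d → ℤ_[2]) → _) :=
  measurable_pi_lambda _ fun i =>
    (isLocallyConstant_residue _).continuous.measurable.comp (measurable_pi_apply i)

theorem cell_position (l : ℕ) (g : Fin d → ℤ_[2]) : cell l (position l g) = 0 :=
  cell_eq_zero_iff.2 fun _ => ⟨residue_nonneg _ _, by exact_mod_cast residue_lt _ _⟩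

theorem exists_eq_add_smul_of_modEq {l : ℕ} {v w : Fin d → ℤ}
    (h : ∀ i, v i ≡ w i [ZMOD side d l]) : ∃ q, w = v + side d l • q := by
  choose q hq using fun i => (Int.modEq_iff_add_fac.1 (h i))
  exact ⟨q, funext hq⟩

theorem exists_position_eq_add_smul {l m : ℕ} (h : l ≤ m) (g : Fin d → ℤ_[2]) :
    ∃ q, position m g = position l g + side d l • q :=
  exists_eq_add_smul_of_modEq fun i => by
    exact_mod_cast residue_modEq_residue ((sideExp_strictMono d).monotone h) (g i)

theorem exists_position_add_embed (l : ℕ) (g : Fin d → ℤ_[2]) (v : Fin d → ℤ) :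
    ∃ q, position l (g + embed v) = position l g + v + side d l • q :=
  exists_eq_add_smul_of_modEq fun i => by
    exact_mod_cast residue_add_intCast (sideExp d l) (g i) (v i)

theorem cell_add_position_of_le {l m : ℕ} (h : l ≤ m) {g : Fin d → ℤ_[2]} {z : Fin d → ℤ}
    (hz : cell l (z + position l g) = 0) : cell m (z + position m g) = 0 := by
  obtain ⟨q, hq⟩ := exists_position_eq_add_smul h g
  rw [← cell_position m g]
  refine cell_eq_of_le h ?_
  rw [hq, ← add_assoc, cell_add_smul, cell_add_smul, hz, cell_position]

/-- The digits of level `l` of the coordinates of `g` in the mixed-radix expansion with radices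
`ratio d k`, `k ≥ 0`. -/
noncomputable def digit (l : ℕ) (g : Fin d → ℤ_[2]) : Fin d → ℤ := cell l (position (l + 1) g)

theorem measurable_digit (l : ℕ) : Measurable (digit l : (Fin d → ℤ_[2]) → _) :=
  (measurable_of_countable (cell l)).comp (measurable_position (l + 1))

theorem position_succ (l : ℕ) (g : Fin d → ℤ_[2]) :
    position (l + 1) g = position l g + side d l • digit l g := by
  obtain ⟨q, hq⟩ := exists_position_eq_add_smul l.le_succ g
  rw [digit, hq, cell_add_smul, cell_position, zero_add]

theorem digit_add_embed_smul (l : ℕ) (g : Fin d → ℤ_[2]) (v : Fin d → ℤ) (i : Fin d) :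
    digit l (g + embed (side d l • v)) i ≡ digit l g i + v i [ZMOD ratio d l] := by
  obtain ⟨q, hq⟩ := exists_position_add_embed (l + 1) g (side d l • v)
  rw [digit, hq, side_succ, mul_smul, cell_add_smul, cell_add_smul]
  exact Int.add_mul_emod_self_left _ _ _

/- The translations by the multiples of `side d l` permute the values of the digit transitively. -/
theorem haar_digit_emod_eq_le (l : ℕ) (i : Fin d) (t : ℤ) :
    haar d {g | digit l g i % ratio d l = t} ≤ (2 ^ ratioExp d l)⁻¹ := by
  set A : Set (Fin d → ℤ_[2]) := {g | digit l g i % ratio d l = t}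
  have hAm : MeasurableSet A := by
    have : Measurable fun g : Fin d → ℤ_[2] => digit l g i % ratio d l :=
      (measurable_of_countable (· % ratio d l)).comp
        ((measurable_pi_apply i).comp (measurable_digit l))
    exact this (measurableSet_singleton t)
  have hdisj : Pairwise (Function.onFun Disjoint fun k : Fin (2 ^ ratioExp d l) =>
      (· + embed (side d l • fun _ => (k : ℤ))) ⁻¹' A) := by
    intro k k' hne
    refine Set.disjoint_left.2 fun g hg hg' => hne (Fin.ext ?_)
    have hmod : digit l g i + k ≡ digit l g i + k' [ZMOD (2 ^ ratioExp d l : ℕ)] := by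
      push_cast
      exact (digit_add_embed_smul l g _ i).symm.trans
        ((hg.trans hg'.symm).trans (digit_add_embed_smul l g _ i))
    exact (Int.natCast_modEq_iff.1 hmod.add_left_cancel').eq_of_lt_of_lt k.2 k'.2
  have hcard := card_mul_measure_le_measure_univ
    (fun k : Fin (2 ^ ratioExp d l) =>
      measurePreserving_add_right (haar d) (embed (side d l • fun _ => (k : ℤ)))) hAm hdisj
  rw [Fintype.card_fin, measure_univ] at hcard
  rw [ENNReal.le_inv_iff_mul_le, mul_comm]
  exact_mod_cast hcard

theorem ae_forall_add_embed {p : (Fin d → ℤ_[2]) → Prop} (hp : ∀ᵐ g ∂haar d, p g) :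
    ∀ᵐ g ∂haar d, ∀ v, p (g + embed v) :=
  ae_all_iff.2 fun v =>
    (measurePreserving_add_right (haar d) (embed v)).quasiMeasurePreserving.ae hp

variable [NeZero d]

/-- The set of the `g` whose digit of level `l` is a cell that does not carry the prevailing symbol
`l`. -/
def bad (d l : ℕ) [NeZero d] : Set (Fin d → ℤ_[2]) := {g | symbol l (digit l g) ≠ l}

theorem bad_subset (l : ℕ) : bad d l ⊆
    ⋃ i, ⋃ t ∈ insert (ratio d l - 1) (Finset.Ico 0 (2 * l + 2 : ℤ)),
      {g | digit l g i % ratio d l = t} := by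
  intro g hg
  by_contra! hcon
  simp only [Set.mem_iUnion, not_exists, Finset.mem_insert, Finset.mem_Ico] at hcon
  have hr := ratio_pos d l
  have hdigit (i : Fin d) :
      2 * l + 2 ≤ digit l g i % ratio d l ∧ digit l g i % ratio d l < ratio d l - 1 := by
    have hlo := Int.emod_nonneg (digit l g i) hr.ne'
    have hhi := Int.emod_lt_of_pos (digit l g i) hr
    by_contra hi
    exact hcon i _ (by omega) rfl
  refine hg ?_
  rw [symbol_of_interior fun i => by have := hdigit i; omega,
    slabSymbol_of_le (by have := hdigit 0; omega)]

theorem haar_bad_le (l : ℕ) : haar d (bad d l) ≤ 2⁻¹ ^ (l + 3) := by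
  set S : Finset ℤ := insert (ratio d l - 1) (Finset.Ico 0 (2 * l + 2 : ℤ)) with hS
  have hcard : S.card ≤ 2 ^ (2 * l + 2) := by
    have hlt : 2 * l + 2 < 2 ^ (2 * l + 2) := Nat.lt_two_pow_self
    have := Finset.card_insert_le (ratio d l - 1) (Finset.Ico 0 (2 * l + 2 : ℤ))
    rw [Int.card_Ico, ← hS] at this
    omega
  calc haar d (bad d l) ≤ ∑ i, ∑ t ∈ S, haar d {g | digit l g i % ratio d l = t} :=
        (measure_mono (bad_subset l)).trans <| (measure_iUnion_fintype_le _ _).trans <|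
          Finset.sum_le_sum fun _ _ => measure_biUnion_finset_le _ _
    _ ≤ ∑ _i : Fin d, ∑ _t ∈ S, (2 ^ ratioExp d l)⁻¹ := by
        gcongr; exact haar_digit_emod_eq_le _ _ _
    _ = d * S.card * (2 ^ ratioExp d l)⁻¹ := by simp [mul_assoc]
    _ ≤ 2 ^ d * 2 ^ (2 * l + 2) * (2 ^ ratioExp d l)⁻¹ := by
        gcongr
        · exact_mod_cast Nat.lt_two_pow_self.le
        · exact_mod_cast hcard
    _ = 2⁻¹ ^ (l + 3) := by
        have hexp : ratioExp d l = d + (2 * l + 2) + (l + 3) := by unfold ratioExp; ring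
        rw [hexp, ← pow_add, pow_add 2 _ (l + 3), ENNReal.mul_inv (by simp) (by simp), ← mul_assoc,
          ENNReal.mul_inv_cancel (by simp) (by simp), one_mul, ENNReal.inv_pow]

theorem tsum_haar_bad_le (b : ℕ) : ∑' k, haar d (bad d (b + 2 * k)) ≤ 4⁻¹ :=
  calc ∑' k, haar d (bad d (b + 2 * k)) ≤ ∑' k, (2⁻¹ : ENNReal) ^ (k + 3) :=
        ENNReal.tsum_le_tsum fun k => (haar_bad_le _).trans <|
          pow_le_pow_right_of_le_one' (by simp) (by omega)
    _ = 2 * 2⁻¹ ^ 3 := by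
        simp_rw [pow_add, ENNReal.tsum_mul_right, ENNReal.tsum_geometric, ENNReal.one_sub_inv_two,
          inv_inv]
    _ = 4⁻¹ := by
        rw [pow_succ', ← mul_assoc, ENNReal.mul_inv_cancel (by simp) (by simp), one_mul,
          ← ENNReal.inv_pow]
        norm_num

theorem ae_eventually_notMem_bad (b : ℕ) :
    ∀ᵐ g ∂haar d, ∀ᶠ k : ℕ in Filter.atTop, g ∉ bad d (b + 2 * k) :=
  ae_eventually_notMem (ne_top_of_le_ne_top (by simp) (tsum_haar_bad_le b))

end Odometer

/-! ### The measures -/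

section LimitMeasure

variable [NeZero d]

/-- The translate of `word m` by the position of `g` in its cell of level `m`. -/
noncomputable def approx (m : ℕ) (g : Fin d → ℤ_[2]) : subshift d :=
  ⟨shiftZdHomeo d (position m g) (word m), shift_word_mem_subshift _ m⟩

theorem measurable_approx (m : ℕ) : Measurable (approx m : (Fin d → ℤ_[2]) → subshift d) :=
  (measurable_of_countable fun v => (⟨shiftZdHomeo d v (word m), shift_word_mem_subshift v m⟩ :
    subshift d)).comp (measurable_position m)

theorem approx_add_embed (m : ℕ) (g : Fin d → ℤ_[2]) (v : Fin d → ℤ) :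
    approx m (g + embed v) = shift v (approx m g) := by
  refine Subtype.ext (funext fun z => ?_)
  obtain ⟨q, hq⟩ := exists_position_add_embed m g v
  calc word m (z + position m (g + embed v))
      = word m (z + v + position m g + side d m • q) := by rw [hq]; congr 1; abel
    _ = word m (z + v + position m g) := word_add_smul m.le_succ _ _

theorem approx_add_two_apply {m : ℕ} {g : Fin d → ℤ_[2]} (hg : g ∉ bad d m) {z : Fin d → ℤ}
    (hz : cell m (z + position m g) = 0) : (approx (m + 2) g).1 z = (approx m g).1 z := by
  obtain ⟨q, hq⟩ := exists_position_eq_add_smul (m + 1).le_succ g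
  have hsymbol : symbol m (digit m g) = m := not_not.1 hg
  calc word (m + 2) (z + position (m + 2) g)
      = word (m + 2) (z + position (m + 1) g) := by rw [hq, ← add_assoc, word_add_smul le_rfl]
    _ = word m (z + position (m + 1) g) := by
        rw [word_add_two, position_succ, ← add_assoc, cell_add_smul, hz, zero_add, hsymbol]
    _ = word m (z + position m g) := by
        rw [position_succ, ← add_assoc, word_add_smul m.le_succ]

theorem approx_apply_eq_of_le {b n k : ℕ} (hk : n ≤ k) {g : Fin d → ℤ_[2]}
    (hg : ∀ k ≥ n, g ∉ bad d (b + 2 * k)) {z : Fin d → ℤ}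
    (hz : cell (b + 2 * n) (z + position (b + 2 * n) g) = 0) :
    (approx (b + 2 * k) g).1 z = (approx (b + 2 * n) g).1 z := by
  induction k, hk using Nat.le_induction with
  | base => rfl
  | succ k hk ih =>
    rw [← ih]
    exact approx_add_two_apply (hg k hk) (cell_add_position_of_le (by omega) hz)

theorem ae_exists_tendsto_approx (b : ℕ) :
    ∀ᵐ g ∂haar d, ∃ x, Filter.Tendsto (fun k => approx (b + 2 * k) g) Filter.atTop (nhds x) := by
  have horigin : ∀ᵐ g ∂haar d, ∃ a, ∀ᶠ k in Filter.atTop, (approx (b + 2 * k) g).1 0 = a := by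
    filter_upwards [ae_eventually_notMem_bad b] with g hg
    obtain ⟨n, hn⟩ := Filter.eventually_atTop.1 hg
    refine ⟨_, Filter.eventually_atTop.2 ⟨n, fun k hk => approx_apply_eq_of_le hk hn ?_⟩⟩
    rw [zero_add, cell_position]
  filter_upwards [ae_forall_add_embed horigin] with g hg
  choose a ha using hg
  have hlim : Filter.Tendsto (fun k => (approx (b + 2 * k) g).1) Filter.atTop (nhds a) := by
    refine tendsto_pi_nhds.2 fun v => tendsto_const_nhds.congr' ?_
    filter_upwards [ha v] with k hk
    rw [← hk, approx_add_embed, coe_shift]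
    exact congrArg (approx (b + 2 * k) g).1 (zero_add v)
  exact ⟨⟨a, isClosed_closure.mem_of_tendsto hlim (.of_forall fun k => (approx _ g).2)⟩,
    tendsto_subtype_rng.2 hlim⟩

theorem exists_measurable_limit (b : ℕ) : ∃ f : (Fin d → ℤ_[2]) → subshift d, Measurable f ∧
    ∀ᵐ g ∂haar d, Filter.Tendsto (fun k => approx (b + 2 * k) g) Filter.atTop (nhds (f g)) :=
  measurable_limit_of_tendsto_metrizable_ae (fun _ => (measurable_approx _).aemeasurable)
    (ae_exists_tendsto_approx b)

/-- The almost everywhere limit of `approx (b + 2 * k)` as `k` tends to infinity. -/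
noncomputable def limitPoint (b : ℕ) : (Fin d → ℤ_[2]) → subshift d :=
  (exists_measurable_limit b).choose

theorem measurable_limitPoint (b : ℕ) :
    Measurable (limitPoint b : (Fin d → ℤ_[2]) → subshift d) :=
  (exists_measurable_limit b).choose_spec.1

theorem ae_tendsto_limitPoint (b : ℕ) : ∀ᵐ g ∂haar d,
    Filter.Tendsto (fun k => approx (b + 2 * k) g) Filter.atTop (nhds (limitPoint b g)) :=
  (exists_measurable_limit b).choose_spec.2

theorem ae_limitPoint_add_embed (b : ℕ) (v : Fin d → ℤ) :
    limitPoint b ∘ (· + embed v) =ᵐ[haar d] shift v ∘ limitPoint b := by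
  filter_upwards [ae_tendsto_limitPoint b, ae_forall_add_embed (ae_tendsto_limitPoint b)]
    with g hg hgv
  have hv := hgv v
  simp only [approx_add_embed] at hv
  exact tendsto_nhds_unique hv (((shift v).continuous.tendsto _).comp hg)

theorem apply_eq_of_tendsto_approx {b n : ℕ} {g : Fin d → ℤ_[2]} {x : subshift d}
    (hx : Filter.Tendsto (fun k => approx (b + 2 * k) g) Filter.atTop (nhds x))
    (hg : ∀ k ≥ n, g ∉ bad d (b + 2 * k)) {z : Fin d → ℤ}
    (hz : cell (b + 2 * n) (z + position (b + 2 * n) g) = 0) :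
    x.1 z = word (b + 2 * n) (z + position (b + 2 * n) g) := by
  have hxz := tendsto_pi_nhds.1 (tendsto_subtype_rng.1 hx) z
  refine tendsto_nhds_unique hxz (tendsto_const_nhds.congr' ?_)
  filter_upwards [Filter.eventually_ge_atTop n] with k hk
  exact (approx_apply_eq_of_le hk hg hz).symm

theorem containsBlock_of_tendsto_approx {b n l : ℕ} (hl : l + 1 = b + 2 * n)
    {g : Fin d → ℤ_[2]} {x : subshift d}
    (hx : Filter.Tendsto (fun k => approx (b + 2 * k) g) Filter.atTop (nhds x))
    (hg : ∀ k ≥ n, g ∉ bad d (b + 2 * k)) : ContainsBlock x.1 l := by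
  refine ⟨-position (b + 2 * n) g, fun z hz => ?_⟩
  have hcell : cell (l + 1) z = 0 := by
    rw [← parent_cell, hz]
    exact funext fun _ => Int.zero_ediv _
  rw [apply_eq_of_tendsto_approx hx hg] <;> rw [neg_add_cancel_right, ← hl]
  exact hcell

theorem ae_shift_limitPoint_ne (b : ℕ) :
    ∀ᵐ g ∂haar d, ∀ v : Fin d → ℤ, v ≠ 0 → shift v (limitPoint b g) ≠ limitPoint b g := by
  filter_upwards [ae_tendsto_limitPoint b, ae_eventually_notMem_bad b] with g hx hg v hv hper
  obtain ⟨n, hn⟩ := Filter.eventually_atTop.1 hg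
  obtain ⟨l, hl⟩ := Filter.eventually_atTop.1 (eventually_abs_lt_side v)
  have hblock : ContainsBlock (limitPoint b g).1 (b + 2 * (n + l) + 1) :=
    containsBlock_of_tendsto_approx (n := n + l + 1) (by ring) hx fun k hk => hn k (by omega)
  exact hblock.shift_ne_self hv (hl _ (by omega)) (congrArg Subtype.val hper)

/-- The image of the Haar measure under `limitPoint b`. -/
noncomputable def limitMeasure (d b : ℕ) [NeZero d] : Measure (subshift d) :=
  (haar d).map (limitPoint b)

instance (b : ℕ) : IsProbabilityMeasure (limitMeasure d b) :=
  Measure.isProbabilityMeasure_map (measurable_limitPoint b).aemeasurable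

theorem measurePreserving_shift (b : ℕ) (v : Fin d → ℤ) :
    MeasurePreserving (shift v) (limitMeasure d b) (limitMeasure d b) :=
  measurePreserving_map_of_ae_semiconj (measurePreserving_add_right (haar d) (embed v))
    (shift v).continuous.measurable (measurable_limitPoint b) (ae_limitPoint_add_embed b v)

theorem limitMeasure_eq_zero_or_one (b : ℕ) {B : Set (subshift d)} (hB : MeasurableSet B)
    (hinv : ∀ v, shift v ⁻¹' B = B) : limitMeasure d b B = 0 ∨ limitMeasure d b B = 1 := by
  have hdense : Dense {a : Fin d → ℤ_[2] |
      (fun g => a +ᵥ g) ⁻¹' (limitPoint b ⁻¹' B) =ᵐ[haar d] limitPoint b ⁻¹' B} := by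
    refine denseRange_embed.mono ?_
    rintro _ ⟨v, rfl⟩
    filter_upwards [ae_limitPoint_add_embed b v] with g hg
    rw [Function.comp_apply, add_comm] at hg
    refine propext (?_ : limitPoint b (embed v + g) ∈ B ↔ limitPoint b g ∈ B)
    rw [hg, Function.comp_apply, ← Set.mem_preimage, hinv v]
  have hconst := aeconst_of_dense_setOfPred_preimage_vadd_ae
    (measurable_limitPoint b hB).nullMeasurableSet hdense
  rw [limitMeasure, Measure.map_apply (measurable_limitPoint b) hB]
  exact (Filter.eventuallyConst_set'.1 hconst).imp
    (fun h => (measure_congr h).trans measure_empty) fun h => (measure_congr h).trans measure_univ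

theorem shift_iterate (v : Fin d → ℤ) (n : ℕ) (x : subshift d) :
    (shift v)^[n] x = shift (n • v) x := by
  induction n with
  | zero => rw [zero_smul]; exact Subtype.ext (shift_zero x.1).symm
  | succ n ih =>
    rw [Function.iterate_succ_apply', ih, succ_nsmul']
    exact Subtype.ext (shift_shift v (n • v) x.1)

theorem limitMeasure_singleton (b : ℕ) (x : subshift d) : limitMeasure d b {x} = 0 := by
  by_contra hne
  have hpre : haar d (limitPoint b ⁻¹' {x}) ≠ 0 := by
    rwa [← Measure.map_apply (measurable_limitPoint b) (measurableSet_singleton x)]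
  obtain ⟨_, rfl, hg⟩ := Measure.exists_mem_of_measure_ne_zero_of_ae hpre
    (ae_restrict_of_ae (ae_shift_limitPoint_ne b))
  refine hne (measure_singleton_eq_zero_of_iterate_ne (measurePreserving_shift b 1) fun n hn => ?_)
  rw [shift_iterate]
  exact hg _ (smul_ne_zero hn one_ne_zero)

theorem limitMeasure_setOf_apply_zero_ne_le {b : ℕ} {c : Bool}
    (hb : ∀ z : Fin d → ℤ, word b z = c) :
    limitMeasure d b {x | x.1 0 ≠ c} ≤ 4⁻¹ := by
  have hmeas : MeasurableSet {x : subshift d | x.1 0 ≠ c} :=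
    (measurableSet_eq_fun ((measurable_pi_apply 0).comp measurable_subtype_coe)
      measurable_const).compl
  calc limitMeasure d b {x | x.1 0 ≠ c} = haar d {g | (limitPoint b g).1 0 ≠ c} :=
        Measure.map_apply (measurable_limitPoint b) hmeas
    _ ≤ haar d (⋃ k, bad d (b + 2 * k)) := measure_mono_ae <| by
        filter_upwards [ae_tendsto_limitPoint b] with g hx hne
        by_contra hg
        have hgood (k : ℕ) : g ∉ bad d (b + 2 * k) := fun h => hg (Set.mem_iUnion.2 ⟨k, h⟩)
        refine hne ((apply_eq_of_tendsto_approx (n := 0) hx (fun k _ => hgood k) ?_).trans (hb _))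
        rw [zero_add, cell_position]
    _ ≤ ∑' k, haar d (bad d (b + 2 * k)) := measure_iUnion_le _
    _ ≤ 4⁻¹ := tsum_haar_bad_le b

theorem limitMeasure_zero_ne_one : limitMeasure d 0 ≠ limitMeasure d 1 := by
  intro heq
  have hunion : {x : subshift d | x.1 0 ≠ false} ∪ {x | x.1 0 ≠ true} = Set.univ :=
    Set.eq_univ_of_forall fun x => by cases h : x.1 0 <;> simp [h]
  have hlt : (4⁻¹ + 4⁻¹ : ENNReal) < 1 := by
    rw [← two_mul, ← div_eq_mul_inv, ENNReal.div_lt_iff (by simp) (by simp)]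
    norm_num
  refine hlt.not_ge ?_
  calc 1 = limitMeasure d 0 Set.univ := measure_univ.symm
    _ ≤ limitMeasure d 0 {x | x.1 0 ≠ false} + limitMeasure d 0 {x | x.1 0 ≠ true} :=
        hunion ▸ measure_union_le _ _
    _ ≤ 4⁻¹ + 4⁻¹ := add_le_add (limitMeasure_setOf_apply_zero_ne_le word_zero)
        (heq ▸ limitMeasure_setOf_apply_zero_ne_le word_one)

end LimitMeasure

end HierarchicalShift

/-- For every `d ≥ 1` there exists a nonempty closed shift-invariant subset
`X` of `{0,1}^(ℤ^d)` such that the `ℤ^d`-shift action restricted to `X` is chaotic almost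
minimal and supports two distinct nonatomic ergodic shift-invariant probability measures. -/
theorem statement1 (d : ℕ) (hd : 1 ≤ d) :
    ∃ (X : Set ((Fin d → ℤ) → Bool))
      (hinv : ∀ (v : Fin d → ℤ) (x : (Fin d → ℤ) → Bool),
        x ∈ X ↔ shiftZdHomeo d v x ∈ X)
      (S : (Fin d → ℤ) → (X ≃ₜ X)),
      (∀ v, S v = restrictHomeo (shiftZdHomeo d v) X (hinv v)) ∧
      X.Nonempty ∧ IsClosed X ∧
      -- the ℤ^d-action is faithful
      (∀ v, S v = 1 → v = 0) ∧
      -- topologically transitive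
      (∀ U V : Set X, IsOpen U → IsOpen V → U.Nonempty → V.Nonempty →
        ∃ v, ((S v) '' U ∩ V).Nonempty) ∧
      -- dense set of points with finite orbit
      Dense {x : X | (Set.range fun v => S v x).Finite} ∧
      -- every proper closed invariant subset is finite
      (∀ A : Set X, IsClosed A → (∀ v, S v '' A = A) → A ≠ Set.univ → A.Finite) ∧
      -- two distinct nonatomic ergodic invariant probability measures
      ∃ μ ν : Measure X,
        IsProbabilityMeasure μ ∧ IsProbabilityMeasure ν ∧
        (∀ v, MeasurePreserving (S v) μ μ) ∧
        (∀ v, MeasurePreserving (S v) ν ν) ∧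
        (∀ B : Set X, MeasurableSet B → (∀ v, (S v) ⁻¹' B = B) → μ B = 0 ∨ μ B = 1) ∧
        (∀ B : Set X, MeasurableSet B → (∀ v, (S v) ⁻¹' B = B) → ν B = 0 ∨ ν B = 1) ∧
        (∀ x : X, μ {x} = 0) ∧ (∀ x : X, ν {x} = 0) ∧ μ ≠ ν := by
  have : NeZero d := ⟨by omega⟩
  open HierarchicalShift in
  exact ⟨subshift d, mem_subshift_iff_shift_mem, shift, fun _ => rfl,
    ⟨word 0, word_mem_subshift 0⟩, isClosed_closure,
    fun _ => shift_faithful,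
    fun _ _ => shift_transitive,
    dense_setOf_finite_orbit,
    fun _ => finite_of_isClosed_of_invariant,
    limitMeasure d 0, limitMeasure d 1, inferInstance, inferInstance,
    measurePreserving_shift 0, measurePreserving_shift 1,
    fun _ => limitMeasure_eq_zero_or_one 0, fun _ => limitMeasure_eq_zero_or_one 1,
    limitMeasure_singleton 0, limitMeasure_singleton 1, limitMeasure_zero_ne_one⟩
end

section
/- Let G be a group acting by homeomorphisms on a compact metric space X such that the set of points with finite G-orbit is dense in X and some point of X has dense G-orbit. Then there exists a G-invariant Borel probability measure on X with full support (i.e., assigning positive measure to every nonempty open subset of X). -/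
/-!
A finite orbit carries an invariant probability: the uniform one. By second countability, countably
many points of finite orbit are already dense, so a mixture, with positive weights, of the uniform
probabilities on their orbits is invariant and has a dense set of atoms. All the measures involved
are discrete, and such a measure is invariant as soon as its mass function is constant on orbits.
-/

open Set MeasureTheory

section DiscreteInvariantProbability

theorem exists_pmf_forall_ne_zero (ι : Type*) [Countable ι] [Nonempty ι] :
    ∃ w : PMF ι, ∀ i, w i ≠ 0 := by
  obtain ⟨w, hw_pos, hw_sum⟩ := ENNReal.exists_pos_sum_of_countable' one_ne_zero ι
  have hw_ne_zero : tsum w ≠ 0 := fun h =>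
    (hw_pos (Classical.arbitrary ι)).ne' (ENNReal.tsum_eq_zero.1 h _)
  refine ⟨PMF.normalize w hw_ne_zero hw_sum.ne_top, fun i => ?_⟩
  exact (PMF.mem_support_normalize_iff hw_ne_zero hw_sum.ne_top i).2 (hw_pos i).ne'

variable {G X : Type*} [Group G] [MulAction G X]

theorem exists_smul_invariant_pmf_of_finite_orbit {x : X} (hx : (MulAction.orbit G x).Finite) :
    ∃ p : PMF X, (∀ (g : G) (y : X), p (g • y) = p y) ∧ p x ≠ 0 := by
  classical
  have hx_mem : x ∈ hx.toFinset := hx.mem_toFinset.2 (MulAction.mem_orbit_self x)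
  have smul_mem_iff (g : G) (y : X) : g • y ∈ MulAction.orbit G x ↔ y ∈ MulAction.orbit G x := by
    rw [← MulAction.orbit_eq_iff, MulAction.orbit_smul, MulAction.orbit_eq_iff]
  have orbit_nonempty : hx.toFinset.Nonempty := ⟨x, hx_mem⟩
  refine ⟨PMF.uniformOfFinset hx.toFinset orbit_nonempty, fun g y => ?_, ?_⟩
  · simp only [PMF.uniformOfFinset_apply, hx.mem_toFinset, smul_mem_iff]
  · exact (PMF.mem_support_uniformOfFinset_iff orbit_nonempty x).2 hx_mem

theorem exists_smul_invariant_pmf_of_countable {s : Set X} (hs_count : s.Countable)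
    (hs_ne : s.Nonempty) (hs_fin : ∀ x ∈ s, (MulAction.orbit G x).Finite) :
    ∃ p : PMF X, (∀ (g : G) (y : X), p (g • y) = p y) ∧ s ⊆ p.support := by
  have : Countable s := hs_count
  have : Nonempty s := hs_ne.to_subtype
  obtain ⟨w, hw⟩ := exists_pmf_forall_ne_zero s
  choose q hq_inv hq_ne using fun x : s =>
    exists_smul_invariant_pmf_of_finite_orbit (hs_fin x x.2)
  refine ⟨w.bind q, fun g y => ?_, fun x hx => ?_⟩
  · simp only [PMF.bind_apply, hq_inv]
  · exact (PMF.mem_support_bind_iff w q x).2 ⟨⟨x, hx⟩, hw _, hq_ne _⟩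

theorem smulInvariantMeasure_toMeasure [MeasurableSpace X] [MeasurableConstSMul G X] {p : PMF X}
    (hp : ∀ (g : G) (x : X), p (g • x) = p x) : SMulInvariantMeasure G X p.toMeasure where
  measure_preimage_smul g A hA := by
    have indicator_preimage_smul (x : X) :
        ((g • ·) ⁻¹' A).indicator p x = A.indicator p (g • x) := by
      rw [← indicator_comp_right, show ⇑p ∘ (g • ·) = p from funext (hp g)]
    calc p.toMeasure ((g • ·) ⁻¹' A)
        = ∑' x, A.indicator p (g • x) := by
          rw [p.toMeasure_apply (measurable_const_smul g hA), tsum_congr indicator_preimage_smul]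
      _ = ∑' x, A.indicator p x := (MulAction.toPerm g).tsum_eq (A.indicator p)
      _ = p.toMeasure A := (p.toMeasure_apply hA).symm

end DiscreteInvariantProbability

theorem isOpenPosMeasure_toMeasure {X : Type*} [TopologicalSpace X] [MeasurableSpace X]
    [OpensMeasurableSpace X] {p : PMF X} (hp : Dense p.support) :
    p.toMeasure.IsOpenPosMeasure where
  open_pos U hU hU_ne h := by
    have hdisj : Disjoint p.support U := (p.toMeasure_apply_eq_zero_iff hU.measurableSet).1 h
    obtain ⟨x, hxU, hxp⟩ := hp.inter_open_nonempty U hU hU_ne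
    exact disjoint_left.1 hdisj hxp hxU

theorem exists_smulInvariant_isOpenPosMeasure_of_dense_finite_orbit {G X : Type*} [Group G]
    [MulAction G X] [TopologicalSpace X] [SecondCountableTopology X] [Nonempty X]
    [MeasurableSpace X] [OpensMeasurableSpace X] [MeasurableConstSMul G X]
    (hfin : Dense {x : X | (MulAction.orbit G x).Finite}) :
    ∃ μ : Measure X, IsProbabilityMeasure μ ∧ SMulInvariantMeasure G X μ ∧
      μ.IsOpenPosMeasure := by
  obtain ⟨s, hs_fin, hs_count, hs_dense⟩ := hfin.exists_countable_dense_subset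
  obtain ⟨p, hp_inv, hp_supp⟩ :=
    exists_smul_invariant_pmf_of_countable hs_count hs_dense.nonempty hs_fin
  exact ⟨p.toMeasure, inferInstance, smulInvariantMeasure_toMeasure hp_inv,
    isOpenPosMeasure_toMeasure (hs_dense.mono hp_supp)⟩

/-- The action of `G` on `X` given by a homomorphism into the homeomorphism group, which
makes orbits and invariant measures of `T` available as those of a `MulAction`. -/
abbrev homeomorphAction {G X : Type*} [Group G] [TopologicalSpace X] (T : G →* (X ≃ₜ X)) :
    MulAction G X where
  smul g x := T g x
  one_smul x := DFunLike.congr_fun (map_one T) x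
  mul_smul g h x := DFunLike.congr_fun (map_mul T g h) x

theorem statement3_general {G X : Type*} [Group G] [TopologicalSpace X]
    [SecondCountableTopology X] [Nonempty X] [MeasurableSpace X] [BorelSpace X]
    (T : G →* (X ≃ₜ X))
    (hfin : Dense {x : X | (Set.range fun g : G => T g x).Finite}) :
    ∃ μ : Measure X, IsProbabilityMeasure μ ∧
      (∀ g : G, Measure.map (T g) μ = μ) ∧
      (∀ U : Set X, IsOpen U → U.Nonempty → 0 < μ U) := by
  let := homeomorphAction T
  have : ContinuousConstSMul G X := ⟨fun g => (T g).continuous⟩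
  obtain ⟨μ, hμ_prob, hμ_inv, hμ_pos⟩ :=
    exists_smulInvariant_isOpenPosMeasure_of_dense_finite_orbit (G := G) hfin
  exact ⟨μ, hμ_prob, fun g => MeasureTheory.map_smul g μ, fun U hU hU_ne => hU.measure_pos μ hU_ne⟩

/-- A group action by homeomorphisms on a compact metric space with a dense
set of points with finite orbit and a point with dense orbit admits an invariant Borel
probability measure of full support. -/
theorem statement3 {G X : Type*} [Group G] [MetricSpace X] [CompactSpace X]
    [MeasurableSpace X] [BorelSpace X]
    (T : G →* (X ≃ₜ X))
    (hfin : Dense {x : X | (Set.range fun g : G => T g x).Finite})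
    (htrans : ∃ x : X, Dense (Set.range fun g : G => T g x)) :
    ∃ μ : Measure X, IsProbabilityMeasure μ ∧
      (∀ g : G, Measure.map (T g) μ = μ) ∧
      (∀ U : Set X, IsOpen U → U.Nonempty → 0 < μ U) := by
  have : Nonempty X := htrans.nonempty
  exact statement3_general T hfin
end

section
/- Let (X,T) be a chaotic almost minimal system, where T is an expansive homeomorphism of the compact metric space X. Then (X,T) is topologically conjugate to a subshift: there exist a finite alphabet A, a nonempty closed shift-invariant subset Y ⊆ A^ℤ, and a homeomorphism h: X → Y with h ∘ T = σ ∘ h. -/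
/-!
The point is that `X` is totally disconnected. Given this, `X` has a finite clopen partition into
sets of diameter less than the expansivity constant `ε`, and expansivity makes the itinerary with
respect to this partition injective.

Total disconnectedness follows a variant of Mañé's argument that minimal expansive systems are
zero-dimensional. Let `P` be a periodic orbit. A *seed* is a continuum of diameter at least `r`,
at distance at least `r` from `P`, whose past iterates up to time `N` have diameter at most `ε`.
If `N` is large in terms of `r`, expansivity forces some iterate of a seed at a time in `(0, N]`
to have diameter greater than `ε`, and such a *grown* continuum contains a new seed. The new seed
can moreover be chosen to avoid all points that `ε / 2`-shadow a prescribed orbit up to time `N`,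
because the shadowing points of a grown continuum lie in one ball of radius `r`. Iterating gives
nested continua, hence a point `y` whose forward orbit is at distance at least `r` from `P` at
times with gaps at most `N`. The set `F` of points with this property along their full orbit is
closed, invariant and disjoint from `P`, hence finite, so `y` is forward asymptotic to some point
of `F`. Letting the prescribed orbits run through those of the points of `F`, each infinitely
often, excludes this. So there are no grown continua.

Finally, by boundary bumping a nontrivial connected component contains nontrivial continua of
arbitrarily small diameter; the first iterate, forward or backward, at which such a continuum gets
diameter greater than `ε` is grown for `T` or for `T⁻¹`, a contradiction.
-/

open Set MeasureTheory

open Filter Metric Topology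

/-! ### Subcontinua -/

section Subcontinua

theorem exists_isClopen_of_connectedComponent_subset {X : Type*} [TopologicalSpace X] [T2Space X]
    [CompactSpace X] {x : X} {U : Set X} (hU : IsOpen U) (hxU : connectedComponent x ⊆ U) :
    ∃ Z, IsClopen Z ∧ x ∈ Z ∧ Z ⊆ U := by
  have : Nonempty {s : Set X // IsClopen s ∧ x ∈ s} := ⟨⟨univ, isClopen_univ, mem_univ x⟩⟩
  have hdir : Directed (· ⊇ ·) fun s : {s : Set X // IsClopen s ∧ x ∈ s} => (s : Set X) :=
    fun s t => ⟨⟨s ∩ t, s.2.1.inter t.2.1, s.2.2, t.2.2⟩, inter_subset_left, inter_subset_right⟩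
  rw [connectedComponent_eq_iInter_isClopen] at hxU
  obtain ⟨Z, hZU⟩ := exists_subset_nhds_of_compactSpace hdir (fun s => s.2.1.1)
    fun y hy => hU.mem_nhds (hxU hy)
  exact ⟨Z, Z.2.1, Z.2.2, hZU⟩

/-- Boundary bumping. Otherwise a clopen piece of `C ∩ closure U` around `c` is contained in `U` and
splits off `C`. -/
theorem connectedComponentIn_inter_closure_sdiff_nonempty {X : Type*} [TopologicalSpace X]
    [T2Space X] {C U : Set X} {c : X} (hC : IsCompact C) (hconn : IsPreconnected C)
    (hU : IsOpen U) (hcC : c ∈ C) (hcU : c ∈ U) (hCU : (C \ U).Nonempty) :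
    (connectedComponentIn (C ∩ closure U) c \ U).Nonempty := by
  by_contra hno
  rw [not_nonempty_iff_eq_empty, sdiff_eq_empty] at hno
  set K : Set X := C ∩ closure U
  have : CompactSpace K := isCompact_iff_compactSpace.mp (hC.inter_right isClosed_closure)
  have hcK : c ∈ K := ⟨hcC, subset_closure hcU⟩
  rw [connectedComponentIn_eq_image hcK, image_subset_iff] at hno
  obtain ⟨Z, hZ, hcZ, hZU⟩ :=
    exists_isClopen_of_connectedComponent_subset (hU.preimage continuous_subtype_val) hno
  have hinside : IsClosed (Subtype.val '' Z : Set X) :=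
    (hZ.1.isCompact.image continuous_subtype_val).isClosed
  have houtside : IsClosed (Subtype.val '' Zᶜ ∪ C \ U : Set X) :=
    (hZ.compl.1.isCompact.image continuous_subtype_val).isClosed.union
      (hC.isClosed.sdiff hU)
  have hcover : C ⊆ Subtype.val '' Z ∪ (Subtype.val '' Zᶜ ∪ C \ U) := by
    intro w hw
    by_cases hwU : w ∈ U
    · by_cases hwZ : (⟨w, hw, subset_closure hwU⟩ : K) ∈ Z
      · exact .inl ⟨_, hwZ, rfl⟩
      · exact .inr (.inl ⟨_, hwZ, rfl⟩)
    · exact .inr (.inr ⟨hw, hwU⟩)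
  obtain ⟨_, -, ⟨z, hz, rfl⟩, ⟨z', hz', hzz'⟩ | ⟨-, hzU⟩⟩ :=
    isPreconnected_closed_iff.mp hconn _ _ hinside houtside hcover
      ⟨c, hcC, ⟨c, hcK⟩, hcZ, rfl⟩ (hCU.mono fun w hw => ⟨hw.1, .inr hw⟩)
  · exact hz' (Subtype.ext hzz' ▸ hz)
  · exact hzU (hZU hz)

variable {X : Type*} [MetricSpace X] {C : Set X}

theorem exists_subcontinuum_subset_closedBall (hC : IsCompact C) (hconn : IsPreconnected C)
    {c x : X} (hc : c ∈ C) (hx : x ∈ C) {r : ℝ} (hr : 0 < r) (hxc : r ≤ dist x c) :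
    ∃ D ⊆ C, IsCompact D ∧ IsPreconnected D ∧ D ⊆ closedBall c r ∧ c ∈ D ∧
      ∃ w ∈ D, r ≤ dist w c := by
  set K := C ∩ closure (ball c r)
  have hcK : c ∈ K := ⟨hc, subset_closure (mem_ball_self hr)⟩
  have hK : IsCompact K := hC.inter_right isClosed_closure
  have hDK : connectedComponentIn K c ⊆ K := connectedComponentIn_subset K c
  have hD : IsCompact (connectedComponentIn K c) := by
    have : CompactSpace K := isCompact_iff_compactSpace.mp hK
    rw [connectedComponentIn_eq_image hcK]
    exact isClosed_connectedComponent.isCompact.image continuous_subtype_val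
  obtain ⟨w, hwD, hw⟩ := connectedComponentIn_inter_closure_sdiff_nonempty hC hconn isOpen_ball hc
    (mem_ball_self hr) ⟨x, hx, fun h => hxc.not_gt h⟩
  exact ⟨connectedComponentIn K c, hDK.trans inter_subset_left, hD,
    isPreconnected_connectedComponentIn, fun _ h => closure_ball_subset_closedBall (hDK h).2,
    mem_connectedComponentIn hcK, w, hwD, not_lt.mp hw⟩

/-- Pigeonhole: `S.card + 1` levels spaced by `4 * r` cannot all be `2 * r`-close to `S`. -/
theorem exists_level_far_from_finset {r : ℝ} (S : Finset ℝ) :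
    ∃ i ≤ S.card, ∀ s ∈ S, 2 * r ≤ |4 * r * (i + 1) - s| := by
  by_contra! hclose
  choose! f hfS hf using hclose
  obtain ⟨i, hi, j, hj, hij, hfij⟩ := Finset.exists_ne_map_eq_of_card_lt_of_maps_to
    (s := Finset.range (S.card + 1)) (t := S) (by simp) (f := f)
    fun i hi => hfS i (by simpa [Nat.lt_succ_iff] using hi)
  have hi' := abs_lt.mp (hf i (by simpa [Nat.lt_succ_iff] using hi))
  have hj' := abs_lt.mp (hf j (by simpa [Nat.lt_succ_iff] using hj))
  rw [hfij] at hi'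
  rcases lt_or_gt_of_ne hij with h | h
  · have : (i : ℝ) + 1 ≤ j := by exact_mod_cast h
    nlinarith
  · have : (j : ℝ) + 1 ≤ i := by exact_mod_cast h
    nlinarith

/-- The subcontinuum is found around a point whose distance to `x` is far from the distances of the
points of `P` to `x`. -/
theorem exists_subcontinuum_far_from_finset {ε r : ℝ} (hr : 0 < r) (P : Finset X)
    (hPr : 4 * r * (P.card + 1) ≤ ε) (hC : IsCompact C) (hconn : IsPreconnected C)
    {x y : X} (hx : x ∈ C) (hy : y ∈ C) (hxy : ε < dist x y) :
    ∃ D ⊆ C, IsCompact D ∧ IsPreconnected D ∧ (∃ a ∈ D, ∃ b ∈ D, r ≤ dist a b) ∧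
      (∀ a ∈ D, ∀ b ∈ D, dist a b ≤ 2 * r) ∧ ∀ a ∈ D, ∀ p ∈ P, r ≤ dist a p := by
  classical
  obtain ⟨i, hi, hfar⟩ := exists_level_far_from_finset (r := r) (P.image (dist · x))
  have hiP : (i : ℝ) + 1 ≤ P.card + 1 := by
    exact_mod_cast Nat.succ_le_succ (hi.trans Finset.card_image_le)
  have hrlevel : r ≤ 4 * r * (i + 1) := by nlinarith [(Nat.cast_nonneg i : (0 : ℝ) ≤ i)]
  have hlevelε : 4 * r * (i + 1) ≤ ε := by nlinarith
  obtain ⟨c, hc, hcx⟩ : ∃ c ∈ C, dist c x = 4 * r * (i + 1) :=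
    hconn.intermediate_value hx hy (f := (dist · x)) (by fun_prop)
      ⟨by simp only [dist_self]; positivity, by rw [dist_comm y]; linarith⟩
  obtain ⟨D, hDC, hD, hDconn, hDr, hcD, w, hw, hwc⟩ :=
    exists_subcontinuum_subset_closedBall hC hconn hc hx hr (by rwa [dist_comm, hcx])
  refine ⟨D, hDC, hD, hDconn, ⟨w, hw, c, hcD, hwc⟩, fun a ha b hb => ?_, fun a ha p hp => ?_⟩
  · linarith [dist_triangle_right a b c, mem_closedBall.mp (hDr ha), mem_closedBall.mp (hDr hb)]
  · have hcp : 2 * r ≤ |dist c x - dist p x| := hcx ▸ hfar _ (Finset.mem_image_of_mem _ hp)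
    linarith [abs_dist_sub_le c p x, dist_triangle_left c p a, mem_closedBall.mp (hDr ha)]

end Subcontinua

/-! ### Orbits -/

section Orbits

variable {X : Type*} [TopologicalSpace X] (T : X ≃ₜ X)

theorem zpow_zero_apply (x : X) : (T ^ (0 : ℤ)) x = x := by
  rw [zpow_zero]; rfl

theorem zpow_add_apply (m n : ℤ) (x : X) : (T ^ (m + n)) x = (T ^ m) ((T ^ n) x) := by
  rw [zpow_add]; rfl

theorem zpow_one_add_apply (n : ℤ) (x : X) : (T ^ (1 + n)) x = T ((T ^ n) x) := by
  rw [zpow_add_apply, zpow_one]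

theorem finite_range_zpow_apply_of_periodic {p : X} {k : ℕ} (hk : 0 < k) (hp : (T ^ k) p = p) :
    (range fun n : ℤ => (T ^ n) p).Finite := by
  let _ : MulAction (X ≃ₜ X) X :=
    { smul := fun f x => f x, one_smul := fun _ => rfl, mul_smul := fun _ _ _ => rfl }
  have hperiod : (0 : ℤ) < MulAction.period T p := by
    exact_mod_cast MulAction.period_pos_of_fixed (m := T) (a := p) hk hp
  refine ((finite_Ico (0 : ℤ) (MulAction.period T p)).image fun n => (T ^ n) p).subset ?_
  rintro _ ⟨n, rfl⟩
  exact ⟨n % MulAction.period T p, ⟨Int.emod_nonneg _ hperiod.ne', Int.emod_lt_of_pos _ hperiod⟩,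
    MulAction.zpow_mod_period_smul n (g := T) (a := p)⟩

/-- The largest `T`-invariant subset of `L`: the points whose full orbit stays in `L`. -/
def invariantCore (L : Set X) : Set X := {x | ∀ n : ℤ, (T ^ n) x ∈ L}

variable {T} {L : Set X}

theorem invariantCore_subset : invariantCore T L ⊆ L := fun x hx => zpow_zero_apply T x ▸ hx 0

theorem zpow_apply_mem_invariantCore {x : X} (hx : x ∈ invariantCore T L) (n : ℤ) :
    (T ^ n) x ∈ invariantCore T L := fun m => by
  rw [← zpow_add_apply]
  exact hx (m + n)

theorem image_invariantCore : T '' invariantCore T L = invariantCore T L := by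
  refine Subset.antisymm ?_ fun x hx => ⟨_, zpow_apply_mem_invariantCore hx (-1), ?_⟩
  · rintro _ ⟨x, hx, rfl⟩
    simpa only [zpow_one] using zpow_apply_mem_invariantCore hx 1
  · rw [← zpow_one_add_apply, add_neg_cancel, zpow_zero_apply]

theorem isClosed_invariantCore (hL : IsClosed L) : IsClosed (invariantCore T L) := by
  simp only [invariantCore, ofPred_forall]
  exact isClosed_iInter fun n => hL.preimage (T ^ n).continuous

theorem tendsto_zpow_apply_nhdsSet_invariantCore [CompactSpace X] (hL : IsClosed L) {y : X}
    (hy : ∀ᶠ n : ℤ in atTop, (T ^ n) y ∈ L) :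
    Tendsto (fun n : ℤ => (T ^ n) y) atTop (𝓝ˢ (invariantCore T L)) := by
  rw [(hasBasis_nhdsSet _).tendsto_right_iff]
  rintro U ⟨hU, hLU⟩
  obtain ⟨s, hs⟩ := hU.isClosed_compl.isCompact.elim_finite_subfamily_closed
    (fun n : ℤ => (T ^ n) ⁻¹' L) (fun n => hL.preimage (T ^ n).continuous)
    (eq_empty_of_forall_notMem fun x hx => hx.1 (hLU (mem_iInter.mp hx.2)))
  filter_upwards [(eventually_all_finset s).mpr fun n _ =>
    (tendsto_atTop_add_const_left atTop n tendsto_id).eventually hy] with m hm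
  by_contra hmU
  refine eq_empty_iff_forall_notMem.mp hs _ ⟨hmU, mem_iInter₂.mpr fun n hn => ?_⟩
  rw [mem_preimage, ← zpow_add_apply]
  exact hm n hn

/-- Once `T ^ n y` is close to `F`, the nearest point of `F` moves along with `T`. -/
theorem exists_mem_tendsto_dist_zpow_apply {X : Type*} [MetricSpace X] {T : X ≃ₜ X} {F : Set X}
    (hF : F.Finite) (hFT : ∀ n : ℤ, ∀ x ∈ F, (T ^ n) x ∈ F) {y : X}
    (hy : Tendsto (fun n : ℤ => (T ^ n) y) atTop (𝓝ˢ F)) :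
    ∃ f ∈ F, Tendsto (fun n : ℤ => dist ((T ^ n) y) ((T ^ n) f)) atTop (𝓝 0) := by
  obtain ⟨U, hU, hdisj⟩ := hF.t2_separation
  have hUnhds (f : X) : U f ∈ 𝓝 f := (hU f).2.mem_nhds (hU f).1
  have hnear (V : X → Set X) (hV : ∀ f, V f ∈ 𝓝 f) :
        ∀ᶠ n : ℤ in atTop, ∃ f ∈ F, (T ^ n) y ∈ V f := by
    have hVF : (⋃ f ∈ F, V f) ∈ 𝓝ˢ F := mem_nhdsSet_iff_forall.mpr fun f hf =>
      mem_of_superset (hV f) (subset_biUnion_of_mem hf)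
    filter_upwards [hy hVF] with n hn
    simpa only [mem_preimage, mem_iUnion₂, exists_prop] using hn
  obtain ⟨m, hm⟩ := eventually_atTop.mp <| hnear (fun f => U f ∩ T ⁻¹' U (T f)) fun f =>
    inter_mem (hUnhds f) (T.continuous.continuousAt (hUnhds (T f)))
  obtain ⟨f₀, hf₀, hf₀U, -⟩ := hm m le_rfl
  have hFf (n : ℤ) : (T ^ n) ((T ^ (-m)) f₀) ∈ F := hFT n _ (hFT (-m) f₀ hf₀)
  have htrack (n : ℤ) (hmn : m ≤ n) : (T ^ n) y ∈ U ((T ^ n) ((T ^ (-m)) f₀)) := by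
    induction n, hmn using Int.leInduction with
    | base => rwa [← zpow_add_apply, add_neg_cancel, zpow_zero_apply]
    | succ n hmn ih =>
      obtain ⟨g, hg, hgU, hTgU⟩ := hm n hmn
      obtain rfl := hdisj.elim_set hg (hFf n) _ hgU ih
      rw [add_comm, zpow_one_add_apply, zpow_one_add_apply]
      exact hTgU
  refine ⟨(T ^ (-m)) f₀, hFT (-m) f₀ hf₀, Metric.tendsto_nhds.mpr fun η hη => ?_⟩
  filter_upwards [hnear (fun f => U f ∩ ball f η) fun f =>
      inter_mem (hUnhds f) (ball_mem_nhds f hη), eventually_ge_atTop m] with n ⟨g, hg, hgU, hgη⟩ hmn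
  obtain rfl := hdisj.elim_set hg (hFf n) _ hgU (htrack n hmn)
  simpa using hgη

end Orbits

/-! ### Expansivity -/

section Expansivity

variable {X : Type*} [MetricSpace X]

/-- `T` is expansive with expansivity constant `ε`. Positivity of `ε` is not part of the notion. -/
def IsExpansiveWith (T : X ≃ₜ X) (ε : ℝ) : Prop :=
  ∀ x y : X, x ≠ y → ∃ n : ℤ, ε < dist ((T ^ n) x) ((T ^ n) y)

/-- `T` moves any two points at distance at least `r` more than `ε` apart at some time in
`[-N, N]`: the uniform form of expansivity that drives the growth of continua. -/
def SeparatesWithin (T : X ≃ₜ X) (ε r : ℝ) (N : ℕ) : Prop :=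
  ∀ x y : X, r ≤ dist x y → ∃ n ∈ Icc (-N : ℤ) N, ε < dist ((T ^ n) x) ((T ^ n) y)

/-- The image of `D` under `T ^ n` has diameter at most `ε`. Stated for pairs of points, as
`Metric.diam` is `0` on unbounded sets. -/
def IsSmallAt (T : X ≃ₜ X) (ε : ℝ) (D : Set X) (n : ℤ) : Prop :=
  ∀ x ∈ D, ∀ y ∈ D, dist ((T ^ n) x) ((T ^ n) y) ≤ ε

variable {T : X ≃ₜ X} {ε r : ℝ} {N : ℕ} {C D : Set X} {n : ℤ}

theorem IsExpansiveWith.inv (hT : IsExpansiveWith T ε) : IsExpansiveWith T⁻¹ ε := fun x y hxy => by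
  obtain ⟨n, hn⟩ := hT x y hxy
  exact ⟨-n, by rwa [inv_zpow', neg_neg]⟩

theorem IsExpansiveWith.exists_separatesWithin [CompactSpace X] (hT : IsExpansiveWith T ε)
    (hr : 0 < r) : ∃ N, SeparatesWithin T ε r N := by
  have hfar : IsCompact {z : X × X | r ≤ dist z.1 z.2} :=
    (isClosed_le continuous_const continuous_dist).isCompact
  obtain ⟨s, hs⟩ := hfar.elim_finite_subcover
    (fun n : ℤ => {z : X × X | ε < dist ((T ^ n) z.1) ((T ^ n) z.2)})
    (fun n => isOpen_lt continuous_const (by fun_prop))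
    fun z hz => mem_iUnion.mpr (hT z.1 z.2 (dist_pos.mp (hr.trans_le hz)))
  refine ⟨s.sup Int.natAbs, fun x y hxy => ?_⟩
  have hxy_far : (x, y) ∈ {z : X × X | r ≤ dist z.1 z.2} := hxy
  obtain ⟨n, hn, hnxy⟩ := mem_iUnion₂.mp (hs hxy_far)
  have : n.natAbs ≤ s.sup Int.natAbs := Finset.le_sup hn
  exact ⟨n, by rw [mem_Icc]; omega, hnxy⟩

theorem IsSmallAt.mono (hC : IsSmallAt T ε C n) (hDC : D ⊆ C) : IsSmallAt T ε D n :=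
  fun x hx y hy => hC x (hDC hx) y (hDC hy)

theorem not_isSmallAt :
    ¬IsSmallAt T ε D n ↔ ∃ x ∈ D, ∃ y ∈ D, ε < dist ((T ^ n) x) ((T ^ n) y) := by
  simp only [IsSmallAt, not_forall, exists_prop, not_le]

theorem isSmallAt_inv : IsSmallAt T⁻¹ ε D n ↔ IsSmallAt T ε D (-n) := by
  rw [IsSmallAt, IsSmallAt, inv_zpow']

theorem isSmallAt_image_zpow {m : ℤ} :
    IsSmallAt T ε ((T ^ m) '' D) n ↔ IsSmallAt T ε D (n + m) := by
  simp only [IsSmallAt, forall_mem_image, zpow_add_apply]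

theorem exists_pos_forall_subset_closedBall_isSmallAt [CompactSpace X] (T : X ≃ₜ X) (hε : 0 < ε)
    (N : ℕ) : ∃ θ > 0, ∀ (c : X) (D : Set X), D ⊆ closedBall c θ →
      ∀ n ∈ Icc (-N : ℤ) N, IsSmallAt T ε D n := by
  have hcont : ∀ᶠ θ in 𝓝[>] (0 : ℝ), ∀ n ∈ Icc (-N : ℤ) N, ∀ x y : X, dist x y < θ →
      dist ((T ^ n) x) ((T ^ n) y) < ε := by
    rw [eventually_all_finite (finite_Icc _ _)]
    intro n _
    obtain ⟨θ, hθ, h⟩ := Metric.uniformContinuous_iff.mp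
      (CompactSpace.uniformContinuous_of_continuous (T ^ n).continuous) ε hε
    filter_upwards [Ioo_mem_nhdsGT hθ] with θ' hθ' x y hxy using h (hxy.trans hθ'.2)
  obtain ⟨θ, hθT, hθ : 0 < θ⟩ := (hcont.and self_mem_nhdsWithin).exists
  refine ⟨θ / 3, by positivity, fun c D hD n hn x hx y hy => (hθT n hn x y ?_).le⟩
  linarith [dist_triangle_right x y c, mem_closedBall.mp (hD hx), mem_closedBall.mp (hD hy)]

end Expansivity

/-! ### Seeds and grown continua -/

section Growth

variable {X : Type*} [MetricSpace X]

/-- A grown continuum: its diameter exceeds `ε`, but its iterates at the times in `[-N, 0)` have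
diameter at most `ε`. Nonemptiness is implied by `large`. -/
structure IsGrown (T : X ≃ₜ X) (ε : ℝ) (N : ℕ) (C : Set X) : Prop where
  isCompact : IsCompact C
  isPreconnected : IsPreconnected C
  large : ¬IsSmallAt T ε C 0
  past : ∀ n ∈ Ico (-N : ℤ) 0, IsSmallAt T ε C n

/-- A seed: a continuum of diameter at least `r`, at distance at least `r` from `P`, whose iterates
at the times in `[-N, 0]` have diameter at most `ε`. -/
structure IsSeed (T : X ≃ₜ X) (ε r : ℝ) (N : ℕ) (P : Finset X) (D : Set X) : Prop where
  isCompact : IsCompact D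
  isPreconnected : IsPreconnected D
  large : ∃ x ∈ D, ∃ y ∈ D, r ≤ dist x y
  past : ∀ n ∈ Icc (-N : ℤ) 0, IsSmallAt T ε D n
  far : ∀ x ∈ D, ∀ p ∈ P, r ≤ dist x p

variable {T : X ≃ₜ X} {ε r : ℝ} {N : ℕ} {P : Finset X} {C D : Set X}

theorem IsGrown.of_le {M : ℕ} (hC : IsGrown T ε M C) (hNM : N ≤ M) : IsGrown T ε N C :=
  ⟨hC.isCompact, hC.isPreconnected, hC.large, fun n hn => hC.past n ⟨by linarith [hn.1], hn.2⟩⟩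

/-- The first iterate of large diameter is grown. -/
theorem exists_isGrown_image_zpow (hD : IsCompact D) (hconn : IsPreconnected D)
    (hpast : ∀ n ∈ Icc (-N : ℤ) 0, IsSmallAt T ε D n) {n : ℤ} (hn : 0 ≤ n)
    (hlarge : ¬IsSmallAt T ε D n) : ∃ m ∈ Ioc 0 n, IsGrown T ε N ((T ^ m) '' D) := by
  obtain ⟨m, ⟨hm, hmlarge⟩, hmin⟩ := Int.exists_least_of_bdd
    (P := fun m => 0 ≤ m ∧ ¬IsSmallAt T ε D m) ⟨0, fun m hm => hm.1⟩ ⟨n, hn, hlarge⟩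
  have hsmall (j : ℤ) (hj : j ∈ Ico (-N : ℤ) m) : IsSmallAt T ε D j := by
    rcases le_total j 0 with hj0 | hj0
    · exact hpast j ⟨hj.1, hj0⟩
    · by_contra hjlarge
      exact hj.2.not_ge (hmin j ⟨hj0, hjlarge⟩)
  have hm0 : m ≠ 0 := by
    rintro rfl
    exact hmlarge (hpast 0 (by simp))
  refine ⟨m, ⟨by omega, hmin n ⟨hn, hlarge⟩⟩, hD.image (T ^ m).continuous,
    hconn.image _ (T ^ m).continuous.continuousOn, ?_, fun j hj => ?_⟩
  · rwa [isSmallAt_image_zpow, zero_add]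
  · rw [isSmallAt_image_zpow]
    exact hsmall _ ⟨by linarith [hj.1], by linarith [hj.2]⟩

theorem IsSeed.exists_isGrown_image_zpow (hD : IsSeed T ε r N P D) (hN : SeparatesWithin T ε r N) :
    ∃ n ∈ Ioc (0 : ℤ) N, IsGrown T ε N ((T ^ n) '' D) := by
  obtain ⟨x, hx, y, hy, hxy⟩ := hD.large
  obtain ⟨n, hn, hnxy⟩ := hN x y hxy
  have hlarge : ¬IsSmallAt T ε D n := not_isSmallAt.mpr ⟨x, hx, y, hy, hnxy⟩
  have hn0 : 0 ≤ n := by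
    by_contra! hn0
    exact hlarge (hD.past n ⟨hn.1, hn0.le⟩)
  obtain ⟨m, hm, hgrown⟩ :=
    _root_.exists_isGrown_image_zpow hD.isCompact hD.isPreconnected hD.past hn0 hlarge
  exact ⟨m, ⟨hm.1, hm.2.trans hn.2⟩, hgrown⟩

/-- Two points of a grown continuum that shadow `g` stay `ε`-close in the future by the triangle
inequality and in the past by growth, so they are not separated. -/
theorem IsGrown.exists_forall_shadowing_dist_lt (hC : IsGrown T ε N C)
    (hN : SeparatesWithin T ε r N) (g : X) :
    ∃ z, ∀ x ∈ C, (∀ n ∈ Icc (0 : ℤ) N, dist ((T ^ n) x) ((T ^ n) g) ≤ ε / 2) → dist x z < r := by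
  by_cases hex : ∃ z ∈ C, ∀ n ∈ Icc (0 : ℤ) N, dist ((T ^ n) z) ((T ^ n) g) ≤ ε / 2
  · obtain ⟨z, hzC, hz⟩ := hex
    refine ⟨z, fun x hxC hx => ?_⟩
    by_contra! hxz
    obtain ⟨n, hn, hnxz⟩ := hN x z hxz
    refine hnxz.not_ge ?_
    rcases le_or_gt 0 n with hn0 | hn0
    · linarith [dist_triangle_right ((T ^ n) x) ((T ^ n) z) ((T ^ n) g), hx n ⟨hn0, hn.2⟩,
        hz n ⟨hn0, hn.2⟩]
    · exact hC.past n ⟨hn.1, hn0⟩ x hxC z hzC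
  · exact ⟨g, fun x hxC hx => absurd ⟨x, hxC, hx⟩ hex⟩

theorem IsGrown.exists_isSeed (hC : IsGrown T ε N C) (hr : 0 < r)
    (hPr : 4 * r * (P.card + 2) ≤ ε) (hN : SeparatesWithin T ε r N) (g : X) :
    ∃ D ⊆ C, IsSeed T ε r N P D ∧
      ∀ x ∈ D, ∃ n ∈ Icc (0 : ℤ) N, ε / 2 < dist ((T ^ n) x) ((T ^ n) g) := by
  classical
  obtain ⟨z, hz⟩ := hC.exists_forall_shadowing_dist_lt hN g
  obtain ⟨x, hx, y, hy, hxy⟩ := not_isSmallAt.mp hC.large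
  simp only [zpow_zero_apply] at hxy
  have hcard : ((insert z P).card : ℝ) ≤ P.card + 1 := by exact_mod_cast Finset.card_insert_le z P
  obtain ⟨D, hDC, hD, hDconn, hlarge, hsmall, hfar⟩ := exists_subcontinuum_far_from_finset hr
    (insert z P) (by nlinarith) hC.isCompact hC.isPreconnected hx hy hxy
  have hnow : IsSmallAt T ε D 0 := fun a ha b hb => by
    simp only [zpow_zero_apply]
    nlinarith [hsmall a ha b hb, (Nat.cast_nonneg P.card : (0 : ℝ) ≤ P.card)]
  refine ⟨D, hDC, ⟨hD, hDconn, hlarge, fun n hn => ?_, fun a ha p hp =>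
    hfar a ha p (Finset.mem_insert_of_mem hp)⟩, fun a ha => ?_⟩
  · rcases hn.2.eq_or_lt with rfl | hn0
    · exact hnow
    · exact (hC.past n ⟨hn.1, hn0⟩).mono hDC
  · by_contra! hshadow
    exact (hz a (hDC ha) hshadow).not_ge (hfar a ha z (Finset.mem_insert_self z P))

theorem IsSeed.exists_seq (hD : IsSeed T ε r N P D) (hr : 0 < r) (hPr : 4 * r * (P.card + 2) ≤ ε)
    (hN : SeparatesWithin T ε r N) (g : ℕ → X) :
    ∃ (t : ℕ → ℤ) (E : ℕ → Set X), t 0 = 0 ∧ ∀ k, IsSeed T ε r N P (E k) ∧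
      t (k + 1) ∈ Ioc (t k) (t k + N) ∧ E (k + 1) ⊆ (T ^ (t (k + 1) - t k)) '' E k ∧
      ∀ x ∈ E (k + 1), ∃ n ∈ Icc (0 : ℤ) N,
        ε / 2 < dist ((T ^ n) x) ((T ^ n) ((T ^ t (k + 1)) (g k))) := by
  have hstep (k : ℕ) (s : ℤ × {E // IsSeed T ε r N P E}) :
      ∃ s' : ℤ × {E // IsSeed T ε r N P E}, s'.1 ∈ Ioc s.1 (s.1 + N) ∧
        (s'.2 : Set X) ⊆ (T ^ (s'.1 - s.1)) '' s.2 ∧ ∀ x ∈ (s'.2 : Set X), ∃ n ∈ Icc (0 : ℤ) N,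
          ε / 2 < dist ((T ^ n) x) ((T ^ n) ((T ^ s'.1) (g k))) := by
    obtain ⟨t, E, hE⟩ := s
    obtain ⟨n, hn, hgrown⟩ := hE.exists_isGrown_image_zpow hN
    obtain ⟨E', hE'sub, hE', hfar⟩ := hgrown.exists_isSeed hr hPr hN ((T ^ (t + n)) (g k))
    exact ⟨⟨t + n, E', hE'⟩, ⟨by linarith [hn.1], by linarith [hn.2]⟩,
      by rwa [add_sub_cancel_left], hfar⟩
  choose next hnext using hstep
  let u : ℕ → ℤ × {E // IsSeed T ε r N P E} := fun k => Nat.rec (0, ⟨D, hD⟩) next k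
  exact ⟨fun k => (u k).1, fun k => (u k).2, rfl, fun k => ⟨(u k).2.2, hnext k (u k)⟩⟩

theorem exists_forall_zpow_apply_mem_of_subset_image {t : ℕ → ℤ} {E : ℕ → Set X}
    (hE : ∀ k, IsCompact (E k)) (hne : ∀ k, (E k).Nonempty)
    (hsub : ∀ k, E (k + 1) ⊆ (T ^ (t (k + 1) - t k)) '' E k) :
    ∃ y, ∀ k, (T ^ t k) y ∈ E k := by
  have hanti (k : ℕ) : (T ^ t (k + 1)) ⁻¹' E (k + 1) ⊆ (T ^ t k) ⁻¹' E k := fun x hx => by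
    obtain ⟨x', hx', hxx'⟩ := hsub k hx
    have hsplit : (T ^ t (k + 1)) x = (T ^ (t (k + 1) - t k)) ((T ^ t k) x) := by
      rw [← zpow_add_apply, sub_add_cancel]
    obtain rfl := (T ^ (t (k + 1) - t k)).injective (hxx'.trans hsplit)
    exact hx'
  have hcompact (k : ℕ) : IsCompact ((T ^ t k) ⁻¹' E k) := (T ^ t k).isCompact_preimage.mpr (hE k)
  obtain ⟨y, hy⟩ := IsCompact.nonempty_iInter_of_sequence_nonempty_isCompact_isClosed _ hanti
    (fun k => (hne k).preimage (T ^ t k).surjective) (hcompact 0) fun k => (hcompact k).isClosed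
  exact ⟨y, mem_iInter.mp hy⟩

theorem exists_mem_Icc_of_bounded_gaps {t : ℕ → ℤ} {N : ℕ}
    (ht : ∀ k, t (k + 1) ∈ Ioc (t k) (t k + N)) {n : ℤ} (hn : t 0 ≤ n) :
    ∃ k, t k ∈ Icc n (n + N) := by
  induction n, hn using Int.leInduction with
  | base => exact ⟨0, by simp⟩
  | succ n _ ih =>
    obtain ⟨k, hk⟩ := ih
    rcases hk.1.eq_or_lt with rfl | hlt
    · exact ⟨k + 1, by linarith [(ht k).1], by linarith [(ht k).2]⟩
    · exact ⟨k, hlt, by linarith [hk.2]⟩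

theorem IsGrown.exists_orbit_far_from_seq (hC : IsGrown T ε N C) (hr : 0 < r)
    (hPr : 4 * r * (P.card + 2) ≤ ε) (hN : SeparatesWithin T ε r N) (g : ℕ → X) :
    ∃ y, (∀ n : ℤ, 0 ≤ n → ∃ m ∈ Icc n (n + N), ∀ p ∈ P, r ≤ dist ((T ^ m) y) p) ∧
      ∀ k : ℕ, ∃ n : ℤ, k ≤ n ∧ ε / 2 < dist ((T ^ n) y) ((T ^ n) (g k)) := by
  obtain ⟨D, -, hD, -⟩ := hC.exists_isSeed hr hPr hN (g 0)
  obtain ⟨t, E, ht0, hE⟩ := hD.exists_seq hr hPr hN g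
  choose hseed ht hsub hg using hE
  obtain ⟨y, hy⟩ := exists_forall_zpow_apply_mem_of_subset_image (fun k => (hseed k).isCompact)
    (fun k => (hseed k).large.imp fun _ h => h.1) hsub
  refine ⟨y, fun n hn => ?_, fun k => ?_⟩
  · obtain ⟨k, hk⟩ := exists_mem_Icc_of_bounded_gaps ht (ht0.trans_le hn)
    exact ⟨t k, hk, (hseed k).far _ (hy k)⟩
  · have htk (k : ℕ) : (k : ℤ) ≤ t k := by
      induction k with
      | zero => simp [ht0]
      | succ k ih => push_cast; linarith [(ht k).1]
    obtain ⟨n, hn, hfar⟩ := hg k _ (hy (k + 1))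
    refine ⟨n + t (k + 1), ?_, by simpa only [zpow_add_apply] using hfar⟩
    linarith [htk k, (ht k).1, hn.1]

/-- In the enumeration `k ↦ e k.unpair.1` of `F`, each point occurs infinitely often. -/
theorem IsGrown.exists_orbit_far_from_countable (hC : IsGrown T ε N C) (hr : 0 < r)
    (hPr : 4 * r * (P.card + 2) ≤ ε) (hN : SeparatesWithin T ε r N) {F : Set X}
    (hF : F.Countable) :
    ∃ y, (∀ n : ℤ, 0 ≤ n → ∃ m ∈ Icc n (n + N), ∀ p ∈ P, r ≤ dist ((T ^ m) y) p) ∧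
      ∀ f ∈ F, ∃ᶠ n : ℤ in atTop, ε / 2 < dist ((T ^ n) y) ((T ^ n) f) := by
  have : Nonempty X := (not_isSmallAt.mp hC.large).nonempty
  obtain ⟨e, he⟩ := countable_iff_exists_subset_range.mp hF
  obtain ⟨y, hyP, hyg⟩ := hC.exists_orbit_far_from_seq hr hPr hN fun k => e k.unpair.1
  refine ⟨y, hyP, fun f hf => frequently_atTop.mpr fun m => ?_⟩
  obtain ⟨a, rfl⟩ := he hf
  obtain ⟨n, hn, hfar⟩ := hyg (Nat.pair a m.toNat)
  rw [Nat.unpair_pair] at hfar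
  have := Nat.right_le_pair a m.toNat
  exact ⟨n, by omega, hfar⟩

end Growth

/-! ### Total disconnectedness -/

section TotallyDisconnected

variable {X : Type*} [MetricSpace X] {T : X ≃ₜ X} {ε : ℝ} {P : Finset X}

/-- The points whose orbit is at distance at least `r` from `P` at some time in `[0, N]`. The full
orbits that stay in this set form a closed invariant set missing the invariant subsets of `P`. -/
def visitsFarFrom (T : X ≃ₜ X) (P : Finset X) (r : ℝ) (N : ℕ) : Set X :=
  {x | ∃ n ∈ Icc (0 : ℤ) N, ∀ p ∈ P, r ≤ dist ((T ^ n) x) p}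

theorem isClosed_visitsFarFrom (T : X ≃ₜ X) (P : Finset X) (r : ℝ) (N : ℕ) :
    IsClosed (visitsFarFrom T P r N) := by
  have : visitsFarFrom T P r N =
      ⋃ n ∈ Icc (0 : ℤ) N, ⋂ p ∈ P, {x | r ≤ dist ((T ^ n) x) p} := by
    ext; simp [visitsFarFrom]
  rw [this]
  exact (finite_Icc _ _).isClosed_biUnion fun n _ => isClosed_biInter fun p _ =>
    isClosed_le continuous_const (by fun_prop)

theorem notMem_visitsFarFrom {r : ℝ} {N : ℕ} (hr : 0 < r) (hPT : ∀ n : ℤ, ∀ p ∈ P, (T ^ n) p ∈ P)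
    {p : X} (hp : p ∈ P) : p ∉ visitsFarFrom T P r N := by
  rintro ⟨n, -, hn⟩
  exact (hn _ (hPT n p hp)).not_gt (by rwa [dist_self])

variable [CompactSpace X]

theorem IsExpansiveWith.exists_forall_not_isGrown (hT : IsExpansiveWith T ε) (hε : 0 < ε)
    (hP : P.Nonempty) (hPT : ∀ n : ℤ, ∀ p ∈ P, (T ^ n) p ∈ P)
    (hfin : ∀ A : Set X, IsClosed A → T '' A = A → A ≠ univ → A.Finite) :
    ∃ N : ℕ, ∀ C : Set X, ¬IsGrown T ε N C := by
  set r : ℝ := ε / (4 * (P.card + 2)) with hr_def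
  have hr : 0 < r := by positivity
  have hPr : 4 * r * (P.card + 2) ≤ ε := by rw [hr_def]; field_simp; rfl
  obtain ⟨N, hN⟩ := hT.exists_separatesWithin hr
  refine ⟨N, fun C hC => ?_⟩
  set F := invariantCore T (visitsFarFrom T P r N)
  have hF : F.Finite := by
    refine hfin F (isClosed_invariantCore (isClosed_visitsFarFrom T P r N)) image_invariantCore ?_
    obtain ⟨p, hp⟩ := hP
    exact (ne_univ_iff_exists_notMem F).mpr
      ⟨p, fun hpF => notMem_visitsFarFrom hr hPT hp (invariantCore_subset hpF)⟩
  obtain ⟨y, hyP, hyF⟩ := hC.exists_orbit_far_from_countable hr hPr hN hF.countable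
  have hyL : ∀ᶠ n : ℤ in atTop, (T ^ n) y ∈ visitsFarFrom T P r N := by
    filter_upwards [eventually_ge_atTop 0] with n hn
    obtain ⟨m, hm, hmP⟩ := hyP n hn
    refine ⟨m - n, ⟨by linarith [hm.1], by linarith [hm.2]⟩, ?_⟩
    rwa [← zpow_add_apply, sub_add_cancel]
  obtain ⟨f, hf, hasymp⟩ := exists_mem_tendsto_dist_zpow_apply hF
    (fun n x hx => zpow_apply_mem_invariantCore hx n)
    (tendsto_zpow_apply_nhdsSet_invariantCore (isClosed_visitsFarFrom T P r N) hyL)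
  exact hyF f hf ((hasymp.eventually_lt_const (half_pos hε)).mono fun n hn => hn.not_gt)

theorem IsExpansiveWith.exists_isGrown_or_isGrown_inv (hT : IsExpansiveWith T ε) (hε : 0 < ε)
    {C : Set X} (hC : IsCompact C) (hconn : IsPreconnected C) (hnt : C.Nontrivial) (N : ℕ) :
    ∃ D, IsGrown T ε N D ∨ IsGrown T⁻¹ ε N D := by
  obtain ⟨a, ha, b, hb, hab⟩ := hnt
  obtain ⟨θ, hθ, hθsmall⟩ := exists_pos_forall_subset_closedBall_isSmallAt T hε N
  have hρ : 0 < min θ (dist b a) := lt_min hθ (dist_pos.mpr hab.symm)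
  obtain ⟨D, -, hD, hDconn, hDball, haD, w, hwD, hwa⟩ :=
    exists_subcontinuum_subset_closedBall hC hconn ha hb hρ (min_le_right _ _)
  have hsmall := hθsmall a D (hDball.trans (closedBall_subset_closedBall (min_le_left _ _)))
  obtain ⟨n, hn⟩ := hT w a (dist_pos.mp (hρ.trans_le hwa))
  have hlarge : ¬IsSmallAt T ε D n := not_isSmallAt.mpr ⟨w, hwD, a, haD, hn⟩
  rcases le_total 0 n with hn0 | hn0
  · obtain ⟨m, -, hgrown⟩ := exists_isGrown_image_zpow hD hDconn
      (fun j hj => hsmall j ⟨hj.1, by linarith [hj.2]⟩) hn0 hlarge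
    exact ⟨_, .inl hgrown⟩
  · obtain ⟨m, -, hgrown⟩ := exists_isGrown_image_zpow (T := T⁻¹) (N := N) hD hDconn
      (fun j hj => isSmallAt_inv.mpr (hsmall (-j) ⟨by linarith [hj.2], by linarith [hj.1]⟩))
      (neg_nonneg.mpr hn0) (by rwa [isSmallAt_inv, neg_neg])
    exact ⟨_, .inr hgrown⟩

theorem IsExpansiveWith.totallyDisconnectedSpace (hT : IsExpansiveWith T ε) (hε : 0 < ε)
    (hP : P.Nonempty) (hPT : ∀ n : ℤ, ∀ p ∈ P, (T ^ n) p ∈ P)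
    (hfin : ∀ A : Set X, IsClosed A → T '' A = A → A ≠ univ → A.Finite) :
    TotallyDisconnectedSpace X := by
  obtain ⟨N₁, hN₁⟩ := hT.exists_forall_not_isGrown hε hP hPT hfin
  obtain ⟨N₂, hN₂⟩ := hT.inv.exists_forall_not_isGrown hε hP
    (fun n p hp => by rw [inv_zpow']; exact hPT (-n) p hp)
    (fun A hA hTA => hfin A hA (by
      conv_lhs => rw [← hTA]
      exact T.toEquiv.image_symm_image A))
  refine totallyDisconnectedSpace_iff_connectedComponent_subsingleton.mpr fun x => ?_
  by_contra hx
  obtain ⟨D, hD | hD⟩ := hT.exists_isGrown_or_isGrown_inv hε isClosed_connectedComponent.isCompact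
    isPreconnected_connectedComponent (not_subsingleton_iff.mp hx) (max N₁ N₂)
  · exact hN₁ D (hD.of_le (le_max_left N₁ N₂))
  · exact hN₂ D (hD.of_le (le_max_right N₁ N₂))

end TotallyDisconnected

/-! ### Symbolic coding -/

section Coding

/-- `T` is topologically conjugate to a nonempty subshift over a finite alphabet. -/
def IsConjugateToSubshift {X : Type*} [TopologicalSpace X] (T : X ≃ₜ X) : Prop :=
  ∃ (A : Type) (_ : Fintype A) (_ : TopologicalSpace A) (_ : DiscreteTopology A)
    (Y : Set (ℤ → A)) (hYinv : ∀ y, y ∈ Y ↔ shiftHomeo A y ∈ Y),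
    Y.Nonempty ∧ IsClosed Y ∧
    ∃ h : X ≃ₜ Y, ∀ x : X, h (T x) = restrictHomeo (shiftHomeo A) Y hYinv (h x)

/-- The itinerary of `x` under `T` with respect to the partition of `X` into the fibres of
`code`. -/
def itinerary {X A : Type*} [TopologicalSpace X] (T : X ≃ₜ X) (code : X → A) (x : X) : ℤ → A :=
  fun n => code ((T ^ n) x)

variable {X : Type*} [TopologicalSpace X] (T : X ≃ₜ X)

theorem continuous_itinerary {A : Type*} [TopologicalSpace A] {code : X → A}
    (hcode : Continuous code) : Continuous (itinerary T code) :=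
  continuous_pi fun n => hcode.comp (T ^ n).continuous

theorem itinerary_apply_self {A : Type*} [TopologicalSpace A] (code : X → A) (x : X) :
    itinerary T code (T x) = shiftHomeo A (itinerary T code x) := by
  funext n
  change code ((T ^ n) (T x)) = code ((T ^ (n + 1)) x)
  rw [zpow_add_apply, zpow_one]

theorem mem_range_itinerary_iff_shiftHomeo_mem {A : Type*} [TopologicalSpace A] (code : X → A)
    (y : ℤ → A) : y ∈ range (itinerary T code) ↔ shiftHomeo A y ∈ range (itinerary T code) := by
  constructor
  · rintro ⟨x, rfl⟩
    exact ⟨T x, itinerary_apply_self T code x⟩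
  · rintro ⟨x, hx⟩
    refine ⟨T.symm x, (shiftHomeo A).injective ?_⟩
    rw [← itinerary_apply_self, T.apply_symm_apply, hx]

theorem isConjugateToSubshift_of_injective_itinerary [CompactSpace X] [Nonempty X] {A : Type}
    [Finite A] [TopologicalSpace A] [DiscreteTopology A] {code : X → A} (hcode : Continuous code)
    (hinj : Function.Injective (itinerary T code)) : IsConjugateToSubshift T := by
  have hemb := (continuous_itinerary T hcode).isClosedEmbedding hinj
  exact ⟨A, Fintype.ofFinite A, inferInstance, inferInstance, range (itinerary T code),
    mem_range_itinerary_iff_shiftHomeo_mem T code, range_nonempty _, hemb.isClosed_range,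
    hemb.isEmbedding.toHomeomorph, fun x => Subtype.ext (itinerary_apply_self T code x)⟩

theorem exists_continuous_fin_dist_lt {X : Type*} [MetricSpace X] [CompactSpace X]
    [TotallyDisconnectedSpace X] {ε : ℝ} (hε : 0 < ε) :
    ∃ (m : ℕ) (code : X → Fin m), Continuous code ∧ ∀ x y, code x = code y → dist x y < ε := by
  have hnhds : {z : X × X | dist z.1 z.2 < ε / 2} ∈ 𝓝ˢ (diagonal X) :=
    (isOpen_lt continuous_dist continuous_const).mem_nhdsSet.mpr fun z hz => by
      simpa [mem_diagonal_iff.mp hz] using hε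
  obtain ⟨m, code, center, hcode, hcenter⟩ :=
    (ContinuousMap.id X).exists_finite_approximation_of_mem_nhds_diagonal hnhds
  refine ⟨m, code, hcode, fun x y hxy => ?_⟩
  have hx : dist x (center (code x)) < ε / 2 := hcenter x
  have hy : dist y (center (code y)) < ε / 2 := hcenter y
  rw [← hxy] at hy
  linarith [dist_triangle_right x y (center (code x))]

theorem IsExpansiveWith.isConjugateToSubshift {X : Type*} [MetricSpace X] [CompactSpace X]
    [TotallyDisconnectedSpace X] [Nonempty X] {T : X ≃ₜ X} {ε : ℝ} (hT : IsExpansiveWith T ε)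
    (hε : 0 < ε) : IsConjugateToSubshift T := by
  obtain ⟨m, code, hcode, hsmall⟩ := exists_continuous_fin_dist_lt (X := X) hε
  refine isConjugateToSubshift_of_injective_itinerary T hcode fun x y hxy => ?_
  by_contra hne
  obtain ⟨n, hn⟩ := hT x y hne
  exact hn.not_gt (hsmall _ _ (congrFun hxy n))

end Coding

theorem IsCAMZ.exists_periodic {X : Type*} [TopologicalSpace X] {T : X ≃ₜ X} (hT : IsCAMZ T) :
    ∃ p : X, ∃ k : ℕ, 0 < k ∧ (T ^ k) p = p := by
  have : Nonempty X := by
    by_contra! hempty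
    exact hT.1 1 one_ne_zero (Homeomorph.ext fun x => hempty.elim x)
  exact hT.2.2.1.nonempty

theorem statement7_general {X : Type*} [MetricSpace X] [CompactSpace X] (T : X ≃ₜ X)
    (hper : ∃ p : X, ∃ k : ℕ, 0 < k ∧ (T ^ k) p = p)
    (hfin : ∀ A : Set X, IsClosed A → T '' A = A → A ≠ univ → A.Finite)
    (hexp : ∃ ε : ℝ, 0 < ε ∧
      ∀ x y : X, x ≠ y → ∃ n : ℤ, ε < dist ((T ^ n) x) ((T ^ n) y)) :
    IsConjugateToSubshift T := by
  obtain ⟨ε, hε, hexp⟩ := hexp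
  have hT : IsExpansiveWith T ε := hexp
  obtain ⟨p, k, hk, hpk⟩ := hper
  have hfinite := finite_range_zpow_apply_of_periodic T hk hpk
  have : Nonempty X := ⟨p⟩
  have : TotallyDisconnectedSpace X := by
    refine hT.totallyDisconnectedSpace hε (P := hfinite.toFinset)
      (hfinite.toFinset_nonempty.mpr (range_nonempty _)) (fun n x hx => ?_) hfin
    obtain ⟨m, rfl⟩ := hfinite.mem_toFinset.mp hx
    exact hfinite.mem_toFinset.mpr ⟨n + m, zpow_add_apply T n m p⟩
  exact hT.isConjugateToSubshift hε

/-- An expansive chaotic almost minimal `ℤ`-system is topologically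
conjugate to a subshift over some finite alphabet. -/
theorem statement7 {X : Type*} [MetricSpace X] [CompactSpace X] (T : X ≃ₜ X)
    (hcam : IsCAMZ T)
    (hexp : ∃ ε : ℝ, 0 < ε ∧
      ∀ x y : X, x ≠ y → ∃ n : ℤ, ε < dist ((T ^ n) x) ((T ^ n) y)) :
    ∃ (A : Type) (_ : Fintype A) (_ : TopologicalSpace A) (_ : DiscreteTopology A)
      (Y : Set (ℤ → A)) (hYinv : ∀ y, y ∈ Y ↔ shiftHomeo A y ∈ Y),
      Y.Nonempty ∧ IsClosed Y ∧
      ∃ h : X ≃ₜ Y,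
        ∀ x : X, h (T x) = restrictHomeo (shiftHomeo A) Y hYinv (h x) :=
  statement7_general T hcam.exists_periodic hcam.2.2.2 hexp
end
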